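/- arXiv:2001.00410 — 3 statements merged into one kernel-verified Lean document; each statement's English description precedes it below -/
import Mathlib

section
/- Let n ≥ 1 and let f : ℝⁿ → ℝ be a nonnegative, continuous, compactly supported function with ∫_{ℝⁿ} f dx = 1, and let u(t,x) = ∫_{ℝⁿ} (4πt)^{-n/2} exp(-‖x-y‖²/(4t)) f(y) dy. Then for every t > 0 the entropy H(u(t)) = -∫ u log u dx is twice differentiable in t and (d²/dt²) H(u(t)) = -2 ∫_{ℝⁿ} ‖∇² log u(t,x)‖²_{HS} u(t,x) dx, where ∇² log u is the Hessian matrix of log u in x and ‖·‖_{HS} is its Hilbert–Schmidt (Frobenius) norm. -/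
open Real MeasureTheory

/-- The heat semigroup solution on `ℝⁿ` with initial datum `f`. -/
noncomputable def heatSol (n : ℕ) (f : EuclideanSpace ℝ (Fin n) → ℝ)
    (t : ℝ) (x : EuclideanSpace ℝ (Fin n)) : ℝ :=
  ∫ y, (4 * π * t) ^ (-(n : ℝ) / 2) * Real.exp (-‖x - y‖ ^ 2 / (4 * t)) * f y

/-- The Boltzmann–Shannon entropy of the heat solution at time `t`. -/
noncomputable def shannonEntropy (n : ℕ) (f : EuclideanSpace ℝ (Fin n) → ℝ) (t : ℝ) : ℝ :=
  -∫ x, heatSol n f t x * Real.log (heatSol n f t x)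

/-- The Hessian matrix of a function on `ℝⁿ`. -/
noncomputable def hessianMatrix (n : ℕ) (g : EuclideanSpace ℝ (Fin n) → ℝ)
    (x : EuclideanSpace ℝ (Fin n)) : Matrix (Fin n) (Fin n) ℝ :=
  fun i j => iteratedFDeriv ℝ 2 g x ![EuclideanSpace.single i 1, EuclideanSpace.single j 1]

/-- The squared Hilbert–Schmidt (Frobenius) norm of the Hessian of a function on `ℝⁿ`. -/
noncomputable def hessianHSsq (n : ℕ) (g : EuclideanSpace ℝ (Fin n) → ℝ)
    (x : EuclideanSpace ℝ (Fin n)) : ℝ :=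
  ∑ i, ∑ j, (hessianMatrix n g x i j) ^ 2

/-!
A solution `u` of the heat equation satisfies `(∂ₜ - Δ)(u log u) = -u |∇ log u|²`, and if `w` is a
second solution then `(∂ₜ - Δ)(w² / u) = -2 u |∇(w / u)|²`. Integrating the first identity gives
`H' = ∫ u |∇ log u|²`, the sum over `i` of `∫ w² / u` for `w = ∂ᵢ u`. Integrating the second with
these `w` gives `H'' = -2 ∑ᵢ ∫ u |∇ ∂ᵢ log u|²`, which is the claim.

All derivatives of the heat kernel `G` are polynomials times `G`. So for
`u(t, x) = ∫ G(t, x - y) dμ(y)`, the quotient of any derivative of `u` by `u` is the mean of a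
polynomial under the probability law proportional to `G(t, x - y) μ(dy)`. Because `u` has a Gaussian
lower bound, that law puts negligible mass at distances from `x` much larger than `1 + ‖x‖`, and
such means grow at most polynomially in `x`, as does `log u`. Since `u` has finite moments when `μ`
does, every integrand above is integrable, locally uniformly in `t`, which justifies differentiating
under the integral and discarding the divergence terms.
-/

namespace HeatFlow

open MvPolynomial Set Filter Topology

/-- Euclidean space `ℝⁿ`. -/
abbrev Space (n : ℕ) := EuclideanSpace ℝ (Fin n)

variable {n : ℕ}

/-! ### Functions of moderate growth -/

lemma one_add_norm_pow_le_pow {E : Type*} [SeminormedAddGroup E] {k l : ℕ} (h : k ≤ l) (x : E) :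
    (1 + ‖x‖) ^ k ≤ (1 + ‖x‖) ^ l :=
  pow_le_pow_right₀ (le_add_of_nonneg_right (norm_nonneg x)) h

lemma isBigO_one_add_norm_pow {α E : Type*} [SeminormedAddGroup E] {k l : ℕ} (h : k ≤ l)
    (φ : α → E) (F : Filter α) : (fun p => (1 + ‖φ p‖) ^ k) =O[F] fun p => (1 + ‖φ p‖) ^ l :=
  .of_norm_le fun p => by
    rw [Real.norm_of_nonneg (by positivity)]
    exact one_add_norm_pow_le_pow h (φ p)

/-- The algebra of functions `h(t,x)`, `t > 0`, that are continuous in `x` and bounded by a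
polynomial in `‖x‖`, uniformly for `t` in compact subintervals of `(0,∞)`. These are the factors
which may multiply a heat flow under the integral sign; their values at `t ≤ 0` are irrelevant. -/
def moderateGrowth (n : ℕ) : Subalgebra ℝ (ℝ → Space n → ℝ) where
  carrier := {h | (∀ t, 0 < t → Continuous (h t)) ∧ ∀ a b, 0 < a → ∃ k : ℕ,
    (fun p : ℝ × Space n => h p.1 p.2) =O[𝓟 (Icc a b ×ˢ univ)] fun p => (1 + ‖p.2‖) ^ k}
  mul_mem' := by
    rintro g h ⟨cg, hg⟩ ⟨ch, hh⟩
    refine ⟨fun t ht => (cg t ht).mul (ch t ht), fun a b ha => ?_⟩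
    obtain ⟨k, hk⟩ := hg a b ha
    obtain ⟨l, hl⟩ := hh a b ha
    exact ⟨k + l, by simp only [pow_add]; exact hk.mul hl⟩
  add_mem' := by
    rintro g h ⟨cg, hg⟩ ⟨ch, hh⟩
    refine ⟨fun t ht => (cg t ht).add (ch t ht), fun a b ha => ?_⟩
    obtain ⟨k, hk⟩ := hg a b ha
    obtain ⟨l, hl⟩ := hh a b ha
    exact ⟨k + l, (hk.trans (isBigO_one_add_norm_pow (Nat.le_add_right k l) _ _)).add
      (hl.trans (isBigO_one_add_norm_pow (Nat.le_add_left l k) _ _))⟩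
  algebraMap_mem' c := ⟨fun _ _ => continuous_const, fun _ _ _ => ⟨0, by
    simp only [pow_zero]
    exact Asymptotics.isBigO_const_const c one_ne_zero _⟩⟩

lemma exists_abs_le_of_mem_moderateGrowth {h : ℝ → Space n → ℝ} (hh : h ∈ moderateGrowth n)
    {a : ℝ} (ha : 0 < a) (b : ℝ) :
    ∃ C, 0 ≤ C ∧ ∃ k : ℕ, ∀ t ∈ Icc a b, ∀ x, |h t x| ≤ C * (1 + ‖x‖) ^ k := by
  obtain ⟨k, hk⟩ := hh.2 a b ha
  obtain ⟨C, hC, hbound⟩ := hk.exists_nonneg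
  refine ⟨C, hC, k, fun t ht x => ?_⟩
  simpa [abs_of_nonneg (add_nonneg zero_le_one (norm_nonneg x))] using
    Asymptotics.isBigOWith_principal.1 hbound (t, x) ⟨ht, mem_univ x⟩

lemma mem_moderateGrowth_of_abs_le {h : ℝ → Space n → ℝ} (hc : ∀ t, 0 < t → Continuous (h t))
    (hb : ∀ a b, 0 < a → a ≤ b → ∃ C, ∃ k : ℕ, ∀ t ∈ Icc a b, ∀ x,
      |h t x| ≤ C * (1 + ‖x‖) ^ k) :
    h ∈ moderateGrowth n := by
  refine ⟨hc, fun a b ha => ?_⟩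
  rcases lt_or_ge b a with hba | hab
  · rw [Icc_eq_empty hba.not_ge, empty_prod, principal_empty]
    exact ⟨0, .of_bound 0 eventually_bot⟩
  obtain ⟨C, k, h⟩ := hb a b ha hab
  refine ⟨k, .of_bound C (eventually_principal.2 fun p hp => ?_)⟩
  simpa [abs_of_nonneg (add_nonneg zero_le_one (norm_nonneg p.2))] using h p.1 hp.1 p.2

lemma one_add_norm_pow_mem_moderateGrowth (k : ℕ) :
    (fun _ x => (1 + ‖x‖) ^ k) ∈ moderateGrowth n :=
  ⟨fun _ _ => by fun_prop, fun _ _ _ => ⟨k, Asymptotics.isBigO_refl _ _⟩⟩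

lemma coord_mem_moderateGrowth (i : Fin n) : (fun _ x => x i) ∈ moderateGrowth n :=
  mem_moderateGrowth_of_abs_le (fun _ _ => by fun_prop) fun _ _ _ _ => ⟨1, 1, fun _ _ x => by
    have : |x i| ≤ ‖x‖ := PiLp.norm_apply_le x i
    linarith⟩

lemma invTwoMul_mem_moderateGrowth : (fun t _ => 1 / (2 * t)) ∈ moderateGrowth n :=
  mem_moderateGrowth_of_abs_le (fun _ _ => continuous_const) fun a _ ha _ =>
    ⟨1 / (2 * a), 0, fun t ht _ => by
      have := ha.trans_le ht.1
      rw [pow_zero, mul_one, abs_of_pos (by positivity)]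
      gcongr
      exact ht.1⟩

/-! ### Derivatives of polynomials times the heat kernel -/

lemma pderiv_pderiv_comm {σ R : Type*} [CommSemiring R] (i j : σ) (P : MvPolynomial σ R) :
    pderiv i (pderiv j P) = pderiv j (pderiv i P) := by
  classical
  induction P using MvPolynomial.induction_on with
  | C a => simp
  | add P Q hP hQ => simp [hP, hQ]
  | mul_X P k hP =>
    simp only [pderiv_mul, map_add, hP, pderiv_X, Pi.single_apply, apply_ite (pderiv _),
      pderiv_one, map_zero, ite_self]
    ring

lemma hasFDerivAt_eval {σ E : Type*} [Fintype σ] [NormedAddCommGroup E] [NormedSpace ℝ E]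
    {w : E → σ → ℝ} {w' : σ → E →L[ℝ] ℝ} {p : E}
    (hw : ∀ o, HasFDerivAt (fun q => w q o) (w' o) p) (P : MvPolynomial σ ℝ) :
    HasFDerivAt (fun q => eval (w q) P) (∑ o, eval (w p) (pderiv o P) • w' o) p := by
  classical
  induction P using MvPolynomial.induction_on with
  | C a => simpa using hasFDerivAt_const (𝕜 := ℝ) a p
  | add P Q hP hQ =>
    simp only [map_add, add_smul, Finset.sum_add_distrib]
    exact hP.add hQ
  | mul_X P k hP =>
    simp only [map_mul, eval_X]
    refine (hP.mul (hw k)).congr_fderiv ?_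
    simp only [pderiv_mul, map_add, map_mul, eval_X, add_smul, Finset.sum_add_distrib, pderiv_X,
      Finset.smul_sum, smul_smul]
    rw [add_comm]
    congr 1
    · simp only [mul_comm]
    · simp [Pi.single_apply, apply_ite, ite_smul]

/-- Polynomials in `1 / (2 t)`, the variable `none`, and the coordinates of `z`. Their products with
the heat kernel `G t z` are closed under differentiation in `z` and in `t`. -/
abbrev Pol (n : ℕ) := MvPolynomial (Option (Fin n)) ℝ

/-- The value of a polynomial at time `t` and position `z`. -/
noncomputable def symbol (P : Pol n) (t : ℝ) (z : Space n) : ℝ :=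
  eval (fun o => o.elim (1 / (2 * t)) z) P

/-- The heat kernel `(4πt)^{-n/2} exp (-‖z‖² / (4t))`. -/
noncomputable def heatKernel (t : ℝ) (z : Space n) : ℝ :=
  (4 * π * t) ^ (-(n : ℝ) / 2) * exp (-‖z‖ ^ 2 / (4 * t))

/-- The operator with `∂ᵢ (P G) = (spaceDeriv i P) G` for the heat kernel `G`. -/
noncomputable def spaceDeriv (i : Fin n) (P : Pol n) : Pol n :=
  pderiv (some i) P - X none * X (some i) * P

/-- The polynomial `∂ₜ G / G` for the heat kernel `G`. -/
noncomputable def timeSymbol (n : ℕ) : Pol n :=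
  X none ^ 2 * (∑ i, X (some i) ^ 2) - (n : Pol n) * X none

/-- The operator with `∂ₜ (P G) = (timeDeriv P) G` for the heat kernel `G`; the derivative of
`σ = 1 / (2 t)` is `-2 σ²`. -/
noncomputable def timeDeriv (P : Pol n) : Pol n :=
  timeSymbol n * P - 2 * X none ^ 2 * pderiv none P

lemma pderiv_some_X_none (i : Fin n) : pderiv (some i) (X none : Pol n) = 0 :=
  pderiv_X_of_ne (Option.some_ne_none i).symm

lemma pderiv_none_X_some (i : Fin n) : pderiv none (X (some i) : Pol n) = 0 :=
  pderiv_X_of_ne (Option.some_ne_none i)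

lemma spaceDeriv_comm (i j : Fin n) (P : Pol n) :
    spaceDeriv i (spaceDeriv j P) = spaceDeriv j (spaceDeriv i P) := by
  obtain rfl | hij := eq_or_ne i j
  · rfl
  have hij' : pderiv (some i) (X (some j) : Pol n) = 0 := pderiv_X_of_ne (by simpa using hij.symm)
  have hji' : pderiv (some j) (X (some i) : Pol n) = 0 := pderiv_X_of_ne (by simpa using hij)
  simp only [spaceDeriv, map_sub, pderiv_mul, hij', hji', pderiv_some_X_none,
    pderiv_pderiv_comm (some i) (some j)]
  ring

lemma spaceDeriv_sum {ι : Type*} (j : Fin n) (s : Finset ι) (P : ι → Pol n) :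
    spaceDeriv j (∑ i ∈ s, P i) = ∑ i ∈ s, spaceDeriv j (P i) := by
  simp only [spaceDeriv, map_sum, Finset.mul_sum, Finset.sum_sub_distrib]

lemma pderiv_timeSymbol (i : Fin n) :
    pderiv (some i) (timeSymbol n) = 2 * X none ^ 2 * X (some i) := by
  have hsum : pderiv (some i) (∑ j, X (some j) ^ 2 : Pol n) = 2 * X (some i) := by
    classical
    simp [pderiv_X, Pi.single_apply]
  simp only [timeSymbol, map_sub, pderiv_mul, pderiv_pow, hsum, pderiv_some_X_none,
    Derivation.map_natCast]
  ring

lemma timeDeriv_spaceDeriv (i : Fin n) (P : Pol n) :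
    timeDeriv (spaceDeriv i P) = spaceDeriv i (timeDeriv P) := by
  have pderiv_two : pderiv (some i) (2 : Pol n) = 0 := (pderiv (some i)).map_natCast 2
  simp only [timeDeriv, spaceDeriv, map_sub, pderiv_mul, pderiv_pow, pderiv_some_X_none,
    pderiv_none_X_some, pderiv_X_self, pderiv_two, pderiv_timeSymbol,
    pderiv_pderiv_comm none (some i)]
  ring

/-- The polynomials `P` for which `P G` solves the heat equation, `G` being the heat kernel. -/
def IsCaloric (P : Pol n) : Prop :=
  timeDeriv P = ∑ i, spaceDeriv i (spaceDeriv i P)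

lemma isCaloric_one : IsCaloric (1 : Pol n) := by
  have second (i : Fin n) : spaceDeriv i (spaceDeriv i 1) =
      (X none ^ 2 * X (some i) ^ 2 - X none : Pol n) := by
    simp only [spaceDeriv, map_sub, pderiv_mul, pderiv_some_X_none, pderiv_X_self, pderiv_one,
      map_zero]
    ring
  simp [IsCaloric, second, timeDeriv, timeSymbol, Finset.mul_sum]

lemma IsCaloric.spaceDeriv {P : Pol n} (hP : IsCaloric P) (j : Fin n) :
    IsCaloric (spaceDeriv j P) := by
  rw [IsCaloric, timeDeriv_spaceDeriv, hP, spaceDeriv_sum]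
  exact Finset.sum_congr rfl fun i _ => by rw [spaceDeriv_comm j i, spaceDeriv_comm j i]

lemma symbol_mem_moderateGrowth (P : Pol n) : symbol P ∈ moderateGrowth n := by
  induction P using MvPolynomial.induction_on with
  | C c => exact (funext₂ fun t z => by simp [symbol] : symbol (C c) = fun _ _ => c) ▸
      (moderateGrowth n).algebraMap_mem c
  | add P Q hP hQ =>
    exact (funext₂ fun t z => by simp [symbol] : symbol (P + Q) = symbol P + symbol Q) ▸
      add_mem hP hQ
  | mul_X P o hP =>
    have hX : symbol (X o : Pol n) ∈ moderateGrowth n := by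
      unfold symbol
      simp only [eval_X]
      rcases o with _ | i
      exacts [invTwoMul_mem_moderateGrowth, coord_mem_moderateGrowth i]
    exact (funext₂ fun t z => by simp [symbol] : symbol (P * X o) = symbol P * symbol (X o)) ▸
      mul_mem hP hX

/-- The linear form `v ↦ ∑ᵢ aᵢ vᵢ`; derivatives of functions on `ℝⁿ` are given in this form. -/
noncomputable def covector (a : Fin n → ℝ) : Space n →L[ℝ] ℝ :=
  ∑ i, a i • EuclideanSpace.proj i

lemma covector_apply (a : Fin n → ℝ) (v : Space n) : covector a v = ∑ i, a i * v i := by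
  simp [covector]

@[simp]
lemma covector_single (a : Fin n → ℝ) (i : Fin n) :
    covector a (EuclideanSpace.single i 1) = a i := by
  simp [covector_apply]

lemma eq_covector {L : Space n →L[ℝ] ℝ} {a : Fin n → ℝ}
    (h : ∀ i, L (EuclideanSpace.single i 1) = a i) : L = covector a := by
  refine ContinuousLinearMap.coe_injective
    ((EuclideanSpace.basisFun (Fin n) ℝ).toBasis.ext fun i => ?_)
  simp [h]

lemma norm_covector_le (a : Fin n → ℝ) : ‖covector a‖ ≤ ∑ i, |a i| :=
  ContinuousLinearMap.opNorm_le_bound _ (Finset.sum_nonneg fun _ _ => abs_nonneg _) fun v => by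
    rw [covector_apply, Finset.sum_mul]
    refine (Finset.abs_sum_le_sum_abs _ _).trans (Finset.sum_le_sum fun i _ => ?_)
    rw [abs_mul]
    gcongr
    exact PiLp.norm_apply_le v i

lemma continuous_covector : Continuous (covector : (Fin n → ℝ) → Space n →L[ℝ] ℝ) := by
  unfold covector
  fun_prop

lemma hasFDerivAt_heatKernel (t : ℝ) (z : Space n) :
    HasFDerivAt (heatKernel t)
      (covector fun i => -(1 / (2 * t) * z i * heatKernel t z)) z := by
  have h := (((hasStrictFDerivAt_norm_sq z).hasFDerivAt.neg.mul_const (4 * t)⁻¹).exp).const_mul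
    ((4 * π * t) ^ (-(n : ℝ) / 2))
  refine h.congr_fderiv (eq_covector fun i => ?_)
  simp only [div_eq_mul_inv, neg_mul, Pi.neg_apply, mul_inv_rev, smul_neg, neg_apply, smul_apply,
    coe_innerSL_apply, EuclideanSpace.inner_single_right, ringHom_apply, one_mul, nsmul_eq_mul,
    Nat.cast_ofNat, smul_eq_mul, heatKernel, neg_inj]
  ring

lemma hasFDerivAt_symbol (P : Pol n) (t : ℝ) (z : Space n) :
    HasFDerivAt (symbol P t) (covector fun i => symbol (pderiv (some i) P) t z) z := by
  refine (hasFDerivAt_eval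
    (w' := fun o => o.elim 0 fun i => (EuclideanSpace.proj i : Space n →L[ℝ] ℝ)) ?_ P).congr_fderiv
    (eq_covector fun i => ?_)
  · rintro (_ | i)
    exacts [hasFDerivAt_const _ _, (EuclideanSpace.proj i : Space n →L[ℝ] ℝ).hasFDerivAt]
  · simp [Fintype.sum_option, symbol]

lemma hasFDerivAt_symbol_mul_heatKernel (P : Pol n) (t : ℝ) (z : Space n) :
    HasFDerivAt (fun z => symbol P t z * heatKernel t z)
      (covector fun i => symbol (spaceDeriv i P) t z * heatKernel t z) z := by
  refine ((hasFDerivAt_symbol P t z).mul (hasFDerivAt_heatKernel t z)).congr_fderiv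
    (eq_covector fun i => ?_)
  simp only [symbol, one_div, mul_inv_rev, add_apply, smul_apply, covector_single, smul_eq_mul,
    mul_neg, spaceDeriv, map_sub, map_mul, eval_X, Option.elim_none, Option.elim_some]
  ring

lemma hasDerivAt_one_div_two_mul {t : ℝ} (ht : t ≠ 0) :
    HasDerivAt (fun t : ℝ => 1 / (2 * t)) (-2 * (1 / (2 * t)) ^ 2) t := by
  simp only [one_div]
  refine (((hasDerivAt_id' t).const_mul 2).inv (mul_ne_zero two_ne_zero ht)).congr_deriv ?_
  field_simp

lemma hasDerivAt_heatKernel {t : ℝ} (ht : 0 < t) (z : Space n) :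
    HasDerivAt (fun t => heatKernel t z) (symbol (timeSymbol n) t z * heatKernel t z) t := by
  have h4 : 4 * π * t ≠ 0 := by positivity
  have hpow : HasDerivAt (fun t : ℝ => (4 * π * t) ^ (-(n : ℝ) / 2))
      (-n * (1 / (2 * t)) * (4 * π * t) ^ (-(n : ℝ) / 2)) t := by
    refine (((hasDerivAt_id' t).const_mul (4 * π)).rpow_const (Or.inl h4)).congr_deriv ?_
    rw [Real.rpow_sub_one h4]
    field_simp
  have hexp : HasDerivAt (fun t : ℝ => exp (-‖z‖ ^ 2 / (4 * t)))
      (exp (-‖z‖ ^ 2 / (4 * t)) * ((1 / (2 * t)) ^ 2 * ‖z‖ ^ 2)) t := by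
    have h := (((hasDerivAt_one_div_two_mul ht.ne').const_mul (-‖z‖ ^ 2 / 2))).exp
    have heq (s : ℝ) : -‖z‖ ^ 2 / 2 * (1 / (2 * s)) = -‖z‖ ^ 2 / (4 * s) := by
      rw [div_mul_div_comm, mul_one, ← mul_assoc]
      norm_num
    simp only [heq] at h
    exact h.congr_deriv (by ring)
  refine (hpow.mul hexp).congr_deriv ?_
  simp only [symbol, timeSymbol, heatKernel, EuclideanSpace.real_norm_sq_eq, map_sub, map_mul,
    map_pow, map_sum, map_natCast, eval_X, Option.elim]
  ring

lemma hasDerivAt_symbol (P : Pol n) {t : ℝ} (ht : t ≠ 0) (z : Space n) :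
    HasDerivAt (fun t => symbol P t z)
      (-2 * (1 / (2 * t)) ^ 2 * symbol (pderiv none P) t z) t := by
  refine (hasFDerivAt_eval (w' := fun o => o.elim
    (ContinuousLinearMap.toSpanSingleton ℝ (-2 * (1 / (2 * t)) ^ 2)) fun _ => 0) ?_
    P).hasDerivAt.congr_deriv ?_
  · rintro (_ | i)
    exacts [(hasDerivAt_one_div_two_mul ht).hasFDerivAt, hasFDerivAt_const _ _]
  · simp only [one_div, mul_inv_rev, neg_mul, Fintype.sum_option, Option.elim_none,
      Option.elim_some, smul_zero, Finset.sum_const_zero, add_zero, smul_apply,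
      ContinuousLinearMap.toSpanSingleton_apply, smul_eq_mul, mul_neg, one_mul, symbol, neg_inj]
    ring

lemma hasDerivAt_symbol_mul_heatKernel (P : Pol n) {t : ℝ} (ht : 0 < t) (z : Space n) :
    HasDerivAt (fun t => symbol P t z * heatKernel t z)
      (symbol (timeDeriv P) t z * heatKernel t z) t := by
  refine ((hasDerivAt_symbol P ht.ne' z).mul (hasDerivAt_heatKernel ht z)).congr_deriv ?_
  simp only [one_div, mul_inv_rev, neg_mul, symbol, timeDeriv, map_sub, map_mul, eval_ofNat,
    map_pow, eval_X, Option.elim_none]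
  ring

/-! ### Gaussian bounds -/

lemma heatKernel_pos {t : ℝ} (ht : 0 < t) (z : Space n) : 0 < heatKernel t z := by
  unfold heatKernel
  positivity

lemma heatKernel_le {a b t : ℝ} (ha : 0 < a) (ht : t ∈ Icc a b) (z : Space n) :
    heatKernel t z ≤ (4 * π * a) ^ (-(n : ℝ) / 2) * exp (-‖z‖ ^ 2 / (4 * b)) := by
  have ht0 : 0 < t := ha.trans_le ht.1
  refine mul_le_mul (Real.rpow_le_rpow_of_nonpos (by positivity) (by gcongr; exact ht.1)
    (by rw [neg_div]; exact neg_nonpos.2 (by positivity))) ?_ (by positivity) (by positivity)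
  rw [neg_div, neg_div]
  gcongr
  exact ht.2

lemma le_heatKernel {a b t r : ℝ} (ha : 0 < a) (ht : t ∈ Icc a b) {z : Space n} (hz : ‖z‖ ≤ r) :
    (4 * π * b) ^ (-(n : ℝ) / 2) * exp (-r ^ 2 / (4 * a)) ≤ heatKernel t z := by
  have ht0 : 0 < t := ha.trans_le ht.1
  refine mul_le_mul (Real.rpow_le_rpow_of_nonpos (by positivity) (by gcongr; exact ht.2)
    (by rw [neg_div]; exact neg_nonpos.2 (by positivity))) ?_ (by positivity) (by positivity)
  rw [neg_div, neg_div]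
  gcongr
  exact ht.1

lemma exists_one_add_pow_mul_exp_le (m : ℕ) {δ : ℝ} (hδ : 0 < δ) :
    ∃ K, 0 ≤ K ∧ ∀ r : ℝ, 0 ≤ r → (1 + r) ^ m * exp (-(δ * r ^ 2)) ≤ K := by
  refine ⟨m.factorial * exp (1 + 1 / (4 * δ)), by positivity, fun r hr => ?_⟩
  have hpow : (1 + r) ^ m ≤ m.factorial * exp (1 + r) := by
    have := Real.pow_div_factorial_le_exp (1 + r) (by positivity) m
    rwa [div_le_iff₀' (by positivity)] at this
  have hsq : r ≤ 1 / (4 * δ) + δ * r ^ 2 := by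
    have : δ * r ^ 2 - r + 1 / (4 * δ) = δ * (r - 1 / (2 * δ)) ^ 2 := by field_simp; ring
    have : 0 ≤ δ * (r - 1 / (2 * δ)) ^ 2 := by positivity
    linarith
  calc (1 + r) ^ m * exp (-(δ * r ^ 2))
      ≤ m.factorial * exp (1 + r) * exp (-(δ * r ^ 2)) := by gcongr
    _ = m.factorial * exp (1 + (r - δ * r ^ 2)) := by rw [mul_assoc, ← exp_add]; ring_nf
    _ ≤ m.factorial * exp (1 + 1 / (4 * δ)) := by gcongr; linarith

/-- Half of the Gaussian decay absorbs the polynomial factor. -/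
lemma exists_abs_mul_heatKernel_le {h : ℝ → Space n → ℝ} (hh : h ∈ moderateGrowth n) {a b : ℝ}
    (ha : 0 < a) (hab : a ≤ b) :
    ∃ K, 0 ≤ K ∧ ∀ t ∈ Icc a b, ∀ z,
      |h t z| * heatKernel t z ≤ K * exp (-‖z‖ ^ 2 / (8 * b)) := by
  have hb : 0 < b := ha.trans_le hab
  obtain ⟨C, hC, k, hCk⟩ := exists_abs_le_of_mem_moderateGrowth hh ha b
  obtain ⟨K, hK, hpoly⟩ := exists_one_add_pow_mul_exp_le k (δ := 1 / (8 * b)) (by positivity)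
  refine ⟨C * K * (4 * π * a) ^ (-(n : ℝ) / 2), by positivity, fun t ht z => ?_⟩
  have split : exp (-‖z‖ ^ 2 / (4 * b)) =
      exp (-(1 / (8 * b) * ‖z‖ ^ 2)) * exp (-‖z‖ ^ 2 / (8 * b)) := by
    rw [← exp_add]
    congr 1
    field_simp
    ring
  calc |h t z| * heatKernel t z
      ≤ C * (1 + ‖z‖) ^ k * ((4 * π * a) ^ (-(n : ℝ) / 2) * exp (-‖z‖ ^ 2 / (4 * b))) :=
        mul_le_mul (hCk t ht z) (heatKernel_le ha ht z)
          (heatKernel_pos (ha.trans_le ht.1) z).le (by positivity)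
    _ = C * ((1 + ‖z‖) ^ k * exp (-(1 / (8 * b) * ‖z‖ ^ 2))) * (4 * π * a) ^ (-(n : ℝ) / 2) *
        exp (-‖z‖ ^ 2 / (8 * b)) := by rw [split]; ring
    _ ≤ C * K * (4 * π * a) ^ (-(n : ℝ) / 2) * exp (-‖z‖ ^ 2 / (8 * b)) := by
        gcongr
        exact hpoly _ (norm_nonneg z)

lemma exists_abs_symbol_mul_heatKernel_le (P : Pol n) {a b : ℝ} (ha : 0 < a) (hab : a ≤ b) :
    ∃ K, ∀ t ∈ Icc a b, ∀ z, |symbol P t z * heatKernel t z| ≤ K := by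
  obtain ⟨K, hK, hbound⟩ := exists_abs_mul_heatKernel_le (symbol_mem_moderateGrowth P) ha hab
  have hb : 0 < b := ha.trans_le hab
  refine ⟨K, fun t ht z => ?_⟩
  rw [abs_mul, abs_of_pos (heatKernel_pos (ha.trans_le ht.1) z)]
  refine (hbound t ht z).trans (mul_le_of_le_one_right hK (exp_le_one_iff.2 ?_))
  rw [neg_div]
  exact neg_nonpos.2 (by positivity)

/-! ### The heat flow of a finite measure -/

lemma exists_measure_closedBall_pos {E : Type*} [PseudoMetricSpace E] [MeasurableSpace E]
    (ν : Measure E) [IsFiniteMeasure ν] [NeZero ν] (x : E) :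
    ∃ R, 0 ≤ R ∧ 0 < ν.real (Metric.closedBall x R) := by
  by_contra! h
  refine NeZero.ne ν (Measure.measure_univ_eq_zero.1 ?_)
  rw [← Metric.iUnion_closedBall_nat x]
  refine measure_iUnion_null fun k => ?_
  have := (h k k.cast_nonneg).antisymm measureReal_nonneg
  rwa [measureReal_eq_zero_iff] at this

section HeatMoment

variable (μ : Measure (Space n))

/-- The heat flow `u(t,x) = ∫ G(t, x - y) dμ(y)` with initial datum `μ`. -/
noncomputable def heatFlow (t : ℝ) (x : Space n) : ℝ :=
  ∫ y, heatKernel t (x - y) ∂μ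

/-- The integral of a polynomial against the unnormalised law `G(t, x - y) μ(dy)`. All derivatives
of the heat flow are of this form. -/
noncomputable def heatMoment (P : Pol n) (t : ℝ) (x : Space n) : ℝ :=
  ∫ y, symbol P t (x - y) * heatKernel t (x - y) ∂μ

lemma heatMoment_one : heatMoment μ 1 = heatFlow μ := by
  ext t x
  simp [heatMoment, heatFlow, symbol]

lemma continuous_symbol_mul_heatKernel (P : Pol n) (t : ℝ) :
    Continuous fun z => symbol P t z * heatKernel t z :=
  continuous_iff_continuousAt.2 fun z => (hasFDerivAt_symbol_mul_heatKernel P t z).continuousAt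

variable [IsFiniteMeasure μ]

lemma integrable_symbol_mul_heatKernel (P : Pol n) {t : ℝ} (ht : 0 < t) (x : Space n) :
    Integrable (fun y => symbol P t (x - y) * heatKernel t (x - y)) μ := by
  obtain ⟨K, hK⟩ := exists_abs_symbol_mul_heatKernel_le P ht le_rfl
  refine .of_bound ((continuous_symbol_mul_heatKernel P t).comp
    (continuous_const.sub continuous_id)).aestronglyMeasurable K (.of_forall fun y => ?_)
  exact hK t ⟨le_rfl, le_rfl⟩ (x - y)

lemma integrable_heatKernel {t : ℝ} (ht : 0 < t) (x : Space n) :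
    Integrable (fun y => heatKernel t (x - y)) μ := by
  simpa [symbol] using integrable_symbol_mul_heatKernel μ 1 ht x

lemma heatMoment_sum {ι : Type*} (s : Finset ι) (P : ι → Pol n) {t : ℝ} (ht : 0 < t)
    (x : Space n) : heatMoment μ (∑ i ∈ s, P i) t x = ∑ i ∈ s, heatMoment μ (P i) t x := by
  unfold heatMoment
  rw [← integral_finsetSum _ fun i _ => integrable_symbol_mul_heatKernel μ (P i) ht x]
  simp only [symbol, map_sum, Finset.sum_mul]

lemma hasFDerivAt_heatMoment (P : Pol n) {t : ℝ} (ht : 0 < t) (x : Space n) :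
    HasFDerivAt (heatMoment μ P t) (covector fun i => heatMoment μ (spaceDeriv i P) t x) x := by
  choose K hK using fun i => exists_abs_symbol_mul_heatKernel_le (spaceDeriv i P) ht le_rfl
  let F' (x y : Space n) : Space n →L[ℝ] ℝ :=
    covector fun i => symbol (spaceDeriv i P) t (x - y) * heatKernel t (x - y)
  have hF'_cont : Continuous (F' x) := continuous_covector.comp (continuous_pi fun i =>
    (continuous_symbol_mul_heatKernel (spaceDeriv i P) t).comp (continuous_const.sub continuous_id))
  have hF'_bound (x y : Space n) : ‖F' x y‖ ≤ ∑ i, K i :=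
    (norm_covector_le _).trans (Finset.sum_le_sum fun i _ => hK i t ⟨le_rfl, le_rfl⟩ (x - y))
  have hF'_int : Integrable (F' x) μ :=
    .of_bound hF'_cont.aestronglyMeasurable _ (.of_forall (hF'_bound x))
  refine (hasFDerivAt_integral_of_dominated_of_fderiv_le (F' := F') univ_mem
    (.of_forall fun x => (integrable_symbol_mul_heatKernel μ P ht x).aestronglyMeasurable)
    (integrable_symbol_mul_heatKernel μ P ht x) hF'_cont.aestronglyMeasurable
    (.of_forall fun y x _ => hF'_bound x y) (integrable_const _)
    (.of_forall fun y x _ => ?_)).congr_fderiv (eq_covector fun i => ?_)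
  · exact (hasFDerivAt_symbol_mul_heatKernel P t (x - y)).comp x ((hasFDerivAt_id x).sub_const y)
  · rw [ContinuousLinearMap.integral_apply hF'_int]
    simp only [F', covector_single, heatMoment]

lemma hasDerivAt_heatMoment (P : Pol n) {t : ℝ} (ht : 0 < t) (x : Space n) :
    HasDerivAt (fun t => heatMoment μ P t x) (heatMoment μ (timeDeriv P) t x) t := by
  have hnhds : Icc (t / 2) (2 * t) ∈ 𝓝 t := Icc_mem_nhds (by linarith) (by linarith)
  have hpos {s : ℝ} (hs : s ∈ Icc (t / 2) (2 * t)) : 0 < s := (half_pos ht).trans_le hs.1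
  obtain ⟨K, hK⟩ := exists_abs_symbol_mul_heatKernel_le (timeDeriv P) (half_pos ht)
    (by linarith : t / 2 ≤ 2 * t)
  exact (hasDerivAt_integral_of_dominated_loc_of_deriv_le hnhds
    (eventually_of_mem hnhds fun s hs =>
      (integrable_symbol_mul_heatKernel μ P (hpos hs) x).aestronglyMeasurable)
    (integrable_symbol_mul_heatKernel μ P ht x)
    (integrable_symbol_mul_heatKernel μ (timeDeriv P) ht x).aestronglyMeasurable
    (.of_forall fun y s hs => hK s hs (x - y)) (integrable_const K)
    (.of_forall fun y s hs => hasDerivAt_symbol_mul_heatKernel P (hpos hs) (x - y))).2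

lemma exists_heatFlow_le {a b : ℝ} (ha : 0 < a) (hab : a ≤ b) :
    ∃ M, ∀ t ∈ Icc a b, ∀ x, heatFlow μ t x ≤ M := by
  obtain ⟨K, hK⟩ := exists_abs_symbol_mul_heatKernel_le (1 : Pol n) ha hab
  refine ⟨K * μ.real univ, fun t ht x => ?_⟩
  rw [← heatMoment_one, heatMoment]
  refine (le_norm_self _).trans ?_
  exact norm_integral_le_of_norm_le_const (.of_forall fun y => hK t ht (x - y))

lemma exists_le_heatFlow [NeZero μ] {a b : ℝ} (ha : 0 < a) (hab : a ≤ b) :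
    ∃ m, 0 < m ∧ ∃ R, 0 ≤ R ∧ ∀ t ∈ Icc a b, ∀ x,
      m * exp (-(‖x‖ + R) ^ 2 / (4 * a)) ≤ heatFlow μ t x := by
  have hb : 0 < b := ha.trans_le hab
  obtain ⟨R, hR, hμR⟩ := exists_measure_closedBall_pos μ 0
  refine ⟨(4 * π * b) ^ (-(n : ℝ) / 2) * μ.real (Metric.closedBall 0 R), by positivity, R, hR,
    fun t ht x => ?_⟩
  have h_int := integrable_heatKernel μ (ha.trans_le ht.1) x
  calc (4 * π * b) ^ (-(n : ℝ) / 2) * μ.real (Metric.closedBall 0 R) *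
        exp (-(‖x‖ + R) ^ 2 / (4 * a))
      = (4 * π * b) ^ (-(n : ℝ) / 2) * exp (-(‖x‖ + R) ^ 2 / (4 * a)) *
        μ.real (Metric.closedBall 0 R) := by ring
    _ ≤ ∫ y in Metric.closedBall 0 R, heatKernel t (x - y) ∂μ :=
        setIntegral_ge_of_const_le_real measurableSet_closedBall (measure_ne_top _ _)
          (fun y hy => le_heatKernel ha ht ((norm_sub_le x y).trans
            (by gcongr; exact mem_closedBall_zero_iff.1 hy))) h_int.integrableOn
    _ ≤ heatFlow μ t x :=
        setIntegral_le_integral h_int (.of_forall fun y => (heatKernel_pos (ha.trans_le ht.1) _).le)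

lemma heatFlow_pos [NeZero μ] {t : ℝ} (ht : 0 < t) (x : Space n) : 0 < heatFlow μ t x := by
  obtain ⟨m, hm, R, -, h⟩ := exists_le_heatFlow μ ht le_rfl
  exact (by positivity : 0 < m * exp (-(‖x‖ + R) ^ 2 / (4 * t))).trans_le (h t ⟨le_rfl, le_rfl⟩ x)

end HeatMoment

/-! ### Posterior means -/

section PosteriorMean

variable (μ : Measure (Space n))

/-- The mean of a polynomial under the posterior law proportional to `G(t, x - y) μ(dy)`: the law
of the initial position of a heat particle, with initial law `μ`, that is found at `x` at time
`t`. -/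
noncomputable def posteriorMean (P : Pol n) (t : ℝ) (x : Space n) : ℝ :=
  heatMoment μ P t x / heatFlow μ t x

variable [IsFiniteMeasure μ]

lemma IsCaloric.posteriorMean_timeDeriv {P : Pol n} (hP : IsCaloric P) {t : ℝ} (ht : 0 < t)
    (x : Space n) : posteriorMean μ (timeDeriv P) t x =
      ∑ i, posteriorMean μ (HeatFlow.spaceDeriv i (HeatFlow.spaceDeriv i P)) t x := by
  simp only [posteriorMean]
  rw [hP, heatMoment_sum μ _ _ ht, Finset.sum_div]

variable [NeZero μ]

lemma heatFlow_mul_posteriorMean (P : Pol n) {t : ℝ} (ht : 0 < t) (x : Space n) :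
    heatFlow μ t x * posteriorMean μ P t x = heatMoment μ P t x :=
  mul_div_cancel₀ _ (heatFlow_pos μ ht x).ne'

lemma hasFDerivAt_heatFlow {t : ℝ} (ht : 0 < t) (x : Space n) :
    HasFDerivAt (heatFlow μ t)
      (covector fun i => heatFlow μ t x * posteriorMean μ (spaceDeriv i 1) t x) x := by
  simpa only [heatFlow_mul_posteriorMean μ _ ht, heatMoment_one] using
    hasFDerivAt_heatMoment μ 1 ht x

lemma hasDerivAt_heatFlow {t : ℝ} (ht : 0 < t) (x : Space n) :
    HasDerivAt (fun t => heatFlow μ t x)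
      (heatFlow μ t x * posteriorMean μ (timeDeriv 1) t x) t := by
  simpa only [heatFlow_mul_posteriorMean μ _ ht, heatMoment_one] using
    hasDerivAt_heatMoment μ 1 ht x

lemma hasFDerivAt_posteriorMean (P : Pol n) {t : ℝ} (ht : 0 < t) (x : Space n) :
    HasFDerivAt (posteriorMean μ P t)
      (covector fun i => posteriorMean μ (spaceDeriv i P) t x -
        posteriorMean μ P t x * posteriorMean μ (spaceDeriv i 1) t x) x := by
  have hu := (heatFlow_pos μ ht x).ne'
  have hquot : posteriorMean μ P t = fun x => heatMoment μ P t x * (heatFlow μ t x)⁻¹ :=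
    funext fun x => div_eq_mul_inv _ _
  rw [hquot]
  refine ((hasFDerivAt_heatMoment μ P ht x).mul
    ((hasDerivAt_inv hu).comp_hasFDerivAt x (hasFDerivAt_heatFlow μ ht x))).congr_fderiv
    (eq_covector fun i => ?_)
  simp only [posteriorMean, neg_smul, smul_neg, Function.comp_apply, add_apply, neg_apply,
    smul_apply, covector_single, smul_eq_mul]
  field_simp
  ring

lemma hasDerivAt_posteriorMean (P : Pol n) {t : ℝ} (ht : 0 < t) (x : Space n) :
    HasDerivAt (fun t => posteriorMean μ P t x)
      (posteriorMean μ (timeDeriv P) t x -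
        posteriorMean μ P t x * posteriorMean μ (timeDeriv 1) t x) t := by
  have hu := (heatFlow_pos μ ht x).ne'
  refine ((hasDerivAt_heatMoment μ P ht x).div (hasDerivAt_heatFlow μ ht x) hu).congr_deriv ?_
  simp only [posteriorMean]
  field_simp

lemma hasFDerivAt_log_heatFlow {t : ℝ} (ht : 0 < t) (x : Space n) :
    HasFDerivAt (fun x => log (heatFlow μ t x))
      (covector fun i => posteriorMean μ (spaceDeriv i 1) t x) x := by
  have hu := (heatFlow_pos μ ht x).ne'
  refine ((hasFDerivAt_heatFlow μ ht x).log hu).congr_fderiv (eq_covector fun i => ?_)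
  simp [hu]

lemma hasDerivAt_log_heatFlow {t : ℝ} (ht : 0 < t) (x : Space n) :
    HasDerivAt (fun t => log (heatFlow μ t x)) (posteriorMean μ (timeDeriv 1) t x) t := by
  have hu := (heatFlow_pos μ ht x).ne'
  refine ((hasDerivAt_heatFlow μ ht x).log hu).congr_deriv ?_
  field_simp

lemma abs_posteriorMean_le (P : Pol n) {t r C K : ℝ} {k : ℕ} (ht : 0 < t) (hr : 0 ≤ r) (hC : 0 ≤ C)
    (hK : 0 ≤ K) (hinner : ∀ z, |symbol P t z| ≤ C * (1 + ‖z‖) ^ k) {x : Space n}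
    (houter : ∀ z, r ≤ ‖z‖ → |symbol P t z| * heatKernel t z ≤ K * heatFlow μ t x) :
    |posteriorMean μ P t x| ≤ C * (1 + r) ^ k + K * μ.real univ := by
  have hu := heatFlow_pos μ ht x
  have hbound (z : Space n) : |symbol P t z * heatKernel t z| ≤
      C * (1 + r) ^ k * heatKernel t z + K * heatFlow μ t x := by
    have hG := heatKernel_pos ht z
    rw [abs_mul, abs_of_pos hG]
    rcases le_total r ‖z‖ with hz | hz
    · exact (houter z hz).trans (le_add_of_nonneg_left (by positivity))
    · refine le_add_of_le_of_nonneg (mul_le_mul_of_nonneg_right ((hinner z).trans ?_) hG.le)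
        (by positivity)
      gcongr
  have h_int := (integrable_heatKernel μ ht x).const_mul (C * (1 + r) ^ k)
  rw [posteriorMean, abs_div, abs_of_pos hu, div_le_iff₀ hu]
  calc |heatMoment μ P t x|
      ≤ ∫ y, (C * (1 + r) ^ k * heatKernel t (x - y) + K * heatFlow μ t x) ∂μ := by
          rw [heatMoment, ← Real.norm_eq_abs]
          exact norm_integral_le_of_norm_le (h_int.fun_add (integrable_const _))
            (.of_forall fun y => hbound (x - y))
    _ = C * (1 + r) ^ k * heatFlow μ t x + μ.real univ * (K * heatFlow μ t x) := by
        rw [integral_add h_int (integrable_const _), integral_const_mul, integral_const,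
          smul_eq_mul, heatFlow]
    _ = (C * (1 + r) ^ k + K * μ.real univ) * heatFlow μ t x := by ring

/-- The mass of the posterior law outside the ball of radius `√(2b/a) (‖x‖ + R)` is negligible, for
there the decay of `exists_abs_mul_heatKernel_le` beats the lower bound of `exists_le_heatFlow`. -/
lemma posteriorMean_mem_moderateGrowth (P : Pol n) : posteriorMean μ P ∈ moderateGrowth n := by
  refine mem_moderateGrowth_of_abs_le (fun t ht => continuous_iff_continuousAt.2 fun x =>
    (hasFDerivAt_posteriorMean μ P ht x).continuousAt) fun a b ha hab => ?_
  have hb : 0 < b := ha.trans_le hab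
  obtain ⟨C, hC, k, hpoly⟩ := exists_abs_le_of_mem_moderateGrowth (symbol_mem_moderateGrowth P) ha b
  obtain ⟨K, hK, hdecay⟩ := exists_abs_mul_heatKernel_le (symbol_mem_moderateGrowth P) ha hab
  obtain ⟨m, hm, R, hR, hlower⟩ := exists_le_heatFlow μ ha hab
  set s := √(2 * b / a)
  have : 0 ≤ s := Real.sqrt_nonneg _
  refine ⟨C * ((1 + s) * (1 + R)) ^ k + K / m * μ.real univ, k, fun t ht x => ?_⟩
  have hradius : 0 ≤ s * (‖x‖ + R) := by positivity
  have houter (z : Space n) (hz : s * (‖x‖ + R) ≤ ‖z‖) :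
      |symbol P t z| * heatKernel t z ≤ K / m * heatFlow μ t x := by
    have hsq : -(s * (‖x‖ + R)) ^ 2 / (8 * b) = -(‖x‖ + R) ^ 2 / (4 * a) := by
      rw [mul_pow, Real.sq_sqrt (by positivity)]
      field_simp
      ring
    calc |symbol P t z| * heatKernel t z
        ≤ K * exp (-‖z‖ ^ 2 / (8 * b)) := hdecay t ht z
      _ ≤ K * exp (-(s * (‖x‖ + R)) ^ 2 / (8 * b)) := by rw [neg_div, neg_div]; gcongr
      _ = K / m * (m * exp (-(‖x‖ + R) ^ 2 / (4 * a))) := by rw [hsq]; field_simp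
      _ ≤ K / m * heatFlow μ t x := by gcongr; exact hlower t ht x
  have hle : 1 + s * (‖x‖ + R) ≤ (1 + s) * (1 + R) * (1 + ‖x‖) := by
    have : 0 ≤ R + ‖x‖ + R * ‖x‖ + s + s * R * ‖x‖ := by positivity
    linarith
  calc |posteriorMean μ P t x|
      ≤ C * (1 + s * (‖x‖ + R)) ^ k + K / m * μ.real univ :=
        abs_posteriorMean_le μ P (ha.trans_le ht.1) hradius hC (by positivity) (hpoly t ht) houter
    _ ≤ C * ((1 + s) * (1 + R) * (1 + ‖x‖)) ^ k + K / m * μ.real univ * (1 + ‖x‖) ^ k := by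
        have hone : 1 ≤ (1 + ‖x‖) ^ k := one_le_pow₀ (le_add_of_nonneg_right (norm_nonneg x))
        exact add_le_add (by gcongr) (le_mul_of_one_le_right (by positivity) hone)
    _ = (C * ((1 + s) * (1 + R)) ^ k + K / m * μ.real univ) * (1 + ‖x‖) ^ k := by
        rw [mul_pow]
        ring

lemma log_heatFlow_mem_moderateGrowth : (fun t x => log (heatFlow μ t x)) ∈ moderateGrowth n := by
  refine mem_moderateGrowth_of_abs_le (fun t ht => continuous_iff_continuousAt.2 fun x =>
    (hasFDerivAt_log_heatFlow μ ht x).continuousAt) fun a b ha hab => ?_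
  obtain ⟨M, hM⟩ := exists_heatFlow_le μ ha hab
  obtain ⟨m, hm, R, hR, hlower⟩ := exists_le_heatFlow μ ha hab
  refine ⟨|M| + |log m| + (1 + R) ^ 2 / (4 * a), 2, fun t ht x => ?_⟩
  have hu := heatFlow_pos μ (ha.trans_le ht.1) x
  have hlog_ge : log m - (‖x‖ + R) ^ 2 / (4 * a) ≤ log (heatFlow μ t x) := by
    have := log_le_log (by positivity) (hlower t ht x)
    rwa [log_mul hm.ne' (exp_pos _).ne', log_exp, neg_div, ← sub_eq_add_neg] at this
  have hlog_le : log (heatFlow μ t x) ≤ |M| :=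
    (log_le_self hu.le).trans ((hM t ht x).trans (le_abs_self M))
  have hone : 1 ≤ (1 + ‖x‖) ^ 2 := one_le_pow₀ (le_add_of_nonneg_right (norm_nonneg x))
  calc |log (heatFlow μ t x)|
      ≤ (|M| + |log m|) * 1 + (‖x‖ + R) ^ 2 / (4 * a) := by
        have := neg_abs_le (log m)
        have : 0 ≤ (‖x‖ + R) ^ 2 / (4 * a) := by positivity
        rw [abs_le]
        constructor <;> linarith [abs_nonneg M, abs_nonneg (log m)]
    _ ≤ (|M| + |log m|) * (1 + ‖x‖) ^ 2 + ((1 + R) * (1 + ‖x‖)) ^ 2 / (4 * a) := by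
        gcongr
        linarith [mul_nonneg hR (norm_nonneg x)]
    _ = (|M| + |log m| + (1 + R) ^ 2 / (4 * a)) * (1 + ‖x‖) ^ 2 := by ring

end PosteriorMean

/-! ### Integration against the heat flow -/

section Integration

lemma integrable_exp_neg_norm_sq_div {V : Type*} [NormedAddCommGroup V] [InnerProductSpace ℝ V]
    [FiniteDimensional ℝ V] [MeasurableSpace V] [BorelSpace V] {c : ℝ} (hc : 0 < c) :
    Integrable fun x : V => exp (-‖x‖ ^ 2 / c) := by
  have h := (GaussianFourier.integrable_cexp_neg_mul_sq_norm_add (V := V)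
    (b := ((c⁻¹ : ℝ) : ℂ)) (by simpa using hc) 0 0).re
  refine h.congr (.of_forall fun x => ?_)
  simp only [zero_mul, add_zero, RCLike.re_to_complex]
  rw [← Complex.ofReal_pow, ← Complex.ofReal_neg, ← Complex.ofReal_mul, Complex.exp_ofReal_re]
  ring_nf

lemma integral_eq_zero_of_hasLineDerivAt {E : Type*} [NormedAddCommGroup E] [NormedSpace ℝ E]
    [MeasurableSpace E] [BorelSpace E] [FiniteDimensional ℝ E] {ν : Measure E}
    [ν.IsAddHaarMeasure] {g g' : E → ℝ} {v : E} (hg : Integrable g ν) (hg' : Integrable g' ν)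
    (h : ∀ x, HasLineDerivAt ℝ g (g' x) x v) : ∫ x, g' x ∂ν = 0 := by
  simpa using integral_bilinear_hasLineDerivAt_right_eq_neg_left_of_integrable
    (B := ContinuousLinearMap.mul ℝ ℝ) (f := fun _ => 1) (f' := fun _ => 0)
    (by simp) (by simpa using hg') (by simpa using hg)
    (fun x _ => by exact hasDerivAt_const (0 : ℝ) (1 : ℝ)) fun x _ => h x

lemma integrable_one_add_norm_pow {E : Type*} [NormedAddCommGroup E] [MeasurableSpace E]
    {ν : Measure E} (hν : ∀ k : ℕ, Integrable (fun y => ‖y‖ ^ k) ν) (k : ℕ) :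
    Integrable (fun y => (1 + ‖y‖) ^ k) ν := by
  simp only [add_comm (1 : ℝ), add_pow, one_pow, mul_one]
  exact integrable_finsetSum _ fun i _ => (hν i).mul_const _

variable {μ : Measure (Space n)} [IsFiniteMeasure μ]

lemma heatFlow_mul_one_add_norm_pow_le (hμ : ∀ k : ℕ, Integrable (fun y => ‖y‖ ^ k) μ)
    {t c K : ℝ} {k : ℕ} (ht : 0 < t) (hc : 0 < c)
    (hdecay : ∀ z : Space n, |(1 + ‖z‖) ^ k| * heatKernel t z ≤ K * exp (-‖z‖ ^ 2 / c))
    (x : Space n) : heatFlow μ t x * (1 + ‖x‖) ^ k ≤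
      K * ∫ y, (1 + ‖y‖) ^ k * exp (-‖x - y‖ ^ 2 / c) ∂μ := by
  have h_int : Integrable (fun y => (1 + ‖y‖) ^ k * exp (-‖x - y‖ ^ 2 / c)) μ := by
    refine (integrable_one_add_norm_pow hμ k).mul_bdd (c := 1)
      (by fun_prop) (.of_forall fun y => ?_)
    rw [Real.norm_of_nonneg (exp_pos _).le, exp_le_one_iff, neg_div]
    exact neg_nonpos.2 (by positivity)
  rw [heatFlow, ← integral_mul_const, ← integral_const_mul]
  refine integral_mono ((integrable_heatKernel μ ht x).mul_const _) (h_int.const_mul K) fun y => ?_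
  have hpeetre : 1 + ‖x‖ ≤ (1 + ‖x - y‖) * (1 + ‖y‖) := by
    have := norm_le_norm_sub_add x y
    have : 0 ≤ ‖x - y‖ * ‖y‖ := by positivity
    linarith
  calc heatKernel t (x - y) * (1 + ‖x‖) ^ k
      ≤ heatKernel t (x - y) * ((1 + ‖x - y‖) * (1 + ‖y‖)) ^ k := by
        have := (heatKernel_pos ht (x - y)).le
        gcongr
    _ = |(1 + ‖x - y‖) ^ k| * heatKernel t (x - y) * (1 + ‖y‖) ^ k := by
        rw [mul_pow, abs_of_nonneg (by positivity)]
        ring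
    _ ≤ K * exp (-‖x - y‖ ^ 2 / c) * (1 + ‖y‖) ^ k :=
        mul_le_mul_of_nonneg_right (hdecay _) (by positivity)
    _ = K * ((1 + ‖y‖) ^ k * exp (-‖x - y‖ ^ 2 / c)) := by ring

variable [NeZero μ] (hμ : ∀ k : ℕ, Integrable (fun y => ‖y‖ ^ k) μ)
include hμ

lemma exists_integrable_bound_heatFlow_mul {h : ℝ → Space n → ℝ} (hh : h ∈ moderateGrowth n)
    {a b : ℝ} (ha : 0 < a) (hab : a ≤ b) :
    ∃ g : Space n → ℝ, Integrable g ∧ ∀ t ∈ Icc a b, ∀ x, ‖heatFlow μ t x * h t x‖ ≤ g x := by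
  have hb : 0 < 8 * b := by linarith
  obtain ⟨C, hC, k, hbound⟩ := exists_abs_le_of_mem_moderateGrowth hh ha b
  obtain ⟨K, -, hdecay⟩ :=
    exists_abs_mul_heatKernel_le (one_add_norm_pow_mem_moderateGrowth (n := n) k) ha hab
  have hconv : Integrable fun x => ∫ y, (1 + ‖y‖) ^ k * exp (-‖x - y‖ ^ 2 / (8 * b)) ∂μ :=
    ((integrable_one_add_norm_pow hμ k).convolution_integrand (ContinuousLinearMap.mul ℝ ℝ)
      (integrable_exp_neg_norm_sq_div hb)).integral_prod_left
  refine ⟨_, (hconv.const_mul K).const_mul C, fun t ht x => ?_⟩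
  have hu := heatFlow_pos μ (ha.trans_le ht.1) x
  rw [norm_mul, Real.norm_of_nonneg hu.le]
  calc heatFlow μ t x * |h t x|
      ≤ heatFlow μ t x * (C * (1 + ‖x‖) ^ k) := by gcongr; exact hbound t ht x
    _ = C * (heatFlow μ t x * (1 + ‖x‖) ^ k) := by ring
    _ ≤ C * (K * ∫ y, (1 + ‖y‖) ^ k * exp (-‖x - y‖ ^ 2 / (8 * b)) ∂μ) :=
        mul_le_mul_of_nonneg_left
          (heatFlow_mul_one_add_norm_pow_le hμ (ha.trans_le ht.1) hb (hdecay t ht) x) hC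

omit hμ in
lemma continuous_heatFlow_mul {h : ℝ → Space n → ℝ} (hh : h ∈ moderateGrowth n) {t : ℝ}
    (ht : 0 < t) : Continuous fun x => heatFlow μ t x * h t x :=
  (continuous_iff_continuousAt.2 fun x => (hasFDerivAt_heatFlow μ ht x).continuousAt).mul
    (hh.1 t ht)

lemma integrable_heatFlow_mul {h : ℝ → Space n → ℝ} (hh : h ∈ moderateGrowth n) {t : ℝ}
    (ht : 0 < t) : Integrable fun x => heatFlow μ t x * h t x := by
  obtain ⟨g, hg, hbound⟩ := exists_integrable_bound_heatFlow_mul hμ hh ht le_rfl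
  exact hg.mono' (continuous_heatFlow_mul hh ht).aestronglyMeasurable
    (.of_forall (hbound t ⟨le_rfl, le_rfl⟩))

lemma integral_heatFlow_mul_sum {ι : Type*} {s : Finset ι} {h : ι → ℝ → Space n → ℝ}
    (hh : ∀ i, h i ∈ moderateGrowth n) {t : ℝ} (ht : 0 < t) :
    ∫ x, heatFlow μ t x * ∑ i ∈ s, h i t x = ∑ i ∈ s, ∫ x, heatFlow μ t x * h i t x := by
  simp only [Finset.mul_sum]
  exact integral_finsetSum _ fun i _ => integrable_heatFlow_mul hμ (hh i) ht

lemma hasDerivAt_integral_heatFlow_mul {h k : ℝ → Space n → ℝ} (hh : h ∈ moderateGrowth n)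
    (hk : k ∈ moderateGrowth n)
    (hderiv : ∀ s, 0 < s → ∀ x,
      HasDerivAt (fun s => heatFlow μ s x * h s x) (heatFlow μ s x * k s x) s)
    {t : ℝ} (ht : 0 < t) :
    HasDerivAt (fun t => ∫ x, heatFlow μ t x * h t x) (∫ x, heatFlow μ t x * k t x) t := by
  have hnhds : Icc (t / 2) (2 * t) ∈ 𝓝 t := Icc_mem_nhds (by linarith) (by linarith)
  have hpos {s : ℝ} (hs : s ∈ Icc (t / 2) (2 * t)) : 0 < s := (half_pos ht).trans_le hs.1
  obtain ⟨g, hg, hbound⟩ := exists_integrable_bound_heatFlow_mul hμ hk (half_pos ht)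
    (by linarith : t / 2 ≤ 2 * t)
  exact (hasDerivAt_integral_of_dominated_loc_of_deriv_le hnhds
    (eventually_of_mem hnhds fun s hs =>
      (continuous_heatFlow_mul hh (hpos hs)).aestronglyMeasurable)
    (integrable_heatFlow_mul hμ hh ht) (continuous_heatFlow_mul hk ht).aestronglyMeasurable
    (.of_forall fun x s hs => hbound s hs x) hg
    (.of_forall fun x s hs => hderiv s (hpos hs) x)).2

/-- A balance law `∂ₜ(u h) = ∑ᵢ ∂ᵢ(u Φᵢ) - u w`: the flux `u Φ` integrates to zero, and only the
dissipation `w` remains. -/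
lemma hasDerivAt_integral_of_balance {h w : ℝ → Space n → ℝ} {Φ Ψ : Fin n → ℝ → Space n → ℝ}
    (hh : h ∈ moderateGrowth n) (hw : w ∈ moderateGrowth n)
    (hΦ : ∀ i, Φ i ∈ moderateGrowth n) (hΨ : ∀ i, Ψ i ∈ moderateGrowth n)
    (htime : ∀ s, 0 < s → ∀ x, HasDerivAt (fun s => heatFlow μ s x * h s x)
      (heatFlow μ s x * (∑ i, Ψ i s x - w s x)) s)
    (hspace : ∀ s, 0 < s → ∀ i x, HasLineDerivAt ℝ (fun x => heatFlow μ s x * Φ i s x)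
      (heatFlow μ s x * Ψ i s x) x (EuclideanSpace.single i 1))
    {t : ℝ} (ht : 0 < t) :
    HasDerivAt (fun t => ∫ x, heatFlow μ t x * h t x) (-∫ x, heatFlow μ t x * w t x) t := by
  have hflux (i : Fin n) : ∫ x, heatFlow μ t x * Ψ i t x = 0 :=
    integral_eq_zero_of_hasLineDerivAt (integrable_heatFlow_mul hμ (hΦ i) ht)
      (integrable_heatFlow_mul hμ (hΨ i) ht) (hspace t ht i)
  have hsum : ∑ i, Ψ i ∈ moderateGrowth n := sum_mem fun i _ => hΨ i
  refine (hasDerivAt_integral_heatFlow_mul hμ hh (sub_mem hsum hw) (fun s hs x => ?_)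
    ht).congr_deriv ?_
  · simpa only [Pi.sub_apply, Finset.sum_apply] using htime s hs x
  · simp only [Pi.sub_apply, mul_sub]
    rw [integral_sub (integrable_heatFlow_mul hμ hsum ht) (integrable_heatFlow_mul hμ hw ht)]
    simp only [Finset.sum_apply, integral_heatFlow_mul_sum hμ hΨ ht, hflux, Finset.sum_const_zero,
      zero_sub]

end Integration

/-! ### Entropy, Fisher information and their dissipation -/

section Entropy

lemma hessianMatrix_eq_of_hasFDerivAt {g : Space n → ℝ} {a : Fin n → Space n → ℝ}
    {b : Fin n → Fin n → ℝ} {x : Space n} (hg : ∀ y, HasFDerivAt g (covector fun i => a i y) y)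
    (ha : ∀ i, HasFDerivAt (a i) (covector (b i)) x) (i j : Fin n) :
    hessianMatrix n g x i j = b j i := by
  have hfderiv : fderiv ℝ g = fun y => covector fun i => a i y := funext fun y => (hg y).fderiv
  have hdiff : DifferentiableAt ℝ (fderiv ℝ g) x := by
    have := fun i => (ha i).differentiableAt
    simp only [hfderiv, covector]
    fun_prop
  have happly : HasFDerivAt (fun y => fderiv ℝ g y (EuclideanSpace.single j 1))
      ((fderiv ℝ (fderiv ℝ g) x).flip (EuclideanSpace.single j 1)) x := by
    simpa using hdiff.hasFDerivAt.clm_apply (hasFDerivAt_const (EuclideanSpace.single j 1) x)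
  simp only [hfderiv, covector_single] at happly
  have := DFunLike.congr_fun (happly.unique (ha j)) (EuclideanSpace.single i 1)
  simpa [hessianMatrix, iteratedFDeriv_two_apply, hfderiv] using this

variable (μ : Measure (Space n))

/-- The entropy `-∫ u log u dx` of the heat flow. -/
noncomputable def entropy (t : ℝ) : ℝ :=
  -∫ x, heatFlow μ t x * log (heatFlow μ t x)

/-- The Fisher information `∫ |∇ log u|² u dx` of the heat flow. -/
noncomputable def fisherInformation (t : ℝ) : ℝ :=
  ∫ x, heatFlow μ t x * ∑ i, posteriorMean μ (spaceDeriv i 1) t x ^ 2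

variable [IsFiniteMeasure μ] [NeZero μ]

lemma hessianHSsq_log_heatFlow {t : ℝ} (ht : 0 < t) (x : Space n) :
    hessianHSsq n (fun y => log (heatFlow μ t y)) x =
      ∑ i, ∑ j, (posteriorMean μ (spaceDeriv j (spaceDeriv i 1)) t x -
        posteriorMean μ (spaceDeriv i 1) t x * posteriorMean μ (spaceDeriv j 1) t x) ^ 2 := by
  simp only [hessianHSsq, hessianMatrix_eq_of_hasFDerivAt (hasFDerivAt_log_heatFlow μ ht)
    fun i => hasFDerivAt_posteriorMean μ (spaceDeriv i 1) ht x]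
  exact Finset.sum_comm

variable {μ} (hμ : ∀ k : ℕ, Integrable (fun y => ‖y‖ ^ k) μ)
include hμ

/-- De Bruijn's identity, from `∂ₜ(u log u) = Δ(u log u) - u |∇ log u|²`. -/
lemma hasDerivAt_integral_heatFlow_mul_log {t : ℝ} (ht : 0 < t) :
    HasDerivAt (fun t => ∫ x, heatFlow μ t x * log (heatFlow μ t x))
      (-fisherInformation μ t) t := by
  let v (t : ℝ) (x : Space n) := log (heatFlow μ t x)
  let r (P : Pol n) := posteriorMean μ P
  have hv : v + 1 ∈ moderateGrowth n := add_mem (log_heatFlow_mem_moderateGrowth μ) (one_mem _)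
  have hr (P : Pol n) : r P ∈ moderateGrowth n := posteriorMean_mem_moderateGrowth μ P
  have key := hasDerivAt_integral_of_balance hμ (w := ∑ i, r (spaceDeriv i 1) ^ 2)
    (Φ := fun i => r (spaceDeriv i 1) * (v + 1))
    (Ψ := fun i => r (spaceDeriv i (spaceDeriv i 1)) * (v + 1) + r (spaceDeriv i 1) ^ 2)
    (log_heatFlow_mem_moderateGrowth μ) (sum_mem fun i _ => pow_mem (hr _) 2)
    (fun i => mul_mem (hr _) hv) (fun i => add_mem (mul_mem (hr _) hv) (pow_mem (hr _) 2))
    (fun s hs x => ?_) (fun s hs i x => ?_) ht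
  · simpa only [fisherInformation, Finset.sum_apply, Pi.pow_apply] using key
  · refine ((hasDerivAt_heatFlow μ hs x).mul (hasDerivAt_log_heatFlow μ hs x)).congr_deriv ?_
    simp only [isCaloric_one.posteriorMean_timeDeriv μ hs x, Pi.add_apply, Pi.mul_apply,
      Pi.pow_apply, Pi.one_apply, Finset.sum_apply, Finset.sum_add_distrib, ← Finset.sum_mul, r, v]
    ring
  · convert! ((hasFDerivAt_heatFlow μ hs x).mul ((hasFDerivAt_posteriorMean μ _ hs x).mul
      ((hasFDerivAt_log_heatFlow μ hs x).add_const 1))).hasLineDerivAt _ using 1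
    simp only [Pi.add_apply, Pi.mul_apply, Pi.one_apply, Pi.pow_apply, smul_add, add_apply,
      smul_apply, covector_single, smul_eq_mul, r, v]
    ring

/-- With `w = u r`, another solution of the heat equation, this integrates
`∂ₜ(w²/u) = Δ(w²/u) - 2 u |∇(w/u)|²`. -/
lemma hasDerivAt_integral_heatFlow_mul_posteriorMean_sq {P : Pol n} (hP : IsCaloric P) {t : ℝ}
    (ht : 0 < t) :
    HasDerivAt (fun t => ∫ x, heatFlow μ t x * posteriorMean μ P t x ^ 2)
      (-2 * ∫ x, heatFlow μ t x * ∑ i, (posteriorMean μ (spaceDeriv i P) t x -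
        posteriorMean μ P t x * posteriorMean μ (spaceDeriv i 1) t x) ^ 2) t := by
  let r (P : Pol n) := posteriorMean μ P
  have hr (P : Pol n) : r P ∈ moderateGrowth n := posteriorMean_mem_moderateGrowth μ P
  have htwo : (2 : ℝ → Space n → ℝ) ∈ moderateGrowth n := ofNat_mem _ 2
  let w (i : Fin n) := 2 * (r (spaceDeriv i P) - r P * r (spaceDeriv i 1)) ^ 2
  have hw (i : Fin n) : w i ∈ moderateGrowth n :=
    mul_mem htwo (pow_mem (sub_mem (hr _) (mul_mem (hr _) (hr _))) 2)
  have key := hasDerivAt_integral_of_balance hμ (h := r P ^ 2) (w := ∑ i, w i)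
    (Φ := fun i => 2 * r P * r (spaceDeriv i P) - r P ^ 2 * r (spaceDeriv i 1))
    (Ψ := fun i => w i + 2 * r P * r (spaceDeriv i (spaceDeriv i P)) -
      r P ^ 2 * r (spaceDeriv i (spaceDeriv i 1)))
    (pow_mem (hr _) 2) (sum_mem fun i _ => hw i)
    (fun i => sub_mem (mul_mem (mul_mem htwo (hr _)) (hr _)) (mul_mem (pow_mem (hr _) 2) (hr _)))
    (fun i => sub_mem (add_mem (hw i) (mul_mem (mul_mem htwo (hr _)) (hr _)))
      (mul_mem (pow_mem (hr _) 2) (hr _)))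
    (fun s hs x => ?_) (fun s hs i x => ?_) ht
  · simpa only [w, r, Finset.sum_apply, Pi.pow_apply, Pi.mul_apply, Pi.sub_apply,
      Pi.ofNat_apply, ← Finset.mul_sum, mul_left_comm _ (2 : ℝ), integral_const_mul, neg_mul]
      using key
  · refine ((hasDerivAt_heatFlow μ hs x).mul
      ((hasDerivAt_posteriorMean μ P hs x).pow 2)).congr_deriv ?_
    simp only [hP.posteriorMean_timeDeriv μ hs x, isCaloric_one.posteriorMean_timeDeriv μ hs x,
      Pi.add_apply, Pi.mul_apply, Pi.pow_apply, Pi.sub_apply, Pi.ofNat_apply, Finset.sum_apply,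
      Finset.sum_add_distrib, Finset.sum_sub_distrib, ← Finset.mul_sum, r]
    ring
  · have hu := hasFDerivAt_heatFlow μ hs x
    have hrP := hasFDerivAt_posteriorMean μ P hs x
    have hrD (Q : Pol n) := hasFDerivAt_posteriorMean μ (spaceDeriv i Q) hs x
    convert! (hu.mul (((hrP.const_mul 2).mul (hrD P)).sub ((hrP.pow 2).mul (hrD 1)))).hasLineDerivAt
      _ using 1
    simp only [Pi.sub_apply, Pi.add_apply, Pi.mul_apply, Pi.ofNat_apply, Pi.pow_apply,
      Nat.add_one_sub_one, pow_one, nsmul_eq_mul, Nat.cast_ofNat, add_apply, smul_apply, sub_apply,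
      covector_single, smul_eq_mul, w, r]
    ring

lemma hasDerivAt_fisherInformation {t : ℝ} (ht : 0 < t) :
    HasDerivAt (fisherInformation μ)
      (-2 * ∫ x, hessianHSsq n (fun y => log (heatFlow μ t y)) x * heatFlow μ t x) t := by
  let r (P : Pol n) := posteriorMean μ P
  have hr (P : Pol n) : r P ∈ moderateGrowth n := posteriorMean_mem_moderateGrowth μ P
  have hsum : fisherInformation μ =ᶠ[𝓝 t]
      fun s => ∑ i, ∫ x, heatFlow μ s x * r (spaceDeriv i 1) s x ^ 2 := by
    filter_upwards [eventually_gt_nhds ht] with s hs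
    exact integral_heatFlow_mul_sum hμ (fun i => pow_mem (hr (spaceDeriv i 1)) 2) hs
  have hhess (i : Fin n) : ∑ j, (r (spaceDeriv j (spaceDeriv i 1)) -
      r (spaceDeriv i 1) * r (spaceDeriv j 1)) ^ 2 ∈ moderateGrowth n :=
    sum_mem fun j _ => pow_mem (sub_mem (hr _) (mul_mem (hr _) (hr _))) 2
  refine ((HasDerivAt.fun_sum fun i _ => hasDerivAt_integral_heatFlow_mul_posteriorMean_sq hμ
    (isCaloric_one.spaceDeriv i) ht).congr_of_eventuallyEq hsum).congr_deriv ?_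
  have := integral_heatFlow_mul_sum hμ (s := Finset.univ) hhess ht
  simp only [Finset.sum_apply, Pi.pow_apply, Pi.sub_apply, Pi.mul_apply, r] at this
  rw [← Finset.mul_sum, ← this]
  simp only [hessianHSsq_log_heatFlow μ ht, mul_comm (heatFlow μ t _)]

lemma hasDerivAt_entropy {t : ℝ} (ht : 0 < t) :
    HasDerivAt (entropy μ) (fisherInformation μ t) t :=
  (hasDerivAt_integral_heatFlow_mul_log hμ ht).fun_neg.congr_deriv (neg_neg _)

lemma hasDerivAt_deriv_entropy {t : ℝ} (ht : 0 < t) :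
    HasDerivAt (deriv (entropy μ))
      (-2 * ∫ x, hessianHSsq n (fun y => log (heatFlow μ t y)) x * heatFlow μ t x) t := by
  refine (hasDerivAt_fisherInformation hμ ht).congr_of_eventuallyEq ?_
  filter_upwards [eventually_gt_nhds ht] with s hs using (hasDerivAt_entropy hμ hs).deriv

end Entropy

section Density

lemma integrable_norm_pow_withDensity {E : Type*} [NormedAddCommGroup E] [MeasurableSpace E]
    [BorelSpace E] {ν : Measure E} [IsFiniteMeasureOnCompacts ν] {f : E → ℝ} (hf : Continuous f)
    (hf_supp : HasCompactSupport f) (k : ℕ) :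
    Integrable (fun y => ‖y‖ ^ k) (ν.withDensity fun y => ENNReal.ofReal (f y)) := by
  rw [integrable_withDensity_iff_integrable_smul' hf.measurable.ennreal_ofReal (by simp)]
  simp only [ENNReal.toReal_ofReal', smul_eq_mul]
  refine Continuous.integrable_of_hasCompactSupport (by fun_prop) (hf_supp.mono fun x hx h => hx ?_)
  simp [h]

lemma withDensity_ofReal_ne_zero {α : Type*} [MeasurableSpace α] {ν : Measure α} {f : α → ℝ}
    (hf : AEMeasurable f ν) (hf_pos : 0 < ∫ y, f y ∂ν) :
    (ν.withDensity fun y => ENNReal.ofReal (f y)) ≠ 0 := by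
  rw [Ne, withDensity_eq_zero_iff hf.ennreal_ofReal]
  refine fun h => hf_pos.not_ge (integral_nonpos_of_ae ?_)
  filter_upwards [h] with y hy using ENNReal.ofReal_eq_zero.1 hy

variable {f : Space n → ℝ}

lemma heatSol_eq_heatFlow (hf : AEMeasurable f) (hf_nonneg : ∀ y, 0 ≤ f y) :
    heatSol n f = heatFlow (volume.withDensity fun y => ENNReal.ofReal (f y)) := by
  ext t x
  rw [heatFlow, integral_withDensity_eq_integral_toReal_smul₀ hf.ennreal_ofReal (by simp)]
  simp only [heatSol, heatKernel, ENNReal.toReal_ofReal (hf_nonneg _), smul_eq_mul, mul_comm (f _)]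

lemma shannonEntropy_eq_entropy (hf : AEMeasurable f) (hf_nonneg : ∀ y, 0 ≤ f y) :
    shannonEntropy n f = entropy (volume.withDensity fun y => ENNReal.ofReal (f y)) := by
  ext t
  rw [shannonEntropy, entropy, heatSol_eq_heatFlow hf hf_nonneg]

end Density

end HeatFlow

open HeatFlow in
theorem second_entropy_dissipation_general {n : ℕ} {μ : Measure (EuclideanSpace ℝ (Fin n))}
    (hμ_ne : μ ≠ 0) (hμ : ∀ k : ℕ, Integrable (fun y => ‖y‖ ^ k) μ) {t : ℝ} (ht : 0 < t) :
    DifferentiableAt ℝ (entropy μ) t ∧ DifferentiableAt ℝ (deriv (entropy μ)) t ∧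
      deriv (deriv (entropy μ)) t =
        -2 * ∫ x, hessianHSsq n (fun y => log (heatFlow μ t y)) x * heatFlow μ t x := by
  have : NeZero μ := ⟨hμ_ne⟩
  have : IsFiniteMeasure μ :=
    (integrable_const_iff_isFiniteMeasure one_ne_zero).1 (by simpa only [pow_zero] using hμ 0)
  have hsecond := hasDerivAt_deriv_entropy hμ ht
  exact ⟨(hasDerivAt_entropy hμ ht).differentiableAt, hsecond.differentiableAt, hsecond.deriv⟩

/-- The second entropy dissipation formula on `ℝⁿ`:
`H''(u(t)) = -2 ∫ ‖∇² log u‖²_HS u dx`. -/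
theorem second_entropy_dissipation (n : ℕ) (hn : 1 ≤ n)
    (f : EuclideanSpace ℝ (Fin n) → ℝ)
    (hf_cont : Continuous f) (hf_nonneg : ∀ x, 0 ≤ f x)
    (hf_supp : HasCompactSupport f)
    (hf_int : ∫ x, f x = 1) :
    ∀ t : ℝ, 0 < t →
      DifferentiableAt ℝ (shannonEntropy n f) t ∧
      DifferentiableAt ℝ (deriv (shannonEntropy n f)) t ∧
      deriv (deriv (shannonEntropy n f)) t =
        -2 * ∫ x, hessianHSsq n (fun y => Real.log (heatSol n f t y)) x * heatSol n f t x := by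
  intro t ht
  rw [HeatFlow.shannonEntropy_eq_entropy hf_cont.aemeasurable hf_nonneg,
    HeatFlow.heatSol_eq_heatFlow hf_cont.aemeasurable hf_nonneg]
  exact second_entropy_dissipation_general
    (HeatFlow.withDensity_ofReal_ne_zero hf_cont.aemeasurable (hf_int ▸ one_pos))
    (HeatFlow.integrable_norm_pow_withDensity hf_cont hf_supp) ht
end

section
/- Let n ≥ 1 and let f : ℝⁿ → ℝ be a nonnegative, continuous, compactly supported function with ∫_{ℝⁿ} f dx = 1, let u(t,x) = ∫_{ℝⁿ} (4πt)^{-n/2} exp(-‖x-y‖²/(4t)) f(y) dy, and let H(t) = -∫ u log u dx. Then for every t > 0, H''(t) + (2/n) H'(t)² = -(2/n) ∫_{ℝⁿ} (Δ log u - ∫_{ℝⁿ} (Δ log u) u dx)² u dx - 2 ∫_{ℝⁿ} ‖∇² log u - (Δ log u / n) Id‖²_{HS} u dx. Equivalently, with N(t) = exp((2/n)H(t)), (n/(2N)) N'' equals minus twice the variance of Δ log u under u dx divided by n, minus twice the integral of the squared trace-free part of the Hessian of log u. -/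
open Real MeasureTheory

/-- The Laplacian of a function on `ℝⁿ`, i.e. the trace of its Hessian. -/
noncomputable def laplacian (n : ℕ) (g : EuclideanSpace ℝ (Fin n) → ℝ)
    (x : EuclideanSpace ℝ (Fin n)) : ℝ :=
  ∑ i, hessianMatrix n g x i i

/-- The squared Hilbert–Schmidt norm of the trace-free part `∇²g - (Δg/n)·Id` of the Hessian. -/
noncomputable def traceFreeHessianHSsq (n : ℕ) (g : EuclideanSpace ℝ (Fin n) → ℝ)
    (x : EuclideanSpace ℝ (Fin n)) : ℝ :=
  ∑ i, ∑ j, (hessianMatrix n g x i j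
    - (laplacian n g x / n) * (if i = j then 1 else 0)) ^ 2

/-!
For `u` solving the heat equation put `𝓓 G = ∂ₜG - ΔG - 2 ∇ log u · ∇G`. Integrating by parts twice,
`d/dt ∫ G u = ∫ (𝓓 G) u`, and `𝓓` satisfies `𝓓(G F) = (𝓓 G) F + G (𝓓 F) - 2 ∇G · ∇F`.

Write `u` as the law of `Y + √(2t) Z`, with `Z` a standard Gaussian independent of `Y`. Every
posterior mean `E[p(Y) | x]` is a quotient of two solutions of the heat equation, so `𝓓` annihilates
it; by Tweedie's formula `∇ log u = (E[Y | x] - x) / (2t)`, it also annihilates each `∂ᵢ log u`.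
Since moreover `𝓓 (log u) = -‖∇ log u‖²`, the product rule gives
`H' = ∫ ‖∇ log u‖² u = -∫ (Δ log u) u` and `H'' = -2 ∫ ‖∇² log u‖² u`.
The formula follows on splitting `‖∇² log u‖²` into its trace and trace-free parts.
-/

namespace HeatEntropy

open Filter Topology

section ParametricIntegral

variable {X : Type*} [TopologicalSpace X] [SecondCountableTopology X] [MeasurableSpace X]
  {μ : Measure X}

lemma exists_ae_norm_le_of_isCompact_support {F : Type*} [SeminormedAddCommGroup F] {f : X → F}
    (hμ : IsCompact μ.support) (hf : Continuous f) : ∃ C, ∀ᵐ y ∂μ, ‖f y‖ ≤ C := by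
  obtain ⟨C, hC⟩ := hμ.exists_bound_of_continuousOn hf.continuousOn
  exact ⟨C, by filter_upwards [μ.support_mem_ae] with y hy using hC y hy⟩

variable [OpensMeasurableSpace X] [IsFiniteMeasure μ]

lemma integrable_of_isCompact_support (hμ : IsCompact μ.support) {f : X → ℝ}
    (hf : Continuous f) : Integrable f μ := by
  obtain ⟨C, hC⟩ := exists_ae_norm_le_of_isCompact_support hμ hf
  exact .of_bound hf.aestronglyMeasurable C hC

lemma hasFDerivAt_integral_of_isCompact_support {P : Type*} [NormedAddCommGroup P]
    [NormedSpace ℝ P] [LocallyCompactSpace P] (hμ : IsCompact μ.support) {F : P → X → ℝ}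
    {F' : P → X → P →L[ℝ] ℝ} {s : Set P} {p₀ : P} (hs : s ∈ 𝓝 p₀)
    (hF : ∀ p ∈ s, Continuous (F p))
    (hF' : ContinuousOn (fun q : P × X => F' q.1 q.2) (s ×ˢ Set.univ))
    (hderiv : ∀ p ∈ s, ∀ y, HasFDerivAt (F · y) (F' p y) p) :
    HasFDerivAt (fun p => ∫ y, F p y ∂μ) (∫ y, F' p₀ y ∂μ) p₀ := by
  obtain ⟨K, hK, hKs, hKc⟩ := local_compact_nhds hs
  obtain ⟨C, hC⟩ := (hKc.prod hμ).exists_bound_of_continuousOn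
    (hF'.mono (Set.prod_mono hKs (Set.subset_univ _)))
  have hF'₀ : Continuous (F' p₀) := continuousOn_univ.1 <|
    hF'.comp (by fun_prop : ContinuousOn (fun y => (p₀, y)) Set.univ)
      fun y _ => ⟨mem_of_mem_nhds hs, Set.mem_univ y⟩
  refine hasFDerivAt_integral_of_dominated_of_fderiv_le (bound := fun _ => C) hK
    (mem_of_superset hs fun p hp => (hF p hp).aestronglyMeasurable)
    (integrable_of_isCompact_support hμ (hF p₀ (mem_of_mem_nhds hs)))
    hF'₀.aestronglyMeasurable ?_ (integrable_const C)
    (Eventually.of_forall fun y p hp => hderiv p (hKs hp) y)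
  filter_upwards [μ.support_mem_ae] with y hy p hp using hC (p, y) ⟨hp, hy⟩

lemma hasDerivAt_integral_of_isCompact_support (hμ : IsCompact μ.support) {F F' : ℝ → X → ℝ}
    {s : Set ℝ} {t : ℝ} (hs : s ∈ 𝓝 t) (hF : ∀ r ∈ s, Continuous (F r))
    (hF' : ContinuousOn (fun q : ℝ × X => F' q.1 q.2) (s ×ˢ Set.univ))
    (hderiv : ∀ r ∈ s, ∀ y, HasDerivAt (F · y) (F' r y) r) :
    HasDerivAt (fun r => ∫ y, F r y ∂μ) (∫ y, F' t y ∂μ) t := by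
  have key := hasFDerivAt_integral_of_isCompact_support hμ hs hF
    (ContinuousLinearMap.toSpanSingletonCLE (𝕜 := ℝ) (E := ℝ).continuous.comp_continuousOn hF')
    fun r hr y => (hderiv r hr y).hasFDerivAt
  have hcomm := ContinuousLinearMap.toSpanSingletonCLE (𝕜 := ℝ) (E := ℝ).integral_comp_comm
    (μ := μ) (F' t)
  exact hasDerivAt_iff_hasFDerivAt.2 (key.congr_fderiv hcomm)

end ParametricIntegral

variable {n : ℕ}

section PartialDerivatives

/-- `D k` is the `k`-th partial derivative at `x` of `g`, which is differentiable there. -/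
def HasPartialDerivsAt (g : EuclideanSpace ℝ (Fin n) → ℝ) (D : Fin n → ℝ)
    (x : EuclideanSpace ℝ (Fin n)) : Prop :=
  HasFDerivAt g (∑ k, D k • EuclideanSpace.proj (𝕜 := ℝ) k) x

namespace HasPartialDerivsAt

variable {g g₁ g₂ : EuclideanSpace ℝ (Fin n) → ℝ} {D D₁ D₂ : Fin n → ℝ}
  {x : EuclideanSpace ℝ (Fin n)}

lemma of_hasFDerivAt {g' : EuclideanSpace ℝ (Fin n) →L[ℝ] ℝ} (h : HasFDerivAt g g' x)
    (hD : ∀ k, g' (EuclideanSpace.single k 1) = D k) : HasPartialDerivsAt g D x := by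
  have hg' : g' = ∑ k, D k • EuclideanSpace.proj (𝕜 := ℝ) k := by
    refine ContinuousLinearMap.coe_injective <|
      (EuclideanSpace.basisFun (Fin n) ℝ).toBasis.ext fun k => ?_
    simp [hD]
  exact h.congr_fderiv hg'

lemma congr (h : HasPartialDerivsAt g D₁ x) (hD : ∀ k, D₁ k = D₂ k) :
    HasPartialDerivsAt g D₂ x :=
  funext hD ▸ h

lemma const (c : ℝ) (x : EuclideanSpace ℝ (Fin n)) :
    HasPartialDerivsAt (fun _ => c) (fun _ => 0) x :=
  of_hasFDerivAt (hasFDerivAt_const c x) fun _ => rfl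

lemma coord (i : Fin n) (x : EuclideanSpace ℝ (Fin n)) :
    HasPartialDerivsAt (fun y => y i) (fun k => if i = k then 1 else 0) x :=
  of_hasFDerivAt (EuclideanSpace.proj (𝕜 := ℝ) i).hasFDerivAt fun k => by simp

lemma add (h₁ : HasPartialDerivsAt g₁ D₁ x) (h₂ : HasPartialDerivsAt g₂ D₂ x) :
    HasPartialDerivsAt (fun y => g₁ y + g₂ y) (fun k => D₁ k + D₂ k) x :=
  of_hasFDerivAt (HasFDerivAt.fun_add h₁ h₂) fun k => by simp

lemma sub (h₁ : HasPartialDerivsAt g₁ D₁ x) (h₂ : HasPartialDerivsAt g₂ D₂ x) :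
    HasPartialDerivsAt (fun y => g₁ y - g₂ y) (fun k => D₁ k - D₂ k) x :=
  of_hasFDerivAt (HasFDerivAt.fun_sub h₁ h₂) fun k => by simp

lemma mul (h₁ : HasPartialDerivsAt g₁ D₁ x) (h₂ : HasPartialDerivsAt g₂ D₂ x) :
    HasPartialDerivsAt (fun y => g₁ y * g₂ y) (fun k => g₁ x * D₂ k + D₁ k * g₂ x) x :=
  of_hasFDerivAt (HasFDerivAt.fun_mul h₁ h₂) fun k => by simp [mul_comm (g₂ x)]

lemma sum {ι : Type*} (s : Finset ι) {g : ι → EuclideanSpace ℝ (Fin n) → ℝ}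
    {D : ι → Fin n → ℝ} (h : ∀ i ∈ s, HasPartialDerivsAt (g i) (D i) x) :
    HasPartialDerivsAt (fun y => ∑ i ∈ s, g i y) (fun k => ∑ i ∈ s, D i k) x :=
  of_hasFDerivAt (HasFDerivAt.fun_sum h) fun k => by simp

lemma comp {φ : ℝ → ℝ} {φ' : ℝ} (hφ : HasDerivAt φ φ' (g x)) (h : HasPartialDerivsAt g D x) :
    HasPartialDerivsAt (fun y => φ (g y)) (fun k => φ' * D k) x :=
  of_hasFDerivAt (hφ.comp_hasFDerivAt x h) fun k => by simp

lemma div_const (h : HasPartialDerivsAt g D x) (c : ℝ) :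
    HasPartialDerivsAt (fun y => g y / c) (fun k => D k / c) x :=
  (h.comp ((hasDerivAt_id _).div_const c)).congr fun k => by simp [div_eq_inv_mul]

lemma div (h₁ : HasPartialDerivsAt g₁ D₁ x) (h₂ : HasPartialDerivsAt g₂ D₂ x) (hx : g₂ x ≠ 0) :
    HasPartialDerivsAt (fun y => g₁ y / g₂ y) (fun k => (D₁ k - g₁ x / g₂ x * D₂ k) / g₂ x) x :=
  (h₁.mul (h₂.comp (hasDerivAt_inv hx))).congr fun k => by field

lemma comp_sub_const {y : EuclideanSpace ℝ (Fin n)} (h : HasPartialDerivsAt g D (x - y)) :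
    HasPartialDerivsAt (fun x => g (x - y)) D x :=
  (hasFDerivAt_comp_sub y).2 h

lemma norm_sq (x : EuclideanSpace ℝ (Fin n)) :
    HasPartialDerivsAt (fun y => ‖y‖ ^ 2) (fun k => 2 * x k) x :=
  of_hasFDerivAt (hasStrictFDerivAt_norm_sq x).hasFDerivAt fun k => by
    simp [EuclideanSpace.inner_single_right]

lemma integral {X : Type*} [TopologicalSpace X] [SecondCountableTopology X] [MeasurableSpace X]
    [OpensMeasurableSpace X] {μ : Measure X} [IsFiniteMeasure μ] (hμ : IsCompact μ.support)
    {F : EuclideanSpace ℝ (Fin n) → X → ℝ} {F' : Fin n → EuclideanSpace ℝ (Fin n) → X → ℝ}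
    (hF : ∀ x, Continuous (F x))
    (hF' : ∀ k, Continuous fun q : EuclideanSpace ℝ (Fin n) × X => F' k q.1 q.2)
    (hderiv : ∀ x y, HasPartialDerivsAt (F · y) (F' · x y) x) (x : EuclideanSpace ℝ (Fin n)) :
    HasPartialDerivsAt (fun x => ∫ y, F x y ∂μ) (fun k => ∫ y, F' k x y ∂μ) x := by
  have hint (k : Fin n) : Integrable (F' k x) μ :=
    integrable_of_isCompact_support hμ ((hF' k).comp (by fun_prop : Continuous (x, ·)))
  refine (hasFDerivAt_integral_of_isCompact_support hμ univ_mem (fun x _ => hF x) ?_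
    fun x _ y => hderiv x y).congr_fderiv ?_
  · exact (continuous_finsetSum _ fun k _ => (hF' k).smul continuous_const).continuousOn
  · simp_rw [integral_finsetSum _ fun k _ => (hint k).smul_const (EuclideanSpace.proj (𝕜 := ℝ) k),
      integral_smul_const]

end HasPartialDerivsAt

lemma hessianMatrix_eq {g : EuclideanSpace ℝ (Fin n) → ℝ}
    {D : Fin n → EuclideanSpace ℝ (Fin n) → ℝ} {H : Fin n → Fin n → ℝ}
    {x : EuclideanSpace ℝ (Fin n)} (hg : ∀ y, HasPartialDerivsAt g (fun k => D k y) y)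
    (hD : ∀ j, HasPartialDerivsAt (D j) (H j) x) (i j : Fin n) :
    hessianMatrix n g x i j = H j i := by
  have hfderiv : fderiv ℝ g = fun y => ∑ k, D k y • EuclideanSpace.proj (𝕜 := ℝ) k :=
    funext fun y => HasFDerivAt.fderiv (hg y)
  have hfderiv₂ := HasFDerivAt.fun_sum (u := Finset.univ) fun k _ =>
    HasFDerivAt.smul_const (hD k) (EuclideanSpace.proj (𝕜 := ℝ) k)
  rw [hessianMatrix, iteratedFDeriv_two_apply, hfderiv, hfderiv₂.fderiv]
  simp

lemma traceFreeHessianHSsq_eq (g : EuclideanSpace ℝ (Fin n) → ℝ)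
    (x : EuclideanSpace ℝ (Fin n)) :
    traceFreeHessianHSsq n g x =
      ∑ i, ∑ j, hessianMatrix n g x i j ^ 2 - laplacian n g x ^ 2 / n := by
  rcases eq_or_ne n 0 with rfl | hn
  · simp [traceFreeHessianHSsq]
  have hentry (c : ℝ) (i j : Fin n) :
      (hessianMatrix n g x i j - c * (if i = j then 1 else 0)) ^ 2 =
        hessianMatrix n g x i j ^ 2 -
          (if i = j then 2 * c * hessianMatrix n g x i j - c ^ 2 else 0) := by
    split_ifs <;> ring
  have htrace (c : ℝ) : ∑ i, (2 * c * hessianMatrix n g x i i - c ^ 2) =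
      2 * c * laplacian n g x - n * c ^ 2 := by
    simp [laplacian, Finset.mul_sum]
  simp_rw [traceFreeHessianHSsq, hentry, Finset.sum_sub_distrib, Finset.sum_ite_eq,
    Finset.mem_univ, if_true, htrace]
  field

end PartialDerivatives

section HeatKernel

/-- The fundamental solution `(4πt)^(-n/2) exp(-‖z‖² / (4t))` of the heat equation on `ℝⁿ`. -/
noncomputable def heatKernel (t : ℝ) (z : EuclideanSpace ℝ (Fin n)) : ℝ :=
  (4 * π * t) ^ (-(n : ℝ) / 2) * Real.exp (-‖z‖ ^ 2 / (4 * t))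

lemma heatKernel_pos {t : ℝ} (ht : 0 < t) (z : EuclideanSpace ℝ (Fin n)) : 0 < heatKernel t z := by
  unfold heatKernel
  positivity

@[fun_prop]
lemma continuous_heatKernel (t : ℝ) :
    Continuous (heatKernel t : EuclideanSpace ℝ (Fin n) → ℝ) := by
  unfold heatKernel
  fun_prop

lemma continuousAt_heatKernel {q : ℝ × EuclideanSpace ℝ (Fin n)} (hq : 0 < q.1) :
    ContinuousAt (fun q : ℝ × EuclideanSpace ℝ (Fin n) => heatKernel q.1 q.2) q := by
  have h₄ : 4 * q.1 ≠ 0 := by positivity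
  have hπ : 4 * π * q.1 ≠ 0 := by positivity
  unfold heatKernel
  fun_prop (disch := first | assumption | exact .inl hπ)

lemma hasPartialDerivsAt_heatKernel (t : ℝ) (z : EuclideanSpace ℝ (Fin n)) :
    HasPartialDerivsAt (heatKernel t) (fun k => -(z k / (2 * t)) * heatKernel t z) z := by
  have hexponent := ((HasPartialDerivsAt.norm_sq z).comp (hasDerivAt_neg _)).div_const (4 * t)
  refine ((HasPartialDerivsAt.const ((4 * π * t) ^ (-(n : ℝ) / 2)) z).mul
    (hexponent.comp (Real.hasDerivAt_exp _))).congr fun k => ?_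
  rw [heatKernel]
  ring

lemma hasDerivAt_heatKernel {t : ℝ} (ht : 0 < t) (z : EuclideanSpace ℝ (Fin n)) :
    HasDerivAt (heatKernel · z)
      ((∑ k, (z k ^ 2 / (4 * t ^ 2) - 1 / (2 * t))) * heatKernel t z) t := by
  have h₄ : 4 * t ≠ 0 := by positivity
  have hπ : 4 * π * t ≠ 0 := by positivity
  have hpow := ((hasDerivAt_id t).const_mul (4 * π)).rpow_const (p := -(n : ℝ) / 2) (.inl hπ)
  have hexp := (((hasDerivAt_id t).const_mul 4).fun_inv h₄).const_mul (-‖z‖ ^ 2) |>.exp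
  refine (hpow.mul hexp).congr_deriv ?_
  have hsum : ∑ k, (z k ^ 2 / (4 * t ^ 2) - 1 / (2 * t)) = ‖z‖ ^ 2 / (4 * t ^ 2) - n / (2 * t) := by
    rw [Finset.sum_sub_distrib, ← Finset.sum_div, EuclideanSpace.real_norm_sq_eq]
    simp
    ring
  rw [hsum]
  simp only [id, heatKernel, div_eq_mul_inv]
  rw [Real.rpow_sub_one (by positivity)]
  field

lemma integral_heatKernel {t : ℝ} (ht : 0 < t) :
    ∫ z : EuclideanSpace ℝ (Fin n), heatKernel t z = 1 := by
  have hgauss := GaussianFourier.integral_rexp_neg_mul_sq_norm (V := EuclideanSpace ℝ (Fin n))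
    (b := 1 / (4 * t)) (by positivity)
  have hexponent (z : EuclideanSpace ℝ (Fin n)) :
      -‖z‖ ^ 2 / (4 * t) = -(1 / (4 * t)) * ‖z‖ ^ 2 := by ring
  simp_rw [heatKernel, hexponent, integral_const_mul, hgauss, finrank_euclideanSpace_fin]
  rw [show π / (1 / (4 * t)) = 4 * π * t by field, ← Real.rpow_add (by positivity)]
  simp [neg_div]

lemma integrable_heatKernel {t : ℝ} (ht : 0 < t) :
    Integrable (heatKernel t : EuclideanSpace ℝ (Fin n) → ℝ) :=
  integrable_of_integral_eq_one (integral_heatKernel ht)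

lemma abs_log_heatKernel_le {t R : ℝ} (ht : 0 < t) {x y : EuclideanSpace ℝ (Fin n)}
    (hy : ‖y‖ ≤ R) :
    |Real.log (heatKernel t (x - y))| ≤
      |n / 2 * Real.log (4 * π * t)| + (‖x‖ + R) ^ 2 / (4 * t) := by
  have hxy : ‖x - y‖ ≤ ‖x‖ + R := (norm_sub_le x y).trans (by gcongr)
  rw [heatKernel, Real.log_mul (by positivity) (by positivity), Real.log_exp,
    Real.log_rpow (by positivity)]
  refine (abs_add_le _ _).trans (add_le_add (le_of_eq ?_) ?_)
  · rw [← abs_neg, neg_div, neg_mul, neg_neg]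
  · rw [neg_div, abs_neg, abs_of_nonneg (by positivity)]
    gcongr

lemma heatKernel_sub_le {t a b R : ℝ} (ha : 0 < a) (ht : t ∈ Set.Icc a b)
    {x y : EuclideanSpace ℝ (Fin n)} (hy : ‖y‖ ≤ R) :
    heatKernel t (x - y) ≤
      (4 * π * a) ^ (-(n : ℝ) / 2) * Real.exp (-((‖x‖ ^ 2 / 2 - R ^ 2) / (4 * b))) := by
  have hx : ‖x‖ ≤ ‖x - y‖ + R := (norm_le_norm_sub_add x y).trans (by gcongr)
  have hb : 0 < b := ha.trans_le (ht.1.trans ht.2)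
  have hxy : ‖x‖ ^ 2 / 2 - R ^ 2 ≤ ‖x - y‖ ^ 2 := by
    nlinarith [norm_nonneg x, norm_nonneg (x - y), sq_nonneg (‖x - y‖ - R)]
  have htpos : 0 < t := ha.trans_le ht.1
  have hpow : (4 * π * t) ^ (-(n : ℝ) / 2) ≤ (4 * π * a) ^ (-(n : ℝ) / 2) :=
    Real.rpow_le_rpow_of_nonpos (by positivity) (by gcongr; exact ht.1)
      (div_nonpos_of_nonpos_of_nonneg (by simp) zero_le_two)
  have hexponent : (‖x‖ ^ 2 / 2 - R ^ 2) / (4 * b) ≤ ‖x - y‖ ^ 2 / (4 * t) :=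
    calc (‖x‖ ^ 2 / 2 - R ^ 2) / (4 * b) ≤ ‖x - y‖ ^ 2 / (4 * b) := by gcongr
      _ ≤ ‖x - y‖ ^ 2 / (4 * t) := by gcongr; exact ht.2
  refine mul_le_mul hpow (Real.exp_le_exp.2 ?_) (by positivity) (by positivity)
  rw [neg_div]
  exact neg_le_neg hexponent

end HeatKernel

section HeatMoment

variable {μ : Measure (EuclideanSpace ℝ (Fin n))} {p : EuclideanSpace ℝ (Fin n) → ℝ} {t : ℝ}

/-- The solution of the heat equation whose initial datum is the (signed) measure `p μ`. -/
noncomputable def heatMoment (μ : Measure (EuclideanSpace ℝ (Fin n)))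
    (p : EuclideanSpace ℝ (Fin n) → ℝ) (t : ℝ) (x : EuclideanSpace ℝ (Fin n)) : ℝ :=
  ∫ y, heatKernel t (x - y) * p y ∂μ

/-- The solution of the heat equation whose initial datum is the measure `μ`. -/
noncomputable def heatFlow (μ : Measure (EuclideanSpace ℝ (Fin n))) :
    ℝ → EuclideanSpace ℝ (Fin n) → ℝ :=
  heatMoment μ fun _ => 1

lemma heatFlow_eq_integral (μ : Measure (EuclideanSpace ℝ (Fin n))) (t : ℝ)
    (x : EuclideanSpace ℝ (Fin n)) : heatFlow μ t x = ∫ y, heatKernel t (x - y) ∂μ := by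
  simp [heatFlow, heatMoment]

variable [IsFiniteMeasure μ]

lemma integrable_heatKernel_mul (hμ : IsCompact μ.support) (hp : Continuous p) (t : ℝ)
    (x : EuclideanSpace ℝ (Fin n)) : Integrable (fun y => heatKernel t (x - y) * p y) μ :=
  integrable_of_isCompact_support hμ (by fun_prop)

lemma integrable_heatKernel_sub (hμ : IsCompact μ.support) (t : ℝ)
    (x : EuclideanSpace ℝ (Fin n)) : Integrable (fun y => heatKernel t (x - y)) μ :=
  integrable_of_isCompact_support hμ (by fun_prop)

lemma hasPartialDerivsAt_heatMoment (hμ : IsCompact μ.support) (hp : Continuous p) (t : ℝ)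
    (x : EuclideanSpace ℝ (Fin n)) :
    HasPartialDerivsAt (heatMoment μ p t)
      (fun k => (heatMoment μ (fun y => y k * p y) t x - x k * heatMoment μ p t x) / (2 * t))
      x := by
  refine (HasPartialDerivsAt.integral hμ (fun x => by fun_prop) (fun k => by fun_prop)
    (fun x y => (hasPartialDerivsAt_heatKernel t (x - y)).comp_sub_const.mul
      (HasPartialDerivsAt.const (p y) x)) x).congr fun k => ?_
  have hsplit (y : EuclideanSpace ℝ (Fin n)) :
      heatKernel t (x - y) * 0 + -((x - y) k / (2 * t)) * heatKernel t (x - y) * p y =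
      (heatKernel t (x - y) * (y k * p y) - x k * (heatKernel t (x - y) * p y)) / (2 * t) := by
    rw [PiLp.sub_apply]
    ring
  simp_rw [hsplit, integral_div, heatMoment]
  rw [integral_sub (integrable_heatKernel_mul hμ (by fun_prop) t x)
    ((integrable_heatKernel_mul hμ hp t x).const_mul _), integral_const_mul]

lemma continuous_heatMoment (hμ : IsCompact μ.support) (hp : Continuous p) (t : ℝ) :
    Continuous (heatMoment μ p t) :=
  continuous_iff_continuousAt.2 fun x =>
    HasFDerivAt.continuousAt (hasPartialDerivsAt_heatMoment hμ hp t x)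

lemma continuous_heatFlow (hμ : IsCompact μ.support) (t : ℝ) : Continuous (heatFlow μ t) :=
  continuous_heatMoment hμ continuous_const t

lemma hasDerivAt_heatMoment (hμ : IsCompact μ.support) (hp : Continuous p) (ht : 0 < t)
    (x : EuclideanSpace ℝ (Fin n)) :
    HasDerivAt (heatMoment μ p · x)
      (∑ k, ((heatMoment μ (fun y => y k * (y k * p y)) t x
          - 2 * x k * heatMoment μ (fun y => y k * p y) t x + x k ^ 2 * heatMoment μ p t x)
            / (4 * t ^ 2) - heatMoment μ p t x / (2 * t))) t := by
  refine (hasDerivAt_integral_of_isCompact_support hμ (Ioi_mem_nhds ht)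
    (F' := fun r y =>
      (∑ k, ((x - y) k ^ 2 / (4 * r ^ 2) - 1 / (2 * r))) * heatKernel r (x - y) * p y)
    (fun r _ => by fun_prop) (fun q hq => ContinuousAt.continuousWithinAt ?_)
    fun r hr y => (hasDerivAt_heatKernel hr (x - y)).mul_const (p y)).congr_deriv ?_
  · have hq₀ : q.1 ≠ 0 := (Set.mem_Ioi.1 hq.1).ne'
    have hkernel :
        ContinuousAt (fun q : ℝ × EuclideanSpace ℝ (Fin n) => heatKernel q.1 (x - q.2)) q :=
      (continuousAt_heatKernel (q := (q.1, x - q.2)) hq.1).comp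
        (f := fun q : ℝ × EuclideanSpace ℝ (Fin n) => (q.1, x - q.2)) (by fun_prop)
    fun_prop (disch := simpa)
  have hsplit (y : EuclideanSpace ℝ (Fin n)) :
      (∑ k, ((x - y) k ^ 2 / (4 * t ^ 2) - 1 / (2 * t))) * heatKernel t (x - y) * p y =
        ∑ k, ((heatKernel t (x - y) * (y k * (y k * p y))
          - 2 * x k * (heatKernel t (x - y) * (y k * p y)) + x k ^ 2 * (heatKernel t (x - y) * p y))
            / (4 * t ^ 2) - heatKernel t (x - y) * p y / (2 * t)) := by
    simp_rw [Finset.sum_mul, PiLp.sub_apply]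
    exact Finset.sum_congr rfl fun k _ => by ring
  have hint {q : EuclideanSpace ℝ (Fin n) → ℝ} (hq : Continuous q) :
      Integrable (fun y => heatKernel t (x - y) * q y) μ := integrable_heatKernel_mul hμ hq t x
  have h₀ := hint hp
  have h₁ (k : Fin n) := (hint (q := fun y => y k * p y) (by fun_prop)).const_mul (2 * x k)
  have h₂ (k : Fin n) := hint (q := fun y => y k * (y k * p y)) (by fun_prop)
  have h₂₁₀ (k : Fin n) := ((h₂ k).sub' (h₁ k)).fun_add (h₀.const_mul (x k ^ 2))
  simp_rw [hsplit]
  rw [integral_finsetSum _ fun k _ => ((h₂₁₀ k).div_const (4 * t ^ 2)).sub' (h₀.div_const (2 * t))]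
  refine Finset.sum_congr rfl fun k _ => ?_
  rw [integral_sub ((h₂₁₀ k).div_const _) (h₀.div_const _), integral_div, integral_div,
    integral_add ((h₂ k).sub' (h₁ k)) (h₀.const_mul _), integral_sub (h₂ k) (h₁ k),
    integral_const_mul, integral_const_mul]
  rfl

end HeatMoment

section Tame

/-- `G` is continuous in space at every positive time, and grows at most exponentially in space,
uniformly for times in compact subintervals of `(0, ∞)`. Such functions are integrable against
Gaussians, and form an algebra. -/
structure Tame (G : ℝ → EuclideanSpace ℝ (Fin n) → ℝ) : Prop where
  continuous : ∀ ⦃t⦄, 0 < t → Continuous (G t)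
  growth : ∀ ⦃a b⦄, 0 < a → ∃ C, ∀ t ∈ Set.Icc a b, ∀ x, |G t x| ≤ Real.exp (C * (1 + ‖x‖))

namespace Tame

variable {G G₁ G₂ : ℝ → EuclideanSpace ℝ (Fin n) → ℝ}

lemma of_abs_le (hG : Tame G) (hcont : ∀ ⦃t⦄, 0 < t → Continuous (G₁ t))
    (hle : ∀ ⦃t⦄, 0 < t → ∀ x, |G₁ t x| ≤ G t x) : Tame G₁ where
  continuous := hcont
  growth a b ha := by
    obtain ⟨C, hC⟩ := hG.growth (b := b) ha
    exact ⟨C, fun t ht x => (hle (ha.trans_le ht.1) x).trans <| (le_abs_self _).trans (hC t ht x)⟩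

lemma of_time {φ : ℝ → ℝ} (hφ : ContinuousOn φ (Set.Ioi 0)) :
    Tame fun t (_ : EuclideanSpace ℝ (Fin n)) => φ t where
  continuous _ _ := continuous_const
  growth a b ha := by
    obtain ⟨C, hC⟩ := isCompact_Icc.exists_bound_of_continuousOn
      (hφ.mono fun t (ht : t ∈ Set.Icc a b) => ha.trans_le ht.1)
    refine ⟨C, fun t ht x => (hC t ht).trans ?_⟩
    have hC₀ : 0 ≤ C := (norm_nonneg _).trans (hC t ht)
    calc C ≤ Real.exp C := by linarith [Real.add_one_le_exp C]
      _ ≤ Real.exp (C * (1 + ‖x‖)) := by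
        gcongr
        nlinarith [norm_nonneg x]

lemma const (c : ℝ) : Tame fun _ (_ : EuclideanSpace ℝ (Fin n)) => c :=
  of_time continuousOn_const

lemma norm : Tame fun _ (x : EuclideanSpace ℝ (Fin n)) => ‖x‖ where
  continuous _ _ := continuous_norm
  growth _ _ _ := ⟨1, fun _ _ x => by
    rw [abs_norm]
    linarith [Real.add_one_le_exp (1 * (1 + ‖x‖))]⟩

lemma coord (i : Fin n) : Tame fun _ (x : EuclideanSpace ℝ (Fin n)) => x i :=
  norm.of_abs_le (fun _ _ => by fun_prop) fun _ _ x => PiLp.norm_apply_le x i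

lemma add (h₁ : Tame G₁) (h₂ : Tame G₂) : Tame fun t x => G₁ t x + G₂ t x where
  continuous _ ht := (h₁.continuous ht).add (h₂.continuous ht)
  growth a b ha := by
    obtain ⟨C₁, hC₁⟩ := h₁.growth (b := b) ha
    obtain ⟨C₂, hC₂⟩ := h₂.growth (b := b) ha
    refine ⟨max C₁ C₂ + 1, fun t ht x => ?_⟩
    have hx : 0 ≤ ‖x‖ := norm_nonneg x
    calc |G₁ t x + G₂ t x| ≤ |G₁ t x| + |G₂ t x| := abs_add_le _ _
      _ ≤ Real.exp (C₁ * (1 + ‖x‖)) + Real.exp (C₂ * (1 + ‖x‖)) := by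
        gcongr
        exacts [hC₁ t ht x, hC₂ t ht x]
      _ ≤ 2 * Real.exp (max C₁ C₂ * (1 + ‖x‖)) := by
        rw [two_mul]
        gcongr
        exacts [le_max_left _ _, le_max_right _ _]
      _ ≤ Real.exp (1 + ‖x‖) * Real.exp (max C₁ C₂ * (1 + ‖x‖)) := by
        gcongr
        linarith [Real.add_one_le_exp (1 + ‖x‖)]
      _ = Real.exp ((max C₁ C₂ + 1) * (1 + ‖x‖)) := by
        rw [← Real.exp_add]
        ring_nf

lemma mul (h₁ : Tame G₁) (h₂ : Tame G₂) : Tame fun t x => G₁ t x * G₂ t x where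
  continuous _ ht := (h₁.continuous ht).mul (h₂.continuous ht)
  growth a b ha := by
    obtain ⟨C₁, hC₁⟩ := h₁.growth (b := b) ha
    obtain ⟨C₂, hC₂⟩ := h₂.growth (b := b) ha
    refine ⟨C₁ + C₂, fun t ht x => ?_⟩
    rw [abs_mul, add_mul, Real.exp_add]
    gcongr
    exacts [hC₁ t ht x, hC₂ t ht x]

lemma neg (h : Tame G) : Tame fun t x => -G t x := by
  simpa using (const (-1)).mul h

lemma sub (h₁ : Tame G₁) (h₂ : Tame G₂) : Tame fun t x => G₁ t x - G₂ t x := by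
  simpa only [sub_eq_add_neg] using h₁.add h₂.neg

lemma pow (h : Tame G) (m : ℕ) : Tame fun t x => G t x ^ m := by
  induction m with
  | zero => simpa using const 1
  | succ m ih => simpa only [pow_succ] using ih.mul h

lemma sum {ι : Type*} (s : Finset ι) {G : ι → ℝ → EuclideanSpace ℝ (Fin n) → ℝ}
    (h : ∀ i ∈ s, Tame (G i)) : Tame fun t x => ∑ i ∈ s, G i t x := by
  classical
  induction s using Finset.induction_on with
  | empty => simpa using const 0
  | insert i s hi ih =>
    simp_rw [Finset.sum_insert hi]
    exact (h i (s.mem_insert_self i)).add (ih fun j hj => h j (Finset.mem_insert_of_mem hj))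

lemma div_const_mul_time (h : Tame G) {c : ℝ} (hc : c ≠ 0) : Tame fun t x => G t x / (c * t) := by
  have hinv : ContinuousOn (fun t : ℝ => (c * t)⁻¹) (Set.Ioi 0) :=
    ContinuousOn.inv₀ (by fun_prop) fun t ht => mul_ne_zero hc (Set.mem_Ioi.1 ht).ne'
  simpa only [div_eq_mul_inv] using h.mul (of_time hinv)

end Tame

end Tame

section Posterior

variable {μ : Measure (EuclideanSpace ℝ (Fin n))} [IsFiniteMeasure μ] [NeZero μ]
  {p q : EuclideanSpace ℝ (Fin n) → ℝ} {t : ℝ} {x : EuclideanSpace ℝ (Fin n)}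

lemma heatFlow_pos (hμ : IsCompact μ.support) (ht : 0 < t) (x : EuclideanSpace ℝ (Fin n)) :
    0 < heatFlow μ t x := by
  rw [heatFlow_eq_integral, integral_pos_iff_support_of_nonneg
    (fun y => (heatKernel_pos ht (x - y)).le) (integrable_heatKernel_sub hμ t x)]
  have hsupp : Function.support (fun y => heatKernel t (x - y)) = Set.univ :=
    Set.eq_univ_of_forall fun y => (heatKernel_pos ht (x - y)).ne'
  simp [hsupp, NeZero.ne μ]

/-- The conditional expectation of `p(Y)` given `Y + √(2t) Z = x`, where `Y` has law `μ`, normalized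
to total mass one, and `Z` is an independent standard Gaussian vector. -/
noncomputable def posteriorMean (μ : Measure (EuclideanSpace ℝ (Fin n)))
    (p : EuclideanSpace ℝ (Fin n) → ℝ) (t : ℝ) (x : EuclideanSpace ℝ (Fin n)) : ℝ :=
  heatMoment μ p t x / heatFlow μ t x

/-- The covariance of `p(Y)` and `q(Y)` under the conditional law of `posteriorMean`. -/
noncomputable def posteriorCov (μ : Measure (EuclideanSpace ℝ (Fin n)))
    (p q : EuclideanSpace ℝ (Fin n) → ℝ) (t : ℝ) (x : EuclideanSpace ℝ (Fin n)) : ℝ :=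
  posteriorMean μ (fun y => p y * q y) t x - posteriorMean μ p t x * posteriorMean μ q t x

lemma tame_posteriorMean (hμ : IsCompact μ.support) (hp : Continuous p) :
    Tame (posteriorMean μ p) := by
  obtain ⟨C, hC⟩ := exists_ae_norm_le_of_isCompact_support hμ hp
  refine (Tame.const C).of_abs_le (fun t ht => (continuous_heatMoment hμ hp t).div
    (continuous_heatMoment hμ continuous_const t) fun x => (heatFlow_pos hμ ht x).ne')
    fun t ht x => ?_
  have hbound : |heatMoment μ p t x| ≤ C * heatFlow μ t x := by
    rw [heatFlow_eq_integral, ← integral_const_mul, heatMoment, ← Real.norm_eq_abs]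
    refine norm_integral_le_of_norm_le ((integrable_heatKernel_sub hμ t x).const_mul C) ?_
    filter_upwards [hC] with y hy
    rw [norm_mul, Real.norm_of_nonneg (heatKernel_pos ht _).le, mul_comm]
    exact mul_le_mul_of_nonneg_right hy (heatKernel_pos ht _).le
  have hu := heatFlow_pos hμ ht x
  rwa [posteriorMean, abs_div, abs_of_pos hu, div_le_iff₀ hu]

lemma tame_posteriorCov (hμ : IsCompact μ.support) (hp : Continuous p) (hq : Continuous q) :
    Tame (posteriorCov μ p q) :=
  (tame_posteriorMean hμ (hp.mul hq)).sub
    ((tame_posteriorMean hμ hp).mul (tame_posteriorMean hμ hq))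

lemma hasPartialDerivsAt_posteriorMean (hμ : IsCompact μ.support) (hp : Continuous p) (ht : 0 < t)
    (x : EuclideanSpace ℝ (Fin n)) :
    HasPartialDerivsAt (posteriorMean μ p t)
      (fun k => posteriorCov μ (fun y => y k) p t x / (2 * t)) x := by
  have hu := (heatFlow_pos hμ ht x).ne'
  refine ((hasPartialDerivsAt_heatMoment hμ hp t x).div
    (hasPartialDerivsAt_heatMoment hμ continuous_const t x) hu).congr fun k => ?_
  simp only [heatFlow, posteriorCov, posteriorMean, mul_one] at hu ⊢
  field

lemma hasPartialDerivsAt_posteriorCov (hμ : IsCompact μ.support) (hp : Continuous p)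
    (hq : Continuous q) (ht : 0 < t) (x : EuclideanSpace ℝ (Fin n)) :
    HasPartialDerivsAt (posteriorCov μ p q t)
      (fun k => (posteriorCov μ (fun y => y k) (fun y => p y * q y) t x -
        (posteriorMean μ p t x * posteriorCov μ (fun y => y k) q t x +
          posteriorCov μ (fun y => y k) p t x * posteriorMean μ q t x)) / (2 * t)) x :=
  ((hasPartialDerivsAt_posteriorMean hμ (p := fun y => p y * q y) (by fun_prop) ht x).sub
    ((hasPartialDerivsAt_posteriorMean hμ hp ht x).mul
      (hasPartialDerivsAt_posteriorMean hμ hq ht x))).congr fun k => by ring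

lemma hasDerivAt_posteriorMean (hμ : IsCompact μ.support) (hp : Continuous p) (ht : 0 < t)
    (x : EuclideanSpace ℝ (Fin n)) :
    HasDerivAt (posteriorMean μ p · x)
      (∑ k, (posteriorCov μ (fun y => y k * y k) p t x
        - 2 * x k * posteriorCov μ (fun y => y k) p t x) / (4 * t ^ 2)) t := by
  have hu := (heatFlow_pos hμ ht x).ne'
  refine ((hasDerivAt_heatMoment hμ hp ht x).div
    (hasDerivAt_heatMoment hμ continuous_const ht x) hu).congr_deriv ?_
  rw [Finset.sum_mul, Finset.mul_sum, ← Finset.sum_sub_distrib, Finset.sum_div]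
  refine Finset.sum_congr rfl fun k _ => ?_
  simp only [heatFlow, posteriorCov, posteriorMean, mul_one, mul_assoc] at hu ⊢
  field

/-- The `i`-th partial derivative of `log u`, `u = heatFlow μ`, in the form given by Tweedie's
formula `∇ log u = (E[Y | x] - x) / (2t)`. -/
noncomputable def logGrad (μ : Measure (EuclideanSpace ℝ (Fin n))) (i : Fin n) (t : ℝ)
    (x : EuclideanSpace ℝ (Fin n)) : ℝ :=
  (posteriorMean μ (fun y => y i) t x - x i) / (2 * t)

/-- The `k`-th partial derivative of `logGrad μ i`, that is, the `(i, k)` entry of the Hessian of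
`log u`. -/
noncomputable def logHess (μ : Measure (EuclideanSpace ℝ (Fin n))) (i k : Fin n) (t : ℝ)
    (x : EuclideanSpace ℝ (Fin n)) : ℝ :=
  (posteriorCov μ (fun y => y k) (fun y => y i) t x / (2 * t) - if i = k then 1 else 0) / (2 * t)

lemma tame_logGrad (hμ : IsCompact μ.support) (i : Fin n) : Tame (logGrad μ i) :=
  ((tame_posteriorMean hμ (by fun_prop)).sub (.coord i)).div_const_mul_time two_ne_zero

lemma tame_logHess (hμ : IsCompact μ.support) (i k : Fin n) : Tame (logHess μ i k) :=
  (((tame_posteriorCov hμ (by fun_prop) (by fun_prop)).div_const_mul_time two_ne_zero).sub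
    (.const _)).div_const_mul_time two_ne_zero

lemma hasPartialDerivsAt_logGrad (hμ : IsCompact μ.support) (i : Fin n) (ht : 0 < t)
    (x : EuclideanSpace ℝ (Fin n)) :
    HasPartialDerivsAt (logGrad μ i t) (fun k => logHess μ i k t x) x :=
  ((hasPartialDerivsAt_posteriorMean hμ (by fun_prop) ht x).sub (.coord i x)).div_const (2 * t)

lemma hasPartialDerivsAt_heatFlow (hμ : IsCompact μ.support) (ht : 0 < t)
    (x : EuclideanSpace ℝ (Fin n)) :
    HasPartialDerivsAt (heatFlow μ t) (fun k => logGrad μ k t x * heatFlow μ t x) x := by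
  have hu := (heatFlow_pos hμ ht x).ne'
  refine (hasPartialDerivsAt_heatMoment hμ continuous_const t x).congr fun k => ?_
  simp only [heatFlow, logGrad, posteriorMean, mul_one] at hu ⊢
  field

lemma hasDerivAt_heatFlow (hμ : IsCompact μ.support) (ht : 0 < t)
    (x : EuclideanSpace ℝ (Fin n)) :
    HasDerivAt (heatFlow μ · x)
      ((∑ k, (logHess μ k k t x + logGrad μ k t x ^ 2)) * heatFlow μ t x) t := by
  have hu := (heatFlow_pos hμ ht x).ne'
  refine (hasDerivAt_heatMoment hμ continuous_const ht x).congr_deriv ?_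
  rw [Finset.sum_mul]
  refine Finset.sum_congr rfl fun k _ => ?_
  simp only [heatFlow, logHess, logGrad, posteriorCov, posteriorMean, mul_one, if_true] at hu ⊢
  field

lemma hasPartialDerivsAt_log_heatFlow (hμ : IsCompact μ.support) (ht : 0 < t)
    (x : EuclideanSpace ℝ (Fin n)) :
    HasPartialDerivsAt (fun y => Real.log (heatFlow μ t y)) (fun k => logGrad μ k t x) x := by
  have hu := (heatFlow_pos hμ ht x).ne'
  exact ((hasPartialDerivsAt_heatFlow hμ ht x).comp (Real.hasDerivAt_log hu)).congr
    fun k => by field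

end Posterior

section NormalizedHeatFlow

variable {μ : Measure (EuclideanSpace ℝ (Fin n))} [IsProbabilityMeasure μ] {t : ℝ}

lemma heatFlow_mem_Icc (hμ : IsCompact μ.support) {x : EuclideanSpace ℝ (Fin n)} {a b : ℝ}
    (h : ∀ᵐ y ∂μ, heatKernel t (x - y) ∈ Set.Icc a b) : heatFlow μ t x ∈ Set.Icc a b :=
  heatFlow_eq_integral μ t x ▸
    (convex_Icc a b).integral_mem isClosed_Icc h (integrable_heatKernel_sub hμ t x)

lemma integral_heatFlow (ht : 0 < t) : ∫ x, heatFlow μ t x = 1 := by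
  simp_rw [heatFlow_eq_integral]
  have hint : Integrable (fun q : EuclideanSpace ℝ (Fin n) × EuclideanSpace ℝ (Fin n) =>
      heatKernel t (q.1 - q.2)) (volume.prod μ) :=
    (measurePreserving_sub_prod volume μ).integrable_comp_of_integrable
      ((integrable_heatKernel ht).comp_fst μ)
  rw [integral_integral_swap hint]
  simp [integral_sub_right_eq_self (heatKernel t), integral_heatKernel ht]

lemma tame_log_heatFlow (hμ : IsCompact μ.support) :
    Tame fun t x => Real.log (heatFlow μ t x) := by
  obtain ⟨R, hR⟩ := exists_ae_norm_le_of_isCompact_support hμ continuous_id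
  have hbound : Tame fun t (x : EuclideanSpace ℝ (Fin n)) =>
      |n / 2 * Real.log (4 * π * t)| + (‖x‖ + R) ^ 2 / (4 * t) := by
    have hlog : ContinuousOn (fun t => |n / 2 * Real.log (4 * π * t)|) (Set.Ioi 0) :=
      (continuousOn_const.mul <| ContinuousOn.log (by fun_prop)
        fun t (ht : 0 < t) => by positivity).abs
    exact (Tame.of_time hlog).add
      (((Tame.norm.add (.const R)).pow 2).div_const_mul_time four_ne_zero)
  refine hbound.of_abs_le (fun t ht => (continuous_heatFlow hμ t).log
    fun x => (heatFlow_pos hμ ht x).ne') fun t ht x => ?_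
  set A := |n / 2 * Real.log (4 * π * t)| + (‖x‖ + R) ^ 2 / (4 * t)
  have hmem : heatFlow μ t x ∈ Set.Icc (Real.exp (-A)) (Real.exp A) := by
    refine heatFlow_mem_Icc hμ ?_
    filter_upwards [hR] with y hy
    have hK := heatKernel_pos ht (x - y)
    rw [Set.mem_Icc, ← Real.le_log_iff_exp_le hK, ← Real.log_le_iff_le_exp hK]
    exact abs_le.1 (abs_log_heatKernel_le ht hy)
  have hu := heatFlow_pos hμ ht x
  rwa [Set.mem_Icc, ← Real.le_log_iff_exp_le hu, ← Real.log_le_iff_le_exp hu, ← abs_le] at hmem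

end NormalizedHeatFlow

section IntegralAgainstHeatFlow

variable {μ : Measure (EuclideanSpace ℝ (Fin n))} [IsProbabilityMeasure μ]
  {G G' : ℝ → EuclideanSpace ℝ (Fin n) → ℝ} {t : ℝ}

lemma Tame.exists_abs_mul_heatFlow_le (hG : Tame G) (hμ : IsCompact μ.support) {a b : ℝ}
    (ha : 0 < a) :
    ∃ A, ∀ t ∈ Set.Icc a b, ∀ x, |G t x * heatFlow μ t x| ≤ A * heatKernel (4 * b) x := by
  obtain ⟨R, hR⟩ := exists_ae_norm_le_of_isCompact_support hμ continuous_id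
  obtain ⟨C, hC⟩ := hG.growth (b := b) ha
  set K := (4 * π * a) ^ (-(n : ℝ) / 2)
  set K' := (4 * π * (4 * b)) ^ (-(n : ℝ) / 2)
  refine ⟨K * Real.exp (R ^ 2 / (4 * b) + C + 4 * b * C ^ 2) / K', fun t ht x => ?_⟩
  have ht₀ : 0 < t := ha.trans_le ht.1
  have hb : 0 < b := ht₀.trans_le ht.2
  have hu : heatFlow μ t x ≤ K * Real.exp (-((‖x‖ ^ 2 / 2 - R ^ 2) / (4 * b))) :=
    (heatFlow_mem_Icc hμ (a := 0) <| by
      filter_upwards [hR] with y hy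
      exact ⟨(heatKernel_pos ht₀ _).le, heatKernel_sub_le ha ht hy⟩).2
  have hsq : C * ‖x‖ ≤ ‖x‖ ^ 2 / (16 * b) + 4 * b * C ^ 2 := by
    have hgap :
        ‖x‖ ^ 2 / (16 * b) + 4 * b * C ^ 2 - C * ‖x‖ = (‖x‖ - 8 * b * C) ^ 2 / (16 * b) := by field
    linarith [show 0 ≤ (‖x‖ - 8 * b * C) ^ 2 / (16 * b) by positivity]
  have hexponent : C * (1 + ‖x‖) + -((‖x‖ ^ 2 / 2 - R ^ 2) / (4 * b)) ≤
      R ^ 2 / (4 * b) + C + 4 * b * C ^ 2 + -‖x‖ ^ 2 / (4 * (4 * b)) :=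
    calc C * (1 + ‖x‖) + -((‖x‖ ^ 2 / 2 - R ^ 2) / (4 * b))
        = C * ‖x‖ + (C + R ^ 2 / (4 * b) - ‖x‖ ^ 2 / (8 * b)) := by field
      _ ≤ ‖x‖ ^ 2 / (16 * b) + 4 * b * C ^ 2 + (C + R ^ 2 / (4 * b) - ‖x‖ ^ 2 / (8 * b)) := by
        gcongr
      _ = _ := by field
  calc |G t x * heatFlow μ t x| = |G t x| * heatFlow μ t x := by
        rw [abs_mul, abs_of_pos (heatFlow_pos hμ ht₀ x)]
    _ ≤ Real.exp (C * (1 + ‖x‖)) * (K * Real.exp (-((‖x‖ ^ 2 / 2 - R ^ 2) / (4 * b)))) :=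
        mul_le_mul (hC t ht x) hu (heatFlow_pos hμ ht₀ x).le (Real.exp_nonneg _)
    _ = K * Real.exp (C * (1 + ‖x‖) + -((‖x‖ ^ 2 / 2 - R ^ 2) / (4 * b))) := by
        rw [Real.exp_add]
        ring
    _ ≤ K * Real.exp (R ^ 2 / (4 * b) + C + 4 * b * C ^ 2 + -‖x‖ ^ 2 / (4 * (4 * b))) := by
        gcongr
    _ = K * Real.exp (R ^ 2 / (4 * b) + C + 4 * b * C ^ 2) / K' * heatKernel (4 * b) x := by
        rw [Real.exp_add, heatKernel]
        field

lemma Tame.integrable_mul_heatFlow (hG : Tame G) (hμ : IsCompact μ.support) (ht : 0 < t) :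
    Integrable fun x => G t x * heatFlow μ t x := by
  obtain ⟨A, hA⟩ := hG.exists_abs_mul_heatFlow_le hμ (b := t) ht
  exact ((integrable_heatKernel (by positivity)).const_mul A).mono'
    ((hG.continuous ht).mul (continuous_heatFlow hμ t)).aestronglyMeasurable
    (.of_forall (hA t (Set.right_mem_Icc.2 le_rfl)))

lemma integral_add_logGrad_mul_mul_heatFlow_eq_zero {D : Fin n → ℝ → EuclideanSpace ℝ (Fin n) → ℝ}
    (hμ : IsCompact μ.support) (hG : Tame G) {k : Fin n} (hD : Tame (D k)) (ht : 0 < t)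
    (hGD : ∀ x, HasPartialDerivsAt (G t) (fun j => D j t x) x) :
    ∫ x, (D k t x + logGrad μ k t x * G t x) * heatFlow μ t x = 0 := by
  have hGu (x : EuclideanSpace ℝ (Fin n)) :=
    (hGD x).mul (hasPartialDerivsAt_heatFlow hμ ht x)
  have key := integral_bilinear_hasFDerivAt_right_eq_neg_left_of_integrable (μ := volume)
    (B := ContinuousLinearMap.mul ℝ ℝ) (v := EuclideanSpace.single k 1)
    (f := fun _ : EuclideanSpace ℝ (Fin n) => (1 : ℝ)) (f' := fun _ => 0)
    (hf := fun x _ => hasFDerivAt_const _ _) (hg := fun x _ => hGu x)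
  have hpartial (x : EuclideanSpace ℝ (Fin n)) :
      G t x * (logGrad μ k t x * heatFlow μ t x) + D k t x * heatFlow μ t x =
        (D k t x + logGrad μ k t x * G t x) * heatFlow μ t x := by ring
  simp only [sum_apply, smul_apply, PiLp.proj_apply, PiLp.single_apply, zero_apply, smul_eq_mul,
    mul_ite, mul_one, mul_zero, Finset.sum_ite_eq', Finset.mem_univ, if_true, hpartial, map_zero,
    ContinuousLinearMap.mul_apply', one_mul, integral_zero, neg_zero, integrable_fun_zero,
    forall_const] at key
  exact key ((hD.add ((tame_logGrad hμ k).mul hG)).integrable_mul_heatFlow hμ ht)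
    (hG.integrable_mul_heatFlow hμ ht)

lemma hasDerivAt_integral_mul_heatFlow (hμ : IsCompact μ.support) (hG : Tame G) (hG' : Tame G')
    (hGG' : ∀ ⦃t⦄, 0 < t → ∀ x, HasDerivAt (G · x) (G' t x) t) (ht : 0 < t) :
    HasDerivAt (fun t => ∫ x, G t x * heatFlow μ t x)
      (∫ x, (G' t x + G t x * ∑ k, (logHess μ k k t x + logGrad μ k t x ^ 2)) * heatFlow μ t x)
      t := by
  have htame : Tame fun t x => G' t x + G t x * ∑ k, (logHess μ k k t x + logGrad μ k t x ^ 2) :=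
    hG'.add (hG.mul (.sum _ fun k _ => (tame_logHess hμ k k).add ((tame_logGrad hμ k).pow 2)))
  obtain ⟨A, hA⟩ := htame.exists_abs_mul_heatFlow_le hμ (b := 2 * t) (half_pos ht)
  refine (hasDerivAt_integral_of_dominated_loc_of_deriv_le (μ := volume)
    (F := fun s x => G s x * heatFlow μ s x) (bound := fun x => A * heatKernel (4 * (2 * t)) x)
    (F' := fun s x => (G' s x + G s x * ∑ k, (logHess μ k k s x + logGrad μ k s x ^ 2)) *
      heatFlow μ s x)
    (Icc_mem_nhds (half_lt_self ht) (by linarith)) ?_ (hG.integrable_mul_heatFlow hμ ht)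
    (htame.integrable_mul_heatFlow hμ ht).aestronglyMeasurable
    (.of_forall fun x s hs => hA s hs x)
    ((integrable_heatKernel (by positivity)).const_mul A)
    (.of_forall fun x s hs => ?_)).2
  · filter_upwards [Ioi_mem_nhds ht] with s hs using
      (hG.integrable_mul_heatFlow hμ hs).aestronglyMeasurable
  · have hs₀ : 0 < s := (half_pos ht).trans_le hs.1
    exact ((hGG' hs₀ x).mul (hasDerivAt_heatFlow hμ hs₀ x)).congr_deriv (by ring)

end IntegralAgainstHeatFlow

section Evolution

variable {μ : Measure (EuclideanSpace ℝ (Fin n))} {t : ℝ}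

/-- The equation `∂ₜG = ΔG + 2 ∇ log u · ∇G + R` for `u = heatFlow μ`, at positive times, with all
functions involved `Tame`. The argument `D` is the spatial gradient of `G`. -/
structure EvolvesWithSource (μ : Measure (EuclideanSpace ℝ (Fin n)))
    (G : ℝ → EuclideanSpace ℝ (Fin n) → ℝ) (D : Fin n → ℝ → EuclideanSpace ℝ (Fin n) → ℝ)
    (R : ℝ → EuclideanSpace ℝ (Fin n) → ℝ) : Prop where
  tame : Tame G
  tame_partial : ∀ k, Tame (D k)
  tame_source : Tame R
  hasPartialDerivsAt : ∀ ⦃t⦄, 0 < t → ∀ x, HasPartialDerivsAt (G t) (fun k => D k t x) x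
  exists_hasDerivAt : ∃ D₂ : Fin n → Fin n → ℝ → EuclideanSpace ℝ (Fin n) → ℝ,
    (∀ k, Tame (D₂ k k)) ∧
    (∀ k ⦃t⦄, 0 < t → ∀ x, HasPartialDerivsAt (D k t) (fun j => D₂ k j t x) x) ∧
    ∀ ⦃t⦄, 0 < t → ∀ x, HasDerivAt (G · x)
      (∑ k, (D₂ k k t x + 2 * logGrad μ k t x * D k t x) + R t x) t

namespace EvolvesWithSource

lemma mul {G₁ G₂ R₁ R₂ : ℝ → EuclideanSpace ℝ (Fin n) → ℝ}
    {D₁ D₂ : Fin n → ℝ → EuclideanSpace ℝ (Fin n) → ℝ}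
    (h₁ : EvolvesWithSource μ G₁ D₁ R₁) (h₂ : EvolvesWithSource μ G₂ D₂ R₂) :
    EvolvesWithSource μ (fun t x => G₁ t x * G₂ t x)
      (fun k t x => G₁ t x * D₂ k t x + D₁ k t x * G₂ t x)
      (fun t x => R₁ t x * G₂ t x + G₁ t x * R₂ t x - 2 * ∑ k, D₁ k t x * D₂ k t x) where
  tame := h₁.tame.mul h₂.tame
  tame_partial k := (h₁.tame.mul (h₂.tame_partial k)).add ((h₁.tame_partial k).mul h₂.tame)
  tame_source := ((h₁.tame_source.mul h₂.tame).add (h₁.tame.mul h₂.tame_source)).sub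
    ((Tame.const 2).mul (.sum _ fun k _ => (h₁.tame_partial k).mul (h₂.tame_partial k)))
  hasPartialDerivsAt _ ht x := (h₁.hasPartialDerivsAt ht x).mul (h₂.hasPartialDerivsAt ht x)
  exists_hasDerivAt := by
    obtain ⟨E₁, hE₁, hDE₁, hG₁⟩ := h₁.exists_hasDerivAt
    obtain ⟨E₂, hE₂, hDE₂, hG₂⟩ := h₂.exists_hasDerivAt
    refine ⟨fun k j t x => (G₁ t x * E₂ k j t x + D₁ j t x * D₂ k t x) +
      (D₁ k t x * D₂ j t x + E₁ k j t x * G₂ t x), fun k => ?_, fun k t ht x => ?_,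
      fun t ht x => ?_⟩
    · exact ((h₁.tame.mul (hE₂ k)).add ((h₁.tame_partial k).mul (h₂.tame_partial k))).add
        (((h₁.tame_partial k).mul (h₂.tame_partial k)).add ((hE₁ k).mul h₂.tame))
    · exact ((h₁.hasPartialDerivsAt ht x).mul (hDE₂ k ht x)).add
        ((hDE₁ k ht x).mul (h₂.hasPartialDerivsAt ht x))
    · have hsum : ∑ k, ((G₁ t x * E₂ k k t x + D₁ k t x * D₂ k t x +
          (D₁ k t x * D₂ k t x + E₁ k k t x * G₂ t x)) +
          2 * logGrad μ k t x * (G₁ t x * D₂ k t x + D₁ k t x * G₂ t x)) =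
          (∑ k, (E₁ k k t x + 2 * logGrad μ k t x * D₁ k t x)) * G₂ t x +
            G₁ t x * ∑ k, (E₂ k k t x + 2 * logGrad μ k t x * D₂ k t x) +
            2 * ∑ k, D₁ k t x * D₂ k t x := by
        simp_rw [Finset.sum_mul, Finset.mul_sum, ← Finset.sum_add_distrib]
        exact Finset.sum_congr rfl fun k _ => by ring
      refine ((hG₁ ht x).mul (hG₂ ht x)).congr_deriv ?_
      rw [hsum]
      ring

lemma sum {ι : Type*} (s : Finset ι) {G R : ι → ℝ → EuclideanSpace ℝ (Fin n) → ℝ}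
    {D : ι → Fin n → ℝ → EuclideanSpace ℝ (Fin n) → ℝ}
    (h : ∀ i ∈ s, EvolvesWithSource μ (G i) (D i) (R i)) :
    EvolvesWithSource μ (fun t x => ∑ i ∈ s, G i t x) (fun k t x => ∑ i ∈ s, D i k t x)
      (fun t x => ∑ i ∈ s, R i t x) where
  tame := .sum s fun i hi => (h i hi).tame
  tame_partial k := .sum s fun i hi => (h i hi).tame_partial k
  tame_source := .sum s fun i hi => (h i hi).tame_source
  hasPartialDerivsAt _ ht x := .sum s fun i hi => (h i hi).hasPartialDerivsAt ht x
  exists_hasDerivAt := by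
    choose! D₂ hD₂ hDD₂ hG using fun i hi => (h i hi).exists_hasDerivAt
    refine ⟨fun k j t x => ∑ i ∈ s, D₂ i k j t x, fun k => .sum s fun i hi => hD₂ i hi k,
      fun k t ht x => .sum s fun i hi => hDD₂ i hi k ht x, fun t ht x => ?_⟩
    refine (HasDerivAt.fun_sum fun i hi => hG i hi ht x).congr_deriv ?_
    rw [Finset.sum_add_distrib, Finset.sum_comm]
    simp only [Finset.sum_add_distrib, Finset.mul_sum]

end EvolvesWithSource

section FiniteMeasure

variable [IsFiniteMeasure μ] [NeZero μ]

lemma evolvesWithSource_posteriorMean (hμ : IsCompact μ.support)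
    {p : EuclideanSpace ℝ (Fin n) → ℝ} (hp : Continuous p) :
    EvolvesWithSource μ (posteriorMean μ p)
      (fun k t x => posteriorCov μ (fun y => y k) p t x / (2 * t)) (fun _ _ => 0) := by
  have hcov {q : EuclideanSpace ℝ (Fin n) → ℝ} (hq : Continuous q) (k : Fin n) :
      Tame (posteriorCov μ (fun y => y k) q) := tame_posteriorCov hμ (by fun_prop) hq
  refine ⟨tame_posteriorMean hμ hp, fun k => (hcov hp k).div_const_mul_time two_ne_zero, .const 0,
    fun t ht x => hasPartialDerivsAt_posteriorMean hμ hp ht x, _, fun k => ?_,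
    fun k t ht x => (hasPartialDerivsAt_posteriorCov hμ (p := fun y => y k)
      (by fun_prop) hp ht x).div_const (2 * t), fun t ht x => ?_⟩
  · exact (((hcov (by fun_prop) k).sub
      (((tame_posteriorMean hμ (by fun_prop)).mul (hcov hp k)).add
        ((hcov (by fun_prop) k).mul (tame_posteriorMean hμ hp)))).div_const_mul_time
          two_ne_zero).div_const_mul_time two_ne_zero
  · refine (hasDerivAt_posteriorMean hμ hp ht x).congr_deriv ?_
    rw [add_zero]
    refine Finset.sum_congr rfl fun k _ => ?_
    simp only [posteriorCov, logGrad, mul_assoc]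
    field

lemma evolvesWithSource_logGrad (hμ : IsCompact μ.support) (i : Fin n) :
    EvolvesWithSource μ (logGrad μ i) (logHess μ i) (fun _ _ => 0) := by
  obtain ⟨D₂, hD₂, hDD₂, hM⟩ :=
    (evolvesWithSource_posteriorMean hμ (p := fun y => y i) (by fun_prop)).exists_hasDerivAt
  refine ⟨tame_logGrad hμ i, tame_logHess hμ i, .const 0,
    fun t ht x => hasPartialDerivsAt_logGrad hμ i ht x, fun k j t x => D₂ k j t x / (2 * t),
    fun k => (hD₂ k).div_const_mul_time two_ne_zero,
    fun k t ht x => ?_, fun t ht x => ?_⟩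
  · exact (((hDD₂ k ht x).sub (.const _ x)).div_const (2 * t)).congr fun j => by rw [sub_zero]
  · have htwo : HasDerivAt (fun s : ℝ => 2 * s) 2 t := by
      simpa using (hasDerivAt_id t).const_mul 2
    have hdiag : ∑ k, 2 * logGrad μ k t x * (if i = k then 1 else 0) =
        (posteriorMean μ (fun y => y i) t x - x i) / t := by
      simp only [mul_ite, mul_one, mul_zero, Finset.sum_ite_eq, Finset.mem_univ, if_true, logGrad]
      field
    have hsum : ∑ k, (D₂ k k t x / (2 * t) + 2 * logGrad μ k t x * logHess μ i k t x) =
        (∑ k, (D₂ k k t x + 2 * logGrad μ k t x *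
          (posteriorCov μ (fun y => y k) (fun y => y i) t x / (2 * t))) -
          ∑ k, 2 * logGrad μ k t x * (if i = k then 1 else 0)) / (2 * t) := by
      rw [← Finset.sum_sub_distrib, Finset.sum_div]
      refine Finset.sum_congr rfl fun k _ => ?_
      rw [logHess]
      ring
    refine (((hM ht x).sub_const (x i)).div htwo (by positivity)).congr_deriv ?_
    rw [hsum, hdiag]
    field

end FiniteMeasure

variable [IsProbabilityMeasure μ]

lemma evolvesWithSource_log_heatFlow (hμ : IsCompact μ.support) :
    EvolvesWithSource μ (fun t x => Real.log (heatFlow μ t x)) (logGrad μ)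
      (fun t x => -∑ k, logGrad μ k t x ^ 2) := by
  refine ⟨tame_log_heatFlow hμ, tame_logGrad hμ,
    (Tame.sum _ fun k _ => (tame_logGrad hμ k).pow 2).neg,
    fun t ht x => hasPartialDerivsAt_log_heatFlow hμ ht x, logHess μ, fun k => tame_logHess hμ k k,
    fun k _ ht x => hasPartialDerivsAt_logGrad hμ k ht x, fun t ht x => ?_⟩
  have hu := (heatFlow_pos hμ ht x).ne'
  refine ((hasDerivAt_heatFlow hμ ht x).log hu).congr_deriv ?_
  rw [mul_div_cancel_right₀ _ hu, ← Finset.sum_neg_distrib, ← Finset.sum_add_distrib]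
  exact Finset.sum_congr rfl fun k _ => by ring

-- The integrand is `∂ₖVₖ u + Vₖ ∂ₖu` for `Vₖ = ∂ₖG + ∂ₖ(log u) G`, which is `∂ₖ∂ₖ(G u)`.
lemma integral_partial_partial_mul_heatFlow_eq_zero {G : ℝ → EuclideanSpace ℝ (Fin n) → ℝ}
    {D D₂ : Fin n → ℝ → EuclideanSpace ℝ (Fin n) → ℝ} (hμ : IsCompact μ.support) (hG : Tame G)
    {k : Fin n} (hD : Tame (D k)) (hD₂ : Tame (D₂ k)) (ht : 0 < t)
    (hGD : ∀ x, HasPartialDerivsAt (G t) (fun j => D j t x) x)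
    (hDD₂ : ∀ x, HasPartialDerivsAt (D k t) (fun j => D₂ j t x) x) :
    ∫ x, (D₂ k t x + 2 * logGrad μ k t x * D k t x +
      G t x * (logHess μ k k t x + logGrad μ k t x ^ 2)) * heatFlow μ t x = 0 := by
  have hℓ := tame_logGrad hμ k
  rw [← integral_add_logGrad_mul_mul_heatFlow_eq_zero
    (D := fun j t x => D₂ j t x + (logGrad μ k t x * D j t x + logHess μ k j t x * G t x)) hμ
    (hD.add (hℓ.mul hG)) (hD₂.add ((hℓ.mul hD).add ((tame_logHess hμ k k).mul hG))) ht
    fun x => (hDD₂ x).add ((hasPartialDerivsAt_logGrad hμ k ht x).mul (hGD x))]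
  congr! 3
  ring

theorem EvolvesWithSource.hasDerivAt_integral {G R : ℝ → EuclideanSpace ℝ (Fin n) → ℝ}
    {D : Fin n → ℝ → EuclideanSpace ℝ (Fin n) → ℝ} (h : EvolvesWithSource μ G D R)
    (hμ : IsCompact μ.support) (ht : 0 < t) :
    HasDerivAt (fun t => ∫ x, G t x * heatFlow μ t x) (∫ x, R t x * heatFlow μ t x) t := by
  obtain ⟨D₂, hD₂, hDD₂, hG⟩ := h.exists_hasDerivAt
  have hdrift (k : Fin n) : Tame fun t x => D₂ k k t x + 2 * logGrad μ k t x * D k t x :=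
    (hD₂ k).add (((Tame.const 2).mul (tame_logGrad hμ k)).mul (h.tame_partial k))
  have hint (k : Fin n) : Integrable fun x =>
      (D₂ k k t x + 2 * logGrad μ k t x * D k t x +
        G t x * (logHess μ k k t x + logGrad μ k t x ^ 2)) * heatFlow μ t x :=
    ((hdrift k).add (h.tame.mul ((tame_logHess hμ k k).add
      ((tame_logGrad hμ k).pow 2)))).integrable_mul_heatFlow hμ ht
  refine (hasDerivAt_integral_mul_heatFlow hμ h.tame
    ((Tame.sum _ fun k _ => hdrift k).add h.tame_source) hG ht).congr_deriv ?_
  have hsplit (x : EuclideanSpace ℝ (Fin n)) :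
      (∑ k, (D₂ k k t x + 2 * logGrad μ k t x * D k t x) + R t x +
        G t x * ∑ k, (logHess μ k k t x + logGrad μ k t x ^ 2)) * heatFlow μ t x =
      ∑ k, (D₂ k k t x + 2 * logGrad μ k t x * D k t x +
        G t x * (logHess μ k k t x + logGrad μ k t x ^ 2)) * heatFlow μ t x +
        R t x * heatFlow μ t x := by
    rw [Finset.mul_sum, add_right_comm, ← Finset.sum_add_distrib, add_mul, Finset.sum_mul]
  simp_rw [hsplit]
  rw [integral_add (integrable_finsetSum _ fun k _ => hint k)
    (h.tame_source.integrable_mul_heatFlow hμ ht), integral_finsetSum _ fun k _ => hint k,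
    Finset.sum_eq_zero fun k _ => integral_partial_partial_mul_heatFlow_eq_zero hμ h.tame
      (h.tame_partial k) (hD₂ k) ht (h.hasPartialDerivsAt ht) (hDD₂ k ht), zero_add]

end Evolution

section Entropy

variable {μ : Measure (EuclideanSpace ℝ (Fin n))} [IsProbabilityMeasure μ] {t : ℝ}

/-- The Boltzmann–Shannon entropy of `heatFlow μ t`. -/
noncomputable def heatFlowEntropy (μ : Measure (EuclideanSpace ℝ (Fin n))) (t : ℝ) : ℝ :=
  -∫ x, heatFlow μ t x * Real.log (heatFlow μ t x)

lemma integral_sum_logGrad_sq (hμ : IsCompact μ.support) (ht : 0 < t) :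
    ∫ x, (∑ k, logGrad μ k t x ^ 2) * heatFlow μ t x =
      -∫ x, (∑ k, logHess μ k k t x) * heatFlow μ t x := by
  have hparts (k : Fin n) : ∫ x, logGrad μ k t x ^ 2 * heatFlow μ t x =
      -∫ x, logHess μ k k t x * heatFlow μ t x := by
    rw [← add_eq_zero_iff_eq_neg', ← integral_add
      ((tame_logHess hμ k k).integrable_mul_heatFlow hμ ht)
      (((tame_logGrad hμ k).pow 2).integrable_mul_heatFlow hμ ht),
      ← integral_add_logGrad_mul_mul_heatFlow_eq_zero hμ (tame_logGrad hμ k)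
        (tame_logHess hμ k k) ht (hasPartialDerivsAt_logGrad hμ k ht)]
    congr! 2
    ring
  simp_rw [Finset.sum_mul]
  rw [integral_finsetSum _ fun k _ => ((tame_logGrad hμ k).pow 2).integrable_mul_heatFlow hμ ht,
    integral_finsetSum _ fun k _ => (tame_logHess hμ k k).integrable_mul_heatFlow hμ ht,
    ← Finset.sum_neg_distrib]
  exact Finset.sum_congr rfl fun k _ => hparts k

theorem hasDerivAt_heatFlowEntropy (hμ : IsCompact μ.support) (ht : 0 < t) :
    HasDerivAt (heatFlowEntropy μ) (∫ x, (∑ k, logGrad μ k t x ^ 2) * heatFlow μ t x) t := by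
  have h := ((evolvesWithSource_log_heatFlow hμ).hasDerivAt_integral hμ ht).neg
  simp_rw [neg_mul, integral_neg, neg_neg, mul_comm (Real.log _)] at h
  exact h

theorem hasDerivAt_deriv_heatFlowEntropy (hμ : IsCompact μ.support) (ht : 0 < t) :
    HasDerivAt (deriv (heatFlowEntropy μ))
      (-2 * ∫ x, (∑ i, ∑ k, logHess μ i k t x ^ 2) * heatFlow μ t x) t := by
  have hderiv : deriv (heatFlowEntropy μ) =ᶠ[𝓝 t]
      fun s => ∫ x, (∑ i, logGrad μ i s x * logGrad μ i s x) * heatFlow μ s x := by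
    filter_upwards [Ioi_mem_nhds ht] with s hs
    simp_rw [(hasDerivAt_heatFlowEntropy hμ hs).deriv, sq]
  have hgrad := EvolvesWithSource.sum Finset.univ fun i _ =>
    (evolvesWithSource_logGrad hμ i).mul (evolvesWithSource_logGrad hμ i)
  refine ((hgrad.hasDerivAt_integral hμ ht).congr_of_eventuallyEq hderiv).congr_deriv ?_
  rw [← integral_const_mul]
  congr! 2
  simp only [zero_mul, mul_zero, add_zero, zero_sub, Finset.sum_neg_distrib, ← Finset.mul_sum, sq]
  ring

lemma hessianMatrix_log_heatFlow (hμ : IsCompact μ.support) (ht : 0 < t)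
    (x : EuclideanSpace ℝ (Fin n)) (i j : Fin n) :
    hessianMatrix n (fun y => Real.log (heatFlow μ t y)) x i j = logHess μ j i t x :=
  hessianMatrix_eq (hasPartialDerivsAt_log_heatFlow hμ ht)
    (fun j => hasPartialDerivsAt_logGrad hμ j ht x) i j

lemma laplacian_log_heatFlow (hμ : IsCompact μ.support) (ht : 0 < t)
    (x : EuclideanSpace ℝ (Fin n)) :
    laplacian n (fun y => Real.log (heatFlow μ t y)) x = ∑ k, logHess μ k k t x :=
  Finset.sum_congr rfl fun k _ => hessianMatrix_log_heatFlow hμ ht x k k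

lemma traceFreeHessianHSsq_log_heatFlow (hμ : IsCompact μ.support) (ht : 0 < t)
    (x : EuclideanSpace ℝ (Fin n)) :
    traceFreeHessianHSsq n (fun y => Real.log (heatFlow μ t y)) x =
      ∑ i, ∑ k, logHess μ i k t x ^ 2 - (∑ k, logHess μ k k t x) ^ 2 / n := by
  simp_rw [traceFreeHessianHSsq_eq, hessianMatrix_log_heatFlow hμ ht,
    laplacian_log_heatFlow hμ ht]
  rw [Finset.sum_comm]

lemma integral_traceFreeHessianHSsq_log_heatFlow (hμ : IsCompact μ.support) (ht : 0 < t) :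
    ∫ x, traceFreeHessianHSsq n (fun y => Real.log (heatFlow μ t y)) x * heatFlow μ t x =
      (∫ x, (∑ i, ∑ k, logHess μ i k t x ^ 2) * heatFlow μ t x) -
        (∫ x, (∑ k, logHess μ k k t x) ^ 2 * heatFlow μ t x) / n := by
  have hnormSq : Tame fun t x => ∑ i, ∑ k, logHess μ i k t x ^ 2 :=
    .sum _ fun i _ => .sum _ fun k _ => (tame_logHess hμ i k).pow 2
  have htraceSq : Tame fun t x => (∑ k, logHess μ k k t x) ^ 2 :=
    (Tame.sum _ fun k _ => tame_logHess hμ k k).pow 2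
  simp_rw [traceFreeHessianHSsq_log_heatFlow hμ ht, sub_mul, div_mul_eq_mul_div]
  rw [integral_sub (hnormSq.integrable_mul_heatFlow hμ ht)
    ((htraceSq.integrable_mul_heatFlow hμ ht).div_const _), integral_div]

end Entropy

lemma integral_sub_integral_sq_mul {X : Type*} [MeasurableSpace X] {ν : Measure X} {F w : X → ℝ}
    (hw : ∫ x, w x ∂ν = 1) (hF : Integrable (fun x => F x * w x) ν)
    (hF₂ : Integrable (fun x => F x ^ 2 * w x) ν) :
    ∫ x, (F x - ∫ z, F z * w z ∂ν) ^ 2 * w x ∂ν =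
      ∫ x, F x ^ 2 * w x ∂ν - (∫ x, F x * w x ∂ν) ^ 2 := by
  set c := ∫ x, F x * w x ∂ν with hc
  have hexpand (x : X) :
      (F x - c) ^ 2 * w x = F x ^ 2 * w x - 2 * c * (F x * w x) + c ^ 2 * w x := by ring
  simp_rw [hexpand]
  rw [integral_add (hF₂.sub' (hF.const_mul _)) ((integrable_of_integral_eq_one hw).const_mul _),
    integral_sub hF₂ (hF.const_mul _), integral_const_mul, integral_const_mul, hw, ← hc]
  ring

section Density

variable {f : EuclideanSpace ℝ (Fin n) → ℝ}

/-- The measure with density `f` with respect to Lebesgue measure. -/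
noncomputable def densityMeasure (f : EuclideanSpace ℝ (Fin n) → ℝ) :
    Measure (EuclideanSpace ℝ (Fin n)) :=
  volume.withDensity fun x => ENNReal.ofReal (f x)

lemma isProbabilityMeasure_densityMeasure (hf : 0 ≤ f) (hint : ∫ x, f x = 1) :
    IsProbabilityMeasure (densityMeasure f) := by
  constructor
  rw [densityMeasure, withDensity_apply _ .univ, setLIntegral_univ,
    ← ofReal_integral_eq_lintegral_ofReal (integrable_of_integral_eq_one hint)
      (.of_forall hf), hint, ENNReal.ofReal_one]

lemma isCompact_support_densityMeasure (hf : Measurable f) (hsupp : HasCompactSupport f) :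
    IsCompact (densityMeasure f).support := by
  have hae : ∀ᵐ x ∂densityMeasure f, x ∈ tsupport f :=
    (ae_withDensity_iff (by fun_prop)).2 <| .of_forall fun x hx =>
      subset_tsupport f fun hfx => hx (by rw [hfx, ENNReal.ofReal_zero])
  exact hsupp.of_isClosed_subset Measure.isClosed_support
    (Measure.support_subset_of_isClosed (isClosed_tsupport f) hae)

lemma heatFlow_densityMeasure (hf : Measurable f) (hf₀ : 0 ≤ f) :
    heatFlow (densityMeasure f) = heatSol n f := by
  ext t x
  rw [heatFlow_eq_integral, densityMeasure,
    integral_withDensity_eq_integral_toReal_smul (by fun_prop) (by simp)]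
  simp_rw [ENNReal.toReal_ofReal (hf₀ _), smul_eq_mul, mul_comm (f _)]
  rfl

lemma heatFlowEntropy_densityMeasure (hf : Measurable f) (hf₀ : 0 ≤ f) :
    heatFlowEntropy (densityMeasure f) = shannonEntropy n f := by
  ext t
  rw [heatFlowEntropy, heatFlow_densityMeasure hf hf₀, shannonEntropy]

end Density

end HeatEntropy

open HeatEntropy in
theorem NIW_euclidean_formula_general {n : ℕ} {μ : Measure (EuclideanSpace ℝ (Fin n))}
    [IsProbabilityMeasure μ] (hμ : IsCompact μ.support) {t : ℝ} (ht : 0 < t) :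
    deriv (deriv (heatFlowEntropy μ)) t
        + (2 / (n : ℝ)) * (deriv (heatFlowEntropy μ) t) ^ 2 =
      -(2 / (n : ℝ)) * (∫ x, (laplacian n (fun y => Real.log (heatFlow μ t y)) x
          - ∫ z, laplacian n (fun y => Real.log (heatFlow μ t y)) z * heatFlow μ t z) ^ 2
            * heatFlow μ t x)
        - 2 * ∫ x, traceFreeHessianHSsq n (fun y => Real.log (heatFlow μ t y)) x
            * heatFlow μ t x := by
  have hΔ : Tame fun t x => ∑ k, logHess μ k k t x := .sum _ fun k _ => tame_logHess hμ k k
  have hvariance := integral_sub_integral_sq_mul (integral_heatFlow ht)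
    (hΔ.integrable_mul_heatFlow hμ ht) ((hΔ.pow 2).integrable_mul_heatFlow hμ ht)
  rw [(hasDerivAt_deriv_heatFlowEntropy hμ ht).deriv, (hasDerivAt_heatFlowEntropy hμ ht).deriv,
    integral_sum_logGrad_sq hμ ht, integral_traceFreeHessianHSsq_log_heatFlow hμ ht]
  simp_rw [laplacian_log_heatFlow hμ ht, hvariance]
  ring

/-- Formula (5.10) of the paper in the Euclidean case: along the heat flow on `ℝⁿ`,
`H'' + (2/n)H'² = -(2/n)·Var_{u dx}(Δ log u) - 2∫‖(∇² log u)₀‖²_HS u dx`. -/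
theorem NIW_euclidean_formula (n : ℕ) (hn : 1 ≤ n)
    (f : EuclideanSpace ℝ (Fin n) → ℝ)
    (hf_cont : Continuous f) (hf_nonneg : ∀ x, 0 ≤ f x)
    (hf_supp : HasCompactSupport f)
    (hf_int : ∫ x, f x = 1) :
    ∀ t : ℝ, 0 < t →
      deriv (deriv (shannonEntropy n f)) t
          + (2 / (n : ℝ)) * (deriv (shannonEntropy n f) t) ^ 2 =
        -(2 / (n : ℝ)) * (∫ x, (laplacian n (fun y => Real.log (heatSol n f t y)) x
            - ∫ z, laplacian n (fun y => Real.log (heatSol n f t y)) z * heatSol n f t z) ^ 2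
              * heatSol n f t x)
          - 2 * ∫ x, traceFreeHessianHSsq n (fun y => Real.log (heatSol n f t y)) x
              * heatSol n f t x := by
  have := HeatEntropy.isProbabilityMeasure_densityMeasure hf_nonneg hf_int
  intro t ht
  have key := NIW_euclidean_formula_general
    (HeatEntropy.isCompact_support_densityMeasure hf_cont.measurable hf_supp) ht
  rwa [HeatEntropy.heatFlowEntropy_densityMeasure hf_cont.measurable hf_nonneg,
    HeatEntropy.heatFlow_densityMeasure hf_cont.measurable hf_nonneg] at key
end

section
/- Let n ≥ 1 and let f : ℝⁿ → ℝ be a nonnegative, continuous, compactly supported function with ∫_{ℝⁿ} f dx = 1 and f not identically zero, and let u(t,x) = ∫_{ℝⁿ} (4πt)^{-n/2} exp(-‖x-y‖²/(4t)) f(y) dy. Then the Li–Yau differential Harnack inequality holds: for every t > 0 and x ∈ ℝⁿ, |∇u(t,x)|²/u(t,x)² - ∂_t u(t,x)/u(t,x) ≤ n/(2t); equivalently, Δ log u(t,x) ≥ -n/(2t). -/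
open Real MeasureTheory

/-!
Along a line, completing the square in the heat kernel writes `log u(t, x + s e)` as the concave
parabola `-s² ‖e‖² / (4t)` plus the cumulant generating function, in the variable `s`, of a linear
functional under the measure `K_t(x - y) dμ(y)`. The second derivative of a cumulant generating
function is a variance, hence nonnegative, so the Hessian of `log u` is at least `-1 / (2t)`. Its
trace is the bound on `Δ log u`, and `Δ log u = Δ u / u - |∇u|² / u²` together with the heat
equation `∂ₜ u = Δ u` turns it into the bound on the gradient.
-/

open scoped ContDiff SchwartzMap Laplacian LineDeriv Nat

section SecondDerivatives

section NormedField

variable {𝕜 E F : Type*} [NontriviallyNormedField 𝕜] [NormedAddCommGroup E] [NormedSpace 𝕜 E]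
  [NormedAddCommGroup F] [NormedSpace 𝕜 F]

lemma iteratedFDeriv_two_eq_fderiv_fderiv_apply {f : E → F} {x : E}
    (hf : DifferentiableAt 𝕜 (fderiv 𝕜 f) x) (v w : E) :
    iteratedFDeriv 𝕜 2 f x ![v, w] = fderiv 𝕜 (fun z => fderiv 𝕜 f z w) x v := by
  rw [fderiv_clm_apply hf (by fun_prop)]
  simp [iteratedFDeriv_two_apply]

lemma iteratedDeriv_two_comp_add_smul {f : E → F} (hf : ContDiff 𝕜 2 f) (x e : E) :
    iteratedDeriv 2 (fun s : 𝕜 => f (x + s • e)) 0 = iteratedFDeriv 𝕜 2 f x ![e, e] := by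
  have hf_translate : ContDiff 𝕜 2 (fun z => f (x + z)) := by fun_prop
  have iteratedFDeriv_line := ContinuousLinearMap.iteratedFDeriv_comp_right
    (ContinuousLinearMap.toSpanSingleton 𝕜 e) hf_translate 0 (i := 2) le_rfl
  rw [iteratedDeriv_eq_iteratedFDeriv]
  change iteratedFDeriv 𝕜 2 ((fun z => f (x + z)) ∘ ContinuousLinearMap.toSpanSingleton 𝕜 e) 0 _ = _
  rw [iteratedFDeriv_line, iteratedFDeriv_comp_add_left]
  simp only [ContinuousLinearMap.toSpanSingleton_apply, zero_smul, add_zero,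
    ContinuousMultilinearMap.compContinuousLinearMap_apply, one_smul]
  congr 1
  ext i
  fin_cases i <;> simp

end NormedField

variable {E : Type*} [NormedAddCommGroup E]

lemma iteratedFDeriv_two_log [NormedSpace ℝ E] {u : E → ℝ} {x : E}
    (hu : ContDiffAt ℝ 2 u x) (hx : u x ≠ 0) (v w : E) :
    iteratedFDeriv ℝ 2 (fun z => log (u z)) x ![v, w] =
      iteratedFDeriv ℝ 2 u x ![v, w] / u x - fderiv ℝ u x v * fderiv ℝ u x w / u x ^ 2 := by
  have fderiv_log : (fun z => fderiv ℝ (fun z => log (u z)) z w) =ᶠ[nhds x]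
      fun z => (u z)⁻¹ * fderiv ℝ u z w := by
    filter_upwards [hu.eventually (by simp), hu.continuousAt.eventually_ne hx] with z hz hz0
    simp [fderiv.log (hz.differentiableAt (by simp)) hz0]
  have differentiableAt_fderiv {g : E → ℝ} (hg : ContDiffAt ℝ 2 g x) :
      DifferentiableAt ℝ (fderiv ℝ g) x :=
    (hg.fderiv_right (m := 1) (by norm_num)).differentiableAt (by simp)
  rw [iteratedFDeriv_two_eq_fderiv_fderiv_apply (differentiableAt_fderiv (hu.log hx)),
    fderiv_log.fderiv_eq,
    iteratedFDeriv_two_eq_fderiv_fderiv_apply (differentiableAt_fderiv hu)]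
  have hasFDerivAt_inv : HasFDerivAt (fun z => (u z)⁻¹) (-(u x ^ 2)⁻¹ • fderiv ℝ u x) x :=
    (hasDerivAt_inv hx).comp_hasFDerivAt x (hu.differentiableAt (by simp)).hasFDerivAt
  have differentiableAt_fderiv_apply : DifferentiableAt ℝ (fun z => fderiv ℝ u z w) x :=
    (differentiableAt_fderiv hu).clm_apply (differentiableAt_const w)
  rw [(hasFDerivAt_inv.fun_mul differentiableAt_fderiv_apply.hasFDerivAt).fderiv]
  simp only [add_apply, smul_apply, smul_eq_mul]
  ring

lemma laplacian_log [InnerProductSpace ℝ E] [FiniteDimensional ℝ E] {u : E → ℝ}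
    {x : E} (hu : ContDiffAt ℝ 2 u x) (hx : u x ≠ 0) :
    Δ (fun z => log (u z)) x = Δ u x / u x - ‖gradient u x‖ ^ 2 / u x ^ 2 := by
  let b := stdOrthonormalBasis ℝ E
  have norm_gradient_sq : ‖gradient u x‖ ^ 2 = ∑ i, fderiv ℝ u x (b i) ^ 2 := by
    rw [gradient, LinearIsometryEquiv.norm_map, b.norm_dual]
  simp only [InnerProductSpace.laplacian_eq_iteratedFDeriv_orthonormalBasis _ b,
    iteratedFDeriv_two_log hu hx, norm_gradient_sq, Finset.sum_sub_distrib, Finset.sum_div, pow_two]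

end SecondDerivatives

section SchwartzGaussian

variable {E : Type*} [NormedAddCommGroup E]

lemma exists_norm_iteratedFDeriv_exp_le [NormedSpace ℝ E] {f : E → ℝ}
    (hf : f.HasTemperateGrowth) (n : ℕ) :
    ∃ (k : ℕ) (C : ℝ), 0 ≤ C ∧ ∀ x,
      ‖iteratedFDeriv ℝ n (fun x => rexp (f x)) x‖ ≤ C * (1 + ‖x‖) ^ k * rexp (f x) := by
  obtain ⟨k, C, hC, hf_le⟩ := hf.norm_iteratedFDeriv_le_uniform n
  refine ⟨k * n, n ! * (1 + C) ^ n, by positivity, fun x => ?_⟩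
  have one_le_pow : 1 ≤ (1 + ‖x‖) ^ k := one_le_pow₀ (by simp)
  have hf_le_pow : ∀ i, 1 ≤ i → i ≤ n →
      ‖iteratedFDeriv ℝ i f x‖ ≤ ((1 + C) * (1 + ‖x‖) ^ k) ^ i := fun i hi hin =>
    calc ‖iteratedFDeriv ℝ i f x‖ ≤ C * (1 + ‖x‖) ^ k := hf_le i hin x
      _ ≤ (1 + C) * (1 + ‖x‖) ^ k := by gcongr; linarith
      _ ≤ ((1 + C) * (1 + ‖x‖) ^ k) ^ i :=
        le_self_pow₀ (one_le_mul_of_one_le_of_one_le (by linarith) one_le_pow) (by omega)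
  calc ‖iteratedFDeriv ℝ n (rexp ∘ f) x‖
      ≤ n ! * rexp (f x) * ((1 + C) * (1 + ‖x‖) ^ k) ^ n :=
        norm_iteratedFDeriv_comp_le (contDiff_exp (n := ∞)) hf.1 (mod_cast le_top) x
          (fun i _ => by simp [norm_iteratedFDeriv_eq_norm_iteratedDeriv, iteratedDeriv_eq_iterate])
          hf_le_pow
    _ = n ! * (1 + C) ^ n * (1 + ‖x‖) ^ (k * n) * rexp (f x) := by rw [mul_pow, pow_mul]; ring

lemma one_add_pow_mul_exp_neg_mul_sq_le {b r : ℝ} (hb : 0 < b) (hr : 0 ≤ r) (n : ℕ) :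
    (1 + r) ^ n * rexp (-b * r ^ 2) ≤ n ! * rexp (1 + 1 / (4 * b)) := by
  have pow_le : (1 + r) ^ n ≤ n ! * rexp (1 + r) := by
    have := pow_div_factorial_le_exp (1 + r) (by positivity) n
    rwa [div_le_iff₀' (by positivity)] at this
  have exponent_le : r + -b * r ^ 2 ≤ 1 / (4 * b) := by
    rw [le_div_iff₀ (by positivity)]
    nlinarith [sq_nonneg (2 * b * r - 1)]
  calc (1 + r) ^ n * rexp (-b * r ^ 2) ≤ n ! * rexp (1 + r) * rexp (-b * r ^ 2) := by gcongr
    _ = n ! * rexp (1 + (r + -b * r ^ 2)) := by rw [mul_assoc, ← exp_add, add_assoc]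
    _ ≤ n ! * rexp (1 + 1 / (4 * b)) := by gcongr

variable [InnerProductSpace ℝ E]

lemma hasTemperateGrowth_const_mul_norm_sq (c : ℝ) :
    (fun x : E => c * ‖x‖ ^ 2).HasTemperateGrowth :=
  (Function.HasTemperateGrowth.const c).mul (Function.hasTemperateGrowth_norm_sq E)

/-- The Gaussian `x ↦ exp (-b ‖x‖²)`, with `0 < b`, as a Schwartz function. -/
noncomputable def gaussianSchwartz (b : ℝ) (hb : 0 < b) : 𝓢(E, ℝ) where
  toFun x := rexp (-b * ‖x‖ ^ 2)
  smooth' := (hasTemperateGrowth_const_mul_norm_sq (-b)).1.exp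
  decay' k n := by
    obtain ⟨m, C, hC, norm_le⟩ :=
      exists_norm_iteratedFDeriv_exp_le (hasTemperateGrowth_const_mul_norm_sq (E := E) (-b)) n
    refine ⟨C * ((k + m)! * rexp (1 + 1 / (4 * b))), fun x => ?_⟩
    calc ‖x‖ ^ k * ‖iteratedFDeriv ℝ n (fun x : E => rexp (-b * ‖x‖ ^ 2)) x‖
        ≤ (1 + ‖x‖) ^ k * (C * (1 + ‖x‖) ^ m * rexp (-b * ‖x‖ ^ 2)) := by
          gcongr
          · linarith
          · exact norm_le x
      _ = C * ((1 + ‖x‖) ^ (k + m) * rexp (-b * ‖x‖ ^ 2)) := by ring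
      _ ≤ C * ((k + m)! * rexp (1 + 1 / (4 * b))) := by
          exact mul_le_mul_of_nonneg_left
            (one_add_pow_mul_exp_neg_mul_sq_le hb (norm_nonneg x) _) hC

end SchwartzGaussian

section SchwartzConvolution

variable {E F : Type*} [NormedAddCommGroup E] [MeasurableSpace E] [BorelSpace E]
  [NormedAddCommGroup F] [NormedSpace ℝ F]

/-- The convolution `f ∗ μ` of a Schwartz function with a measure. Its derivatives, to any order,
fall on `f`, which stays Schwartz. -/
noncomputable def schwartzConv [NormedSpace ℝ E] (f : 𝓢(E, F)) (μ : Measure E) (x : E) : F :=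
  ∫ y, f (x - y) ∂μ

variable {μ : Measure E} [IsFiniteMeasure μ]

section NormedSpace

variable [NormedSpace ℝ E]

lemma integrable_schwartz_sub [SecondCountableTopology E] (f : 𝓢(E, F)) (x : E) :
    Integrable (fun y => f (x - y)) μ := by
  obtain ⟨C, -, hC⟩ := f.decay 0 0
  refine .of_bound (by fun_prop) C (.of_forall fun y => ?_)
  simpa using hC (x - y)

lemma hasFDerivAt_schwartzConv [SecondCountableTopology E] (f : 𝓢(E, F)) (x : E) :
    HasFDerivAt (schwartzConv f μ)
      (schwartzConv (SchwartzMap.fderivCLM ℝ E F f) μ x) x := by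
  obtain ⟨C, -, hC⟩ := (SchwartzMap.fderivCLM ℝ E F f).decay 0 0
  refine hasFDerivAt_integral_of_dominated_of_fderiv_le (bound := fun _ => C)
    (F' := fun z y => SchwartzMap.fderivCLM ℝ E F f (z - y)) Filter.univ_mem
    (.of_forall fun z => (integrable_schwartz_sub f z).aestronglyMeasurable)
    (integrable_schwartz_sub f x) (integrable_schwartz_sub _ x).aestronglyMeasurable
    (.of_forall fun y z _ => by simpa using hC (z - y)) (integrable_const C)
    (.of_forall fun y z _ => (hasFDerivAt_comp_sub y).2 (f.hasFDerivAt (z - y)))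

lemma fderiv_schwartzConv_apply [SecondCountableTopology E] [CompleteSpace F]
    (f : 𝓢(E, F)) (x m : E) :
    fderiv ℝ (schwartzConv f μ) x m = schwartzConv (∂_{m} f) μ x := by
  rw [(hasFDerivAt_schwartzConv f x).fderiv, schwartzConv,
    ContinuousLinearMap.integral_apply (integrable_schwartz_sub _ x)]
  rfl

variable [FiniteDimensional ℝ E] [CompleteSpace F]

lemma contDiff_schwartzConv (f : 𝓢(E, F)) (n : ℕ) : ContDiff ℝ n (schwartzConv f μ) := by
  induction n generalizing f with
  | zero =>
    exact contDiff_zero.2 <| continuous_iff_continuousAt.2 fun x =>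
      (hasFDerivAt_schwartzConv f x).continuousAt
  | succ n ih =>
    rw [Nat.cast_succ, contDiff_succ_iff_fderiv_apply]
    refine ⟨fun x => (hasFDerivAt_schwartzConv f x).differentiableAt,
      fun h => absurd h (WithTop.natCast_ne_top n), fun m => ?_⟩
    simpa only [fderiv_schwartzConv_apply] using ih (∂_{m} f)

lemma iteratedFDeriv_two_schwartzConv (f : 𝓢(E, F)) (x v w : E) :
    iteratedFDeriv ℝ 2 (schwartzConv f μ) x ![v, w] = schwartzConv (∂_{v} (∂_{w} f)) μ x := by
  have differentiableAt_fderiv : DifferentiableAt ℝ (fderiv ℝ (schwartzConv f μ)) x :=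
    ((contDiff_schwartzConv f 2).fderiv_right (m := 1) (by norm_num)).differentiable (by simp) x
  rw [iteratedFDeriv_two_eq_fderiv_fderiv_apply differentiableAt_fderiv]
  simp only [fderiv_schwartzConv_apply]

end NormedSpace

lemma laplacian_schwartzConv [InnerProductSpace ℝ E] [FiniteDimensional ℝ E] [CompleteSpace F]
    (f : 𝓢(E, F)) : Δ (schwartzConv f μ) = schwartzConv (Δ f) μ := by
  ext x
  let b := stdOrthonormalBasis ℝ E
  rw [InnerProductSpace.laplacian_eq_iteratedFDeriv_orthonormalBasis _ b,
    SchwartzMap.laplacian_eq_sum b f]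
  simp only [iteratedFDeriv_two_schwartzConv, schwartzConv, sum_apply]
  exact (integral_finsetSum _ fun i _ => integrable_schwartz_sub _ x).symm

end SchwartzConvolution

section HeatKernel

variable {E : Type*} [NormedAddCommGroup E] [InnerProductSpace ℝ E]

open Module (finrank)
open scoped RealInnerProductSpace

/-- The heat kernel `(4πt)^{-n/2} exp(-‖z‖²/(4t))` of an `n`-dimensional Euclidean space. -/
noncomputable def heatKernel (t : ℝ) (z : E) : ℝ :=
  (4 * π * t) ^ (-(finrank ℝ E : ℝ) / 2) * rexp (-‖z‖ ^ 2 / (4 * t))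

variable {t : ℝ}

lemma heatKernel_pos (ht : 0 < t) (z : E) : 0 < heatKernel t z := by
  unfold heatKernel; positivity

/-- The heat kernel at a positive time as a Schwartz function. -/
noncomputable def heatKernelSchwartz (t : ℝ) (ht : 0 < t) : 𝓢(E, ℝ) :=
  (4 * π * t) ^ (-(finrank ℝ E : ℝ) / 2) • gaussianSchwartz (1 / (4 * t)) (by positivity)

lemma coe_heatKernelSchwartz (ht : 0 < t) : ⇑(heatKernelSchwartz (E := E) t ht) = heatKernel t := by
  ext z
  change (4 * π * t) ^ (-(finrank ℝ E : ℝ) / 2) * rexp (-(1 / (4 * t)) * ‖z‖ ^ 2) = _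
  rw [heatKernel]
  ring_nf

lemma contDiff_heatKernel (t : ℝ) {n : ℕ∞} : ContDiff ℝ n (heatKernel t : E → ℝ) := by
  unfold heatKernel
  exact contDiff_const.mul ((contDiff_norm_sq ℝ).neg.div_const _).exp

lemma continuous_heatKernel (t : ℝ) : Continuous (heatKernel t : E → ℝ) :=
  (contDiff_heatKernel t (n := 0)).continuous

lemma hasFDerivAt_heatKernel (t : ℝ) (z : E) :
    HasFDerivAt (heatKernel t) (-(heatKernel t z / (2 * t)) • innerSL ℝ z) z := by
  have hasFDerivAt_exponent :
      HasFDerivAt (fun z : E => -‖z‖ ^ 2 / (4 * t)) (-(4 * t)⁻¹ • (2 • innerSL ℝ z)) z :=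
    ((hasStrictFDerivAt_norm_sq z).hasFDerivAt.const_mul (-(4 * t)⁻¹)).congr_of_eventuallyEq
      (.of_forall fun y => by ring)
  refine (hasFDerivAt_exponent.exp.const_mul
    ((4 * π * t) ^ (-(finrank ℝ E : ℝ) / 2))).congr_fderiv ?_
  ext w
  simp only [heatKernel, smul_apply, smul_eq_mul, nsmul_eq_mul, Nat.cast_ofNat]
  ring

lemma fderiv_heatKernel_apply (t : ℝ) (z w : E) :
    fderiv ℝ (heatKernel t) z w = -(⟪w, z⟫ / (2 * t)) * heatKernel t z := by
  rw [(hasFDerivAt_heatKernel t z).fderiv, smul_apply, innerSL_apply_apply, real_inner_comm,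
    smul_eq_mul]
  ring

lemma iteratedFDeriv_two_heatKernel (t : ℝ) (z v w : E) :
    iteratedFDeriv ℝ 2 (heatKernel t) z ![v, w] =
      (⟪z, v⟫ * ⟪z, w⟫ / (4 * t ^ 2) - ⟪v, w⟫ / (2 * t)) * heatKernel t z := by
  have differentiableAt_fderiv : DifferentiableAt ℝ (fderiv ℝ (heatKernel t)) z :=
    ((contDiff_heatKernel t).fderiv_right (m := 1) (n := (2 : ℕ∞)) (by norm_cast)).differentiable
      (by simp) z
  have hasFDerivAt_inner : HasFDerivAt (fun z => -(⟪w, z⟫ / (2 * t)))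
      (-(2 * t)⁻¹ • innerSL ℝ w) z :=
    ((innerSL ℝ w).hasFDerivAt.const_mul (-(2 * t)⁻¹)).congr_of_eventuallyEq
      (.of_forall fun y => by simp only [innerSL_apply_apply]; ring)
  rw [iteratedFDeriv_two_eq_fderiv_fderiv_apply differentiableAt_fderiv]
  simp only [fderiv_heatKernel_apply]
  rw [(hasFDerivAt_inner.fun_mul (hasFDerivAt_heatKernel t z)).fderiv]
  simp only [add_apply, smul_apply, smul_eq_mul, innerSL_apply_apply, real_inner_comm z,
    real_inner_comm v w]
  ring

lemma laplacian_heatKernel [FiniteDimensional ℝ E] (t : ℝ) (z : E) :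
    Δ (heatKernel t : E → ℝ) z =
      (‖z‖ ^ 2 / (4 * t ^ 2) - finrank ℝ E / (2 * t)) * heatKernel t z := by
  let b := stdOrthonormalBasis ℝ E
  have sum_sq : ∑ i, ⟪z, b i⟫ * ⟪z, b i⟫ = ‖z‖ ^ 2 := by
    simp only [← b.sum_sq_norm_inner_left z, norm_eq_abs, sq_abs, ← pow_two]
  simp only [InnerProductSpace.laplacian_eq_iteratedFDeriv_orthonormalBasis _ b,
    iteratedFDeriv_two_heatKernel, ← Finset.sum_mul, Finset.sum_sub_distrib, ← Finset.sum_div,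
    sum_sq, real_inner_self_eq_norm_sq, b.norm_eq_one, Finset.sum_const]
  simp

lemma heatKernel_add_smul_sub (t : ℝ) (x e y : E) (s : ℝ) :
    heatKernel t (x + s • e - y) = rexp (-(‖e‖ ^ 2 / (4 * t)) * s ^ 2) *
      (heatKernel t (x - y) * rexp (s * (⟪y - x, e⟫ / (2 * t)))) := by
  have norm_sq_eq : ‖x + s • e - y‖ ^ 2 = ‖x - y‖ ^ 2 - 2 * s * ⟪y - x, e⟫ + s ^ 2 * ‖e‖ ^ 2 := by
    rw [add_sub_right_comm, norm_add_sq_real, inner_smul_right, norm_smul, mul_pow, norm_eq_abs,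
      sq_abs, ← neg_sub y x, inner_neg_left, norm_neg]
    ring
  have exponent_eq : -‖x + s • e - y‖ ^ 2 / (4 * t) =
      -(‖e‖ ^ 2 / (4 * t)) * s ^ 2 + (-‖x - y‖ ^ 2 / (4 * t) + s * (⟪y - x, e⟫ / (2 * t))) := by
    rw [norm_sq_eq]
    ring
  simp only [heatKernel]
  rw [exponent_eq, exp_add, exp_add]
  ring

lemma hasDerivAt_heatKernel [FiniteDimensional ℝ E] (ht : 0 < t) (z : E) :
    HasDerivAt (fun s => heatKernel s z) (Δ (heatKernel t : E → ℝ) z) t := by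
  rw [laplacian_heatKernel]
  have hasDerivAt_prefactor : HasDerivAt (fun s => (4 * π * s) ^ (-(finrank ℝ E : ℝ) / 2))
      (-(finrank ℝ E) / (2 * t) * (4 * π * t) ^ (-(finrank ℝ E : ℝ) / 2)) t := by
    refine (((hasDerivAt_id' t).const_mul (4 * π)).rpow_const
      (.inl (by positivity))).congr_deriv ?_
    rw [rpow_sub_one (by positivity)]
    field_simp
  have hasDerivAt_exp : HasDerivAt (fun s => rexp (-‖z‖ ^ 2 / (4 * s)))
      (rexp (-‖z‖ ^ 2 / (4 * t)) * (‖z‖ ^ 2 / (4 * t ^ 2))) t := by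
    refine ((hasDerivAt_const t (-‖z‖ ^ 2)).fun_div ((hasDerivAt_id' t).const_mul 4)
      (by positivity)).exp.congr_deriv ?_
    field_simp
    ring
  refine (hasDerivAt_prefactor.fun_mul hasDerivAt_exp).congr_deriv ?_
  rw [heatKernel]
  ring

lemma abs_laplacian_heatKernel_le [FiniteDimensional ℝ E] (ht : 0 < t) (z : E) :
    |Δ (heatKernel t : E → ℝ) z| ≤
      (1 + finrank ℝ E / 2) * ((4 * π * t) ^ (-(finrank ℝ E : ℝ) / 2) / t) := by
  set r := ‖z‖ ^ 2 / (4 * t) with r_def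
  have r_nonneg : 0 ≤ r := by positivity
  have half_dim_nonneg : (0 : ℝ) ≤ finrank ℝ E / 2 := by positivity
  have laplacian_eq : Δ (heatKernel t : E → ℝ) z =
      (r - finrank ℝ E / 2) * rexp (-r) * ((4 * π * t) ^ (-(finrank ℝ E : ℝ) / 2) / t) := by
    rw [laplacian_heatKernel, heatKernel, neg_div _ (‖z‖ ^ 2), ← r_def, r_def]
    field_simp
  have exp_le_one : rexp (-r) ≤ 1 := exp_le_one_iff.2 (by linarith)
  have mul_exp_le_one : r * rexp (-r) ≤ 1 := (mul_exp_neg_le_exp_neg_one r).trans (by simp)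
  have abs_le : |(r - finrank ℝ E / 2) * rexp (-r)| ≤ 1 + finrank ℝ E / 2 :=
    calc |(r - finrank ℝ E / 2) * rexp (-r)|
        ≤ (r + finrank ℝ E / 2) * rexp (-r) := by
          rw [abs_mul, abs_exp]
          gcongr
          exact abs_le.2 ⟨by linarith, by linarith⟩
      _ = r * rexp (-r) + finrank ℝ E / 2 * rexp (-r) := by ring
      _ ≤ 1 + finrank ℝ E / 2 * 1 := by gcongr
      _ = 1 + finrank ℝ E / 2 := by ring
  rw [laplacian_eq, abs_mul, abs_of_pos (a := _ / t) (by positivity)]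
  gcongr

end HeatKernel

section HeatFlow

open Module (finrank)
open ProbabilityTheory
open scoped RealInnerProductSpace

variable {E : Type*} [NormedAddCommGroup E] [InnerProductSpace ℝ E] [MeasurableSpace E]

/-- The solution at time `t` of the heat equation with initial datum the measure `μ`. -/
noncomputable def heatFlow (μ : Measure E) (t : ℝ) (x : E) : ℝ :=
  ∫ y, heatKernel t (x - y) ∂μ

/-- The measure `K_t(x - y) dμ(y)`, of total mass `heatFlow μ t x`. Its cumulant generating
functions describe `log (heatFlow μ t)` along lines through `x`. -/
noncomputable def heatKernelMeasure (μ : Measure E) (t : ℝ) (x : E) : Measure E :=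
  μ.withDensity fun y => ENNReal.ofReal (heatKernel t (x - y))

variable {μ : Measure E} {t : ℝ}

lemma heatFlow_eq_schwartzConv (μ : Measure E) (ht : 0 < t) :
    heatFlow μ t = schwartzConv (heatKernelSchwartz t ht) μ := by
  ext x
  simp only [heatFlow, schwartzConv, coe_heatKernelSchwartz]

variable [BorelSpace E]

lemma integral_heatKernelMeasure (ht : 0 < t) (x : E) (g : E → ℝ) :
    ∫ y, g y ∂heatKernelMeasure μ t x = ∫ y, heatKernel t (x - y) * g y ∂μ := by
  have measurable_heatKernel := (continuous_heatKernel (E := E) t).measurable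
  rw [heatKernelMeasure, integral_withDensity_eq_integral_toReal_smul (by fun_prop) (by simp)]
  simp only [ENNReal.toReal_ofReal (heatKernel_pos ht _).le, smul_eq_mul]

lemma integrable_heatKernelMeasure_iff (ht : 0 < t) (x : E) (g : E → ℝ) :
    Integrable g (heatKernelMeasure μ t x) ↔
      Integrable (fun y => heatKernel t (x - y) * g y) μ := by
  have measurable_heatKernel := (continuous_heatKernel (E := E) t).measurable
  rw [heatKernelMeasure, integrable_withDensity_iff_integrable_smul' (by fun_prop) (by simp)]
  simp only [ENNReal.toReal_ofReal (heatKernel_pos ht _).le, smul_eq_mul]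

variable [FiniteDimensional ℝ E] [IsFiniteMeasure μ]

lemma integrable_heatKernel_sub (ht : 0 < t) (x : E) :
    Integrable (fun y => heatKernel t (x - y)) μ := by
  simpa only [coe_heatKernelSchwartz] using integrable_schwartz_sub (heatKernelSchwartz t ht) x

lemma contDiff_heatFlow (ht : 0 < t) (n : ℕ) : ContDiff ℝ n (heatFlow μ t) := by
  rw [heatFlow_eq_schwartzConv μ ht]
  exact contDiff_schwartzConv _ n

lemma heatFlow_pos [NeZero μ] (ht : 0 < t) (x : E) : 0 < heatFlow μ t x := by
  have support_eq : Function.support (fun y => heatKernel t (x - y)) = Set.univ :=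
    Set.eq_univ_of_forall fun y => (heatKernel_pos ht (x - y)).ne'
  rw [heatFlow, integral_pos_iff_support_of_nonneg (fun y => (heatKernel_pos ht (x - y)).le)
    (integrable_heatKernel_sub ht x), support_eq]
  exact NeZero.pos _

lemma laplacian_heatFlow (ht : 0 < t) (x : E) :
    Δ (heatFlow μ t) x = ∫ y, Δ (heatKernel t : E → ℝ) (x - y) ∂μ := by
  rw [heatFlow_eq_schwartzConv μ ht, laplacian_schwartzConv]
  simp only [schwartzConv, SchwartzMap.laplacian_apply, coe_heatKernelSchwartz]

lemma hasDerivAt_heatFlow (ht : 0 < t) (x : E) :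
    HasDerivAt (fun s => heatFlow μ s x) (Δ (heatFlow μ t) x) t := by
  have half_pos : 0 < t / 2 := by positivity
  have laplacian_bound : ∀ s ∈ Set.Ioi (t / 2), ∀ z : E, ‖Δ (heatKernel s : E → ℝ) z‖ ≤
      (1 + finrank ℝ E / 2) * ((4 * π * (t / 2)) ^ (-(finrank ℝ E : ℝ) / 2) / (t / 2)) := by
    intro s (hs : t / 2 < s) z
    refine (abs_laplacian_heatKernel_le (half_pos.trans hs) z).trans ?_
    gcongr _ * (?_ / ?_)
    exact rpow_le_rpow_of_nonpos (by positivity) (by gcongr)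
      (div_nonpos_of_nonpos_of_nonneg (neg_nonpos.2 (Nat.cast_nonneg _)) zero_le_two)
  have measurable_laplacian :
      AEStronglyMeasurable (fun y => Δ (heatKernel t : E → ℝ) (x - y)) μ := by
    simp only [laplacian_heatKernel]
    have continuous_heatKernel := continuous_heatKernel (E := E) t
    fun_prop
  rw [laplacian_heatFlow ht]
  exact (hasDerivAt_integral_of_dominated_loc_of_deriv_le (Ioi_mem_nhds (half_lt_self ht))
    (Filter.mem_of_superset (Ioi_mem_nhds ht) fun s hs =>
      (integrable_heatKernel_sub hs x).aestronglyMeasurable)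
    (integrable_heatKernel_sub ht x) measurable_laplacian
    (.of_forall fun y s hs => laplacian_bound s hs (x - y)) (integrable_const _)
    (.of_forall fun y s hs => hasDerivAt_heatKernel (half_pos.trans hs) (x - y))).2

lemma integrable_exp_heatKernelMeasure (ht : 0 < t) (x e : E) (s : ℝ) :
    Integrable (fun y => rexp (s * (⟪y - x, e⟫ / (2 * t)))) (heatKernelMeasure μ t x) := by
  rw [integrable_heatKernelMeasure_iff ht]
  have integrable_translate := integrable_heatKernel_sub (μ := μ) ht (x + s • e)
  simp only [heatKernel_add_smul_sub] at integrable_translate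
  exact (integrable_const_mul_iff (isUnit_iff_ne_zero.2 (exp_pos _).ne') _).1 integrable_translate

lemma log_heatFlow_add_smul [NeZero μ] (ht : 0 < t) (x e : E) (s : ℝ) :
    log (heatFlow μ t (x + s • e)) = -(‖e‖ ^ 2 / (4 * t)) * s ^ 2 +
      cgf (fun y => ⟪y - x, e⟫ / (2 * t)) (heatKernelMeasure μ t x) s := by
  have heatFlow_eq : heatFlow μ t (x + s • e) = rexp (-(‖e‖ ^ 2 / (4 * t)) * s ^ 2) *
      mgf (fun y => ⟪y - x, e⟫ / (2 * t)) (heatKernelMeasure μ t x) s := by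
    rw [mgf, integral_heatKernelMeasure ht, ← integral_const_mul]
    simp only [heatFlow, heatKernel_add_smul_sub]
  have mgf_ne_zero := right_ne_zero_of_mul (heatFlow_eq ▸ (heatFlow_pos ht (x + s • e)).ne')
  rw [heatFlow_eq, log_mul (exp_pos _).ne' mgf_ne_zero, log_exp, cgf]

lemma neg_div_le_iteratedFDeriv_two_log_heatFlow [NeZero μ] (ht : 0 < t) (x e : E) :
    -(‖e‖ ^ 2 / (2 * t)) ≤ iteratedFDeriv ℝ 2 (fun z => log (heatFlow μ t z)) x ![e, e] := by
  set X : E → ℝ := fun y => ⟪y - x, e⟫ / (2 * t)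
  set ν := heatKernelMeasure μ t x
  have zero_mem : 0 ∈ interior (integrableExpSet X ν) := by
    have integrableExpSet_eq : integrableExpSet X ν = Set.univ :=
      Set.eq_univ_of_forall (integrable_exp_heatKernelMeasure ht x e)
    simp only [integrableExpSet_eq, interior_univ, Set.mem_univ]
  have contDiff_log : ContDiff ℝ 2 (fun z => log (heatFlow μ t z)) :=
    (contDiff_heatFlow ht 2).log fun z => (heatFlow_pos ht z).ne'
  have iteratedDeriv_quadratic :
      iteratedDeriv 2 (fun s : ℝ => -(‖e‖ ^ 2 / (4 * t)) * s ^ 2) 0 = -(‖e‖ ^ 2 / (2 * t)) := by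
    simp only [iteratedDeriv_const_mul_field, iteratedDeriv_fun_pow_zero]
    norm_num
    ring
  have contDiffAt_cgf : ContDiffAt ℝ 2 (cgf X ν) 0 := (analyticAt_cgf zero_mem).contDiffAt
  calc -(‖e‖ ^ 2 / (2 * t)) ≤ -(‖e‖ ^ 2 / (2 * t)) + variance X (ν.tilted (0 * X ·)) :=
        le_add_of_nonneg_right (variance_nonneg _ _)
    _ = iteratedDeriv 2 (fun s => -(‖e‖ ^ 2 / (4 * t)) * s ^ 2 + cgf X ν s) 0 := by
        rw [iteratedDeriv_fun_add (by fun_prop) contDiffAt_cgf, iteratedDeriv_quadratic,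
          variance_tilted_mul zero_mem]
    _ = iteratedFDeriv ℝ 2 (fun z => log (heatFlow μ t z)) x ![e, e] := by
        simp only [← iteratedDeriv_two_comp_add_smul contDiff_log, log_heatFlow_add_smul ht, X, ν]

lemma neg_finrank_div_le_laplacian_log_heatFlow [NeZero μ] (ht : 0 < t) (x : E) :
    -(finrank ℝ E : ℝ) / (2 * t) ≤ Δ (fun z => log (heatFlow μ t z)) x := by
  let b := stdOrthonormalBasis ℝ E
  rw [InnerProductSpace.laplacian_eq_iteratedFDeriv_orthonormalBasis _ b]
  calc -(finrank ℝ E : ℝ) / (2 * t) = ∑ i, -(‖b i‖ ^ 2 / (2 * t)) := by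
        simp only [b.norm_eq_one, one_pow, Finset.sum_const, Finset.card_univ, Fintype.card_fin,
          nsmul_eq_mul]
        ring
    _ ≤ _ := Finset.sum_le_sum fun i _ => neg_div_le_iteratedFDeriv_two_log_heatFlow ht x (b i)

theorem li_yau_harnack_general (μ : Measure E) [IsFiniteMeasure μ] [NeZero μ] {t : ℝ} (ht : 0 < t)
    (x : E) :
    ‖gradient (heatFlow μ t) x‖ ^ 2 / heatFlow μ t x ^ 2
        - deriv (fun s => heatFlow μ s x) t / heatFlow μ t x ≤ finrank ℝ E / (2 * t) ∧
      -(finrank ℝ E : ℝ) / (2 * t) ≤ Δ (fun z => log (heatFlow μ t z)) x := by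
  have laplacian_log_ge := neg_finrank_div_le_laplacian_log_heatFlow (μ := μ) ht x
  refine ⟨?_, laplacian_log_ge⟩
  rw [laplacian_log (contDiff_heatFlow ht 2).contDiffAt (heatFlow_pos ht x).ne',
    ← (hasDerivAt_heatFlow ht x).deriv, neg_div] at laplacian_log_ge
  linarith

end HeatFlow

section EuclideanSpace

variable {n : ℕ}

lemma heatSol_eq_heatFlow {f : EuclideanSpace ℝ (Fin n) → ℝ} (hf_meas : Measurable f)
    (hf_nonneg : ∀ x, 0 ≤ f x) :
    heatSol n f = heatFlow (volume.withDensity fun y => ENNReal.ofReal (f y)) := by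
  ext t x
  rw [heatFlow, integral_withDensity_eq_integral_toReal_smul (by fun_prop) (by simp)]
  simp only [heatSol, heatKernel, finrank_euclideanSpace_fin, ENNReal.toReal_ofReal (hf_nonneg _),
    smul_eq_mul, mul_comm]

lemma laplacian_eq_innerProductSpace_laplacian (g : EuclideanSpace ℝ (Fin n) → ℝ) :
    laplacian n g = Δ g := by
  ext x
  simp only [laplacian, hessianMatrix, EuclideanSpace.basisFun_apply,
    InnerProductSpace.laplacian_eq_iteratedFDeriv_orthonormalBasis g (EuclideanSpace.basisFun _ ℝ)]

end EuclideanSpace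

lemma isProbabilityMeasure_withDensity_ofReal {α : Type*} [MeasurableSpace α] {μ : Measure α}
    {f : α → ℝ} (hf_nonneg : 0 ≤ᵐ[μ] f) (hf_int : ∫ x, f x ∂μ = 1) :
    IsProbabilityMeasure (μ.withDensity fun x => ENNReal.ofReal (f x)) := by
  have hf : Integrable f μ := .of_integral_ne_zero (by simp [hf_int])
  refine ⟨?_⟩
  rw [withDensity_apply _ .univ, setLIntegral_univ,
    ← ofReal_integral_eq_lintegral_ofReal hf hf_nonneg, hf_int, ENNReal.ofReal_one]

/-- The Li–Yau differential Harnack inequality on `ℝⁿ`: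
`|∇u|²/u² - ∂ₜu/u ≤ n/(2t)`, equivalently `Δ log u ≥ -n/(2t)`. -/
theorem li_yau_harnack (n : ℕ) (hn : 1 ≤ n)
    (f : EuclideanSpace ℝ (Fin n) → ℝ)
    (hf_cont : Continuous f) (hf_nonneg : ∀ x, 0 ≤ f x)
    (hf_supp : HasCompactSupport f)
    (hf_int : ∫ x, f x = 1) (hf_ne : f ≠ 0) :
    ∀ t : ℝ, 0 < t → ∀ x : EuclideanSpace ℝ (Fin n),
      (‖gradient (fun y => heatSol n f t y) x‖ ^ 2 / (heatSol n f t x) ^ 2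
        - deriv (fun s => heatSol n f s x) t / heatSol n f t x ≤ (n : ℝ) / (2 * t)) ∧
      (-(n : ℝ) / (2 * t) ≤ laplacian n (fun y => Real.log (heatSol n f t y)) x) := by
  intro t ht x
  have := isProbabilityMeasure_withDensity_ofReal (.of_forall hf_nonneg) hf_int
  have harnack_heatFlow :=
    li_yau_harnack_general (volume.withDensity fun y => ENNReal.ofReal (f y)) ht x
  simpa only [heatSol_eq_heatFlow hf_cont.measurable hf_nonneg,
    laplacian_eq_innerProductSpace_laplacian, finrank_euclideanSpace_fin] using harnack_heatFlow
end
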